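/- arXiv:1009.4402 — 12 statements merged into one kernel-verified Lean document; each statement's English description precedes it below -/
import Mathlib

section
/- Let h : (0,∞) → ℝ be continuously differentiable and define the matrix-valued map Q on ℝ³ \ {0} by Q(x) = √(3/2)·h(|x|)·(x xᵀ/|x|² − (1/3)I). Then for every x ≠ 0, the squared Frobenius norm of the spatial gradient satisfies Σ_{i,j,k=1}^{3} (∂Q_{ij}/∂x_k)²(x) = h'(|x|)² + 6 h(|x|)²/|x|². -/
open Matrix

/-!
With `n = x/|x|` and `r = |x|`, the partial derivatives are
`∂ₖQᵢⱼ = √(3/2) (h'(r) nₖ (nᵢnⱼ - δᵢⱼ/3) + (h(r)/r) (δᵢₖnⱼ + nᵢδⱼₖ - 2nᵢnⱼnₖ))`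
(`fderiv_hedgehog`). Because `|n| = 1`, the radial and the tangential term are orthogonal, with
squared Frobenius norms `2/3` and `4` (`sum_sq_hedgehog`); the factor `3/2` turns these into
`1` and `6`.
-/

/-- The gradient of the Euclidean norm away from the origin is `x/|x|`. -/
lemma hasFDerivAt_norm_euclidean (x : EuclideanSpace ℝ (Fin 3)) (hx : x ≠ 0) :
    HasFDerivAt (fun y : EuclideanSpace ℝ (Fin 3) => ‖y‖) (‖x‖⁻¹ • innerSL ℝ x) x := by
  have h0 : ‖x‖ ≠ 0 := norm_ne_zero_iff.mpr hx
  have h1 := ((hasStrictFDerivAt_norm_sq x).hasFDerivAt).sqrt (pow_ne_zero 2 h0)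
  simp only [Real.sqrt_sq (norm_nonneg _)] at h1
  have hL : (1 / (2 * ‖x‖)) • (2 : ℕ) • innerSL ℝ x = ‖x‖⁻¹ • innerSL ℝ x := by
    rw [← Nat.cast_smul_eq_nsmul ℝ, smul_smul]
    congr 1
    push_cast
    field_simp
  rwa [hL] at h1

lemma fderiv_hedgehog (h : ℝ → ℝ) (x : EuclideanSpace ℝ (Fin 3)) (hx : x ≠ 0)
    (hd : DifferentiableAt ℝ h ‖x‖) (s d : ℝ) (i j k : Fin 3) :
    fderiv ℝ (fun y : EuclideanSpace ℝ (Fin 3) =>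
        s * (h ‖y‖ * (y i * y j / ‖y‖ ^ 2 - d))) x (EuclideanSpace.single k (1 : ℝ)) =
      s * (deriv h ‖x‖ * (x k / ‖x‖) * (x i / ‖x‖ * (x j / ‖x‖) - d) +
        h ‖x‖ / ‖x‖ * ((if i = k then 1 else 0) * (x j / ‖x‖) +
          x i / ‖x‖ * (if j = k then 1 else 0) -
          2 * (x i / ‖x‖) * (x j / ‖x‖) * (x k / ‖x‖))) := by
  have h0 : ‖x‖ ≠ 0 := norm_ne_zero_iff.mpr hx
  have hn := hasFDerivAt_norm_euclidean x hx
  have hh := hd.hasDerivAt.comp_hasFDerivAt x hn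
  have hi (i : Fin 3) : HasFDerivAt (fun y : EuclideanSpace ℝ (Fin 3) => y i)
      (EuclideanSpace.proj i : EuclideanSpace ℝ (Fin 3) →L[ℝ] ℝ) x :=
    (EuclideanSpace.proj i : EuclideanSpace ℝ (Fin 3) →L[ℝ] ℝ).hasFDerivAt
  have hinv := (hasDerivAt_inv (pow_ne_zero 2 h0)).comp_hasFDerivAt x (hn.pow 2)
  have hq := (((hi i).mul (hi j)).mul hinv).sub_const d
  have hf := (hh.mul hq).const_mul s
  have he := hf.fderiv
  simp only [Function.comp_def] at he
  refine (congrArg (fun L => L (EuclideanSpace.single k (1 : ℝ))) he).trans ?_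
  by_cases hik : i = k <;> by_cases hjk : j = k <;>
    simp [EuclideanSpace.inner_single_right, hik, hjk] <;> field_simp <;> ring

/-- The constant `2/3` is `|n⊗n - I/3|²` and `4` is `|∇(x⊗x/|x|²)|²` on the unit sphere. -/
lemma sum_sq_hedgehog (n : Fin 3 → ℝ) (hn : n 0 ^ 2 + n 1 ^ 2 + n 2 ^ 2 = 1) (s a b : ℝ) :
    (∑ i : Fin 3, ∑ j : Fin 3, ∑ k : Fin 3,
      (s * (a * n k * (n i * n j - 1 / 3 * (if i = j then 1 else 0)) +
        b * ((if i = k then 1 else 0) * n j + n i * (if j = k then 1 else 0) -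
          2 * n i * n j * n k))) ^ 2) = s ^ 2 * (2 / 3 * a ^ 2 + 4 * b ^ 2) := by
  -- Each coefficient is a polynomial in `N = |n|²`, evaluated at `N = 1` afterwards.
  obtain ⟨N, hN⟩ : ∃ N, N = n 0 ^ 2 + n 1 ^ 2 + n 2 ^ 2 := ⟨_, rfl⟩
  have key : (∑ i : Fin 3, ∑ j : Fin 3, ∑ k : Fin 3,
      (s * (a * n k * (n i * n j - 1 / 3 * (if i = j then 1 else 0)) +
        b * ((if i = k then 1 else 0) * n j + n i * (if j = k then 1 else 0) -
          2 * n i * n j * n k))) ^ 2) =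
      s ^ 2 * (a ^ 2 * (N * (N ^ 2 - 2 * N / 3 + 1 / 3)) +
        2 * a * b * ((2 - 2 * N) * (N ^ 2 - N / 3)) +
        b ^ 2 * (8 * N - 8 * N ^ 2 + 4 * N ^ 3)) := by
    subst hN
    simp [Fin.sum_univ_three]
    ring
  rw [key, hN, hn]
  ring

/-- For a `C¹` profile `h` on `(0,∞)` and the radial-hedgehog map
`Q(x) = √(3/2)·h(|x|)·(x xᵀ/|x|² − (1/3)I)`, at every `x ≠ 0` the squared Frobenius
norm of the spatial gradient equals `h'(|x|)² + 6 h(|x|)²/|x|²`. -/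
theorem stmt1 (h : ℝ → ℝ) (hC1 : ContDiffOn ℝ 1 h (Set.Ioi 0))
    (Q : EuclideanSpace ℝ (Fin 3) → Matrix (Fin 3) (Fin 3) ℝ)
    (hQ : ∀ x, Q x = Real.sqrt (3 / 2) • h ‖x‖ •
      (Matrix.of (fun i j : Fin 3 => x i * x j / ‖x‖ ^ 2) -
        (1 / 3 : ℝ) • (1 : Matrix (Fin 3) (Fin 3) ℝ))) :
    ∀ x : EuclideanSpace ℝ (Fin 3), x ≠ 0 →
      (∑ i : Fin 3, ∑ j : Fin 3, ∑ k : Fin 3,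
        (fderiv ℝ (fun y => Q y i j) x (EuclideanSpace.single k (1 : ℝ))) ^ 2)
        = (deriv h ‖x‖) ^ 2 + 6 * (h ‖x‖) ^ 2 / ‖x‖ ^ 2 := by
  intro x hx
  have h0 : ‖x‖ ≠ 0 := norm_ne_zero_iff.mpr hx
  have hd : DifferentiableAt ℝ h ‖x‖ :=
    (hC1.differentiableOn one_ne_zero).differentiableAt (Ioi_mem_nhds (norm_pos_iff.mpr hx))
  have hQij (i j : Fin 3) : (fun y => Q y i j) = fun y : EuclideanSpace ℝ (Fin 3) =>
      Real.sqrt (3 / 2) * (h ‖y‖ * (y i * y j / ‖y‖ ^ 2 -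
        1 / 3 * (if i = j then 1 else 0))) := by
    funext y
    simp [hQ, Matrix.one_apply]
  have hn : (x 0 / ‖x‖) ^ 2 + (x 1 / ‖x‖) ^ 2 + (x 2 / ‖x‖) ^ 2 = 1 := by
    have hs := EuclideanSpace.real_norm_sq_eq x
    rw [Fin.sum_univ_three] at hs
    field_simp
    exact hs.symm
  simp only [hQij, fderiv_hedgehog h x hx hd]
  rw [sum_sq_hedgehog (fun i => x i / ‖x‖) hn, Real.sq_sqrt (by norm_num)]
  field_simp
  ring
end

section
/- Let t > 1, h₊ = (3 + √(9 + 8t))/4, R > 0, and let h : [0,R] → ℝ be continuous on [0,R] and continuously differentiable on (0,R) with Σ_{i,j,k}(∂Q_{ij}/∂x_k)² integrable on the ball B(0,R), where Q(x) = √(3/2)·h(|x|)·(x xᵀ/|x|² − (1/3)I). Then ∫_{B(0,R)} [ (1/2)Σ_{i,j,k}(∂Q_{ij}/∂x_k)² + f_B(Q(x)) ] dx = 4π ∫₀^R r² [ (1/2)h'(r)² + 3h(r)²/r² + f_t(h(r)) ] dr. -/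
/-!
The integrand is radial away from the origin, so the claim follows from integration in polar
coordinates. Write `n = x/|x|` and `r = |x|`. Then
`∂ₖQᵢⱼ = √(3/2) (h'(r) nₖ (nᵢnⱼ − δᵢⱼ/3) + (h(r)/r) (δᵢₖnⱼ + δⱼₖnᵢ − 2nᵢnⱼnₖ))`,
and `|n| = 1` gives `∑ (∂ₖQᵢⱼ)² = h'(r)² + 6h(r)²/r²` (`hedgehog_fderiv`, `hedgehog_grad_sq`).
Likewise `tr Q² = h²` and `tr Q³ = h³/√6`, so that `f_B(Q) = f_t(h)` (`hedgehog_bulk`).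
The derivative formula holds for `0 < |x| < R`; the origin and the sphere `|x| = R` are null sets.
-/

open Matrix MeasureTheory

/-- The first-order part of the hedgehog energy density, as a polynomial identity for a unit
vector `n`; `a` and `b` stand for `√(3/2) h'` and `√(3/2) h/r`. -/
lemma hedgehog_grad_sq (a b : ℝ) (n : Fin 3 → ℝ) (hn : n 0 ^ 2 + n 1 ^ 2 + n 2 ^ 2 = 1) :
    ∑ i : Fin 3, ∑ j : Fin 3, ∑ k : Fin 3,
      (a * (n k * (n i * n j - (1 / 3) * (1 : Matrix (Fin 3) (Fin 3) ℝ) i j))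
        + b * ((1 : Matrix (Fin 3) (Fin 3) ℝ) i k * n j
          + (1 : Matrix (Fin 3) (Fin 3) ℝ) j k * n i - 2 * n i * n j * n k)) ^ 2
      = (2 / 3) * a ^ 2 + 4 * b ^ 2 := by
  -- Before `|n|² = 1` is used, the sum is already a polynomial in `s = |n|²`.
  have key : ∀ s : ℝ, s = n 0 ^ 2 + n 1 ^ 2 + n 2 ^ 2 →
      ∑ i : Fin 3, ∑ j : Fin 3, ∑ k : Fin 3,
      (a * (n k * (n i * n j - (1 / 3) * (1 : Matrix (Fin 3) (Fin 3) ℝ) i j))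
        + b * ((1 : Matrix (Fin 3) (Fin 3) ℝ) i k * n j
          + (1 : Matrix (Fin 3) (Fin 3) ℝ) j k * n i - 2 * n i * n j * n k)) ^ 2
      = a ^ 2 * (s * (s ^ 2 - (2 / 3) * s + 1 / 3)) + b ^ 2 * (8 * s - 8 * s ^ 2 + 4 * s ^ 3)
        + 2 * a * b * (2 * s ^ 2 - 2 * s ^ 3 - (1 / 3) * (2 * s - 2 * s ^ 2)) := by
    rintro s rfl
    simp [Fin.sum_univ_three, Matrix.one_apply]
    ring
  rw [key 1 hn.symm]
  ring

/-- On `c (n nᵀ − I/3)` with `c = √(3/2) s` and `|n| = 1`, the bulk energy is that of `s`. -/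
lemma hedgehog_bulk (α β s : ℝ) (n : Fin 3 → ℝ) (hn : n 0 ^ 2 + n 1 ^ 2 + n 2 ^ 2 = 1)
    (A : Matrix (Fin 3) (Fin 3) ℝ)
    (hA : ∀ i j, A i j = Real.sqrt (3 / 2) * (s *
      (n i * n j - (1 / 3) * (1 : Matrix (Fin 3) (Fin 3) ℝ) i j))) :
    -(1 / 2) * (A * A).trace - (Real.sqrt 6 * α) * (A * A * A).trace
        + β * ((A * A).trace) ^ 2 = -s ^ 2 / 2 - α * s ^ 3 + β * s ^ 4 := by
  have hc : Real.sqrt (3 / 2) ^ 2 = 3 / 2 := Real.sq_sqrt (by norm_num)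
  have h6 : Real.sqrt 6 * Real.sqrt (3 / 2) = 3 := by
    rw [← Real.sqrt_mul (by norm_num), Real.sqrt_eq_iff_mul_self_eq] <;> norm_num
  -- Both traces are polynomials in `u = |n|²`.
  have k2 : ∀ u : ℝ, u = n 0 ^ 2 + n 1 ^ 2 + n 2 ^ 2 → (A * A).trace =
      Real.sqrt (3 / 2) ^ 2 * s ^ 2 * (u ^ 2 - (2 / 3) * u + 1 / 3) := by
    rintro u rfl
    simp [Matrix.trace, Matrix.mul_apply, Fin.sum_univ_three, hA, Matrix.one_apply]
    ring
  have k3 : ∀ u : ℝ, u = n 0 ^ 2 + n 1 ^ 2 + n 2 ^ 2 → (A * A * A).trace =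
      Real.sqrt (3 / 2) ^ 3 * s ^ 3 * (u ^ 3 - u ^ 2 + (1 / 3) * u - 1 / 9) := by
    rintro u rfl
    simp [Matrix.trace, Matrix.mul_apply, Fin.sum_univ_three, hA, Matrix.one_apply]
    ring
  have e2 : (A * A).trace = s ^ 2 := by rw [k2 1 hn.symm, hc]; ring
  have e3 : Real.sqrt 6 * (A * A * A).trace = s ^ 3 := by
    rw [k3 1 hn.symm]
    linear_combination (2 / 9) * s ^ 3 * (Real.sqrt (3 / 2) ^ 2 * h6 + 3 * hc)
  rw [e2]
  linear_combination (-α) * e3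

lemma hedgehog_fderiv (h : ℝ → ℝ) (c d : ℝ) (x : EuclideanSpace ℝ (Fin 3)) (hx : x ≠ 0)
    (hd : DifferentiableAt ℝ h ‖x‖) (i j k : Fin 3) :
    fderiv ℝ (fun y : EuclideanSpace ℝ (Fin 3) =>
        c * (h ‖y‖ * (y i * y j / ‖y‖ ^ 2 - d))) x (EuclideanSpace.single k (1 : ℝ))
      = (c * deriv h ‖x‖) * ((x k / ‖x‖) * ((x i / ‖x‖) * (x j / ‖x‖) - d))
        + (c * h ‖x‖ / ‖x‖) * ((1 : Matrix (Fin 3) (Fin 3) ℝ) i k * (x j / ‖x‖)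
          + (1 : Matrix (Fin 3) (Fin 3) ℝ) j k * (x i / ‖x‖)
          - 2 * (x i / ‖x‖) * (x j / ‖x‖) * (x k / ‖x‖)) := by
  have hr : ‖x‖ ≠ 0 := norm_ne_zero_iff.mpr hx
  have hcoord : ∀ l : Fin 3, HasFDerivAt (fun y : EuclideanSpace ℝ (Fin 3) => y l)
      (EuclideanSpace.proj l : EuclideanSpace ℝ (Fin 3) →L[ℝ] ℝ) x := fun l =>
    (EuclideanSpace.proj l : EuclideanSpace ℝ (Fin 3) →L[ℝ] ℝ).hasFDerivAt
  have hnd : DifferentiableAt ℝ (fun y : EuclideanSpace ℝ (Fin 3) => ‖y‖) x :=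
    differentiableAt_id.norm ℝ hx
  have hdiff : DifferentiableAt ℝ (fun y : EuclideanSpace ℝ (Fin 3) =>
        c * (h ‖y‖ * (y i * y j / ‖y‖ ^ 2 - d))) x := by
    have h1 : DifferentiableAt ℝ (fun y : EuclideanSpace ℝ (Fin 3) => h ‖y‖) x :=
      DifferentiableAt.comp (g := h) x hd hnd
    have h2 : DifferentiableAt ℝ (fun y : EuclideanSpace ℝ (Fin 3) => y i * y j / ‖y‖ ^ 2) x := by
      simp only [div_eq_mul_inv]
      exact ((hcoord i).differentiableAt.fun_mul (hcoord j).differentiableAt).fun_mul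
        ((hnd.fun_pow 2).fun_inv (pow_ne_zero 2 hr))
    exact (h1.fun_mul (h2.sub_const d)).const_mul c
  -- It suffices to differentiate along the line `s ↦ x + s eₖ`.
  rw [← hdiff.lineDeriv_eq_fderiv]
  apply HasLineDerivAt.lineDeriv
  unfold HasLineDerivAt
  have hco : ∀ l : Fin 3, HasDerivAt
      (fun s : ℝ => (x + s • EuclideanSpace.single k (1 : ℝ) : EuclideanSpace ℝ (Fin 3)) l)
      ((1 : Matrix (Fin 3) (Fin 3) ℝ) l k) 0 := by
    intro l
    have := ((hasDerivAt_id (0 : ℝ)).mul_const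
      ((1 : Matrix (Fin 3) (Fin 3) ℝ) l k)).const_add (x l)
    simpa [Matrix.one_apply, Pi.single_apply] using this
  have hline : HasDerivAt
      (fun s : ℝ => (x + s • EuclideanSpace.single k (1 : ℝ) : EuclideanSpace ℝ (Fin 3)))
      (EuclideanSpace.single k (1 : ℝ)) 0 := by
    simpa using ((hasDerivAt_id (0 : ℝ)).smul_const
      (EuclideanSpace.single k (1 : ℝ))).const_add x
  have hnorm : HasDerivAt
      (fun s : ℝ => ‖(x + s • EuclideanSpace.single k (1 : ℝ) : EuclideanSpace ℝ (Fin 3))‖)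
      (x k / ‖x‖) 0 := by
    have h1 := (hline.norm_sq).sqrt (by simpa using hr)
    simp only [Real.sqrt_sq (norm_nonneg _)] at h1
    convert h1 using 1
    simp [EuclideanSpace.inner_single_right]
    field_simp
  have hh : HasDerivAt
      (fun s : ℝ => h ‖(x + s • EuclideanSpace.single k (1 : ℝ) : EuclideanSpace ℝ (Fin 3))‖)
      (deriv h ‖x‖ * (x k / ‖x‖)) 0 :=
    HasDerivAt.comp (h₂ := h) 0 (by simpa using hd.hasDerivAt) hnorm
  have hfin := (hh.mul ((((hco i).mul (hco j)).div (hnorm.pow 2)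
    (by simpa using hr)).sub_const d)).const_mul c
  refine hfin.congr_deriv ?_
  simp
  field_simp

/-- The three-dimensional Landau–de Gennes energy of the radial-hedgehog
ansatz `Q(x) = √(3/2)·h(|x|)·(x xᵀ/|x|² − (1/3)I)` over the ball `B(0,R)` reduces to the
one-dimensional integral `4π ∫₀^R r²((1/2)h'² + 3h²/r² + f_t(h)) dr`. -/
theorem stmt2 (t : ℝ) (ht : 1 < t) (hplus : ℝ)
    (hplus_def : hplus = (3 + Real.sqrt (9 + 8 * t)) / 4)
    (R : ℝ) (hR : 0 < R)
    (h : ℝ → ℝ) (hcont : ContinuousOn h (Set.Icc 0 R))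
    (hC1 : ContDiffOn ℝ 1 h (Set.Ioo 0 R))
    (fB : Matrix (Fin 3) (Fin 3) ℝ → ℝ)
    (hfB : ∀ A : Matrix (Fin 3) (Fin 3) ℝ,
      fB A = -(1 / 2) * (A * A).trace - (Real.sqrt 6 * hplus / t) * (A * A * A).trace
        + (hplus ^ 2 / (2 * t)) * ((A * A).trace) ^ 2)
    (ft : ℝ → ℝ)
    (hft : ∀ s : ℝ, ft s = -s ^ 2 / 2 - (hplus / t) * s ^ 3 + (hplus ^ 2 / (2 * t)) * s ^ 4)
    (Q : EuclideanSpace ℝ (Fin 3) → Matrix (Fin 3) (Fin 3) ℝ)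
    (hQ : ∀ x, Q x = Real.sqrt (3 / 2) • h ‖x‖ •
      (Matrix.of (fun i j : Fin 3 => x i * x j / ‖x‖ ^ 2) -
        (1 / 3 : ℝ) • (1 : Matrix (Fin 3) (Fin 3) ℝ)))
    (hint : IntegrableOn
      (fun x : EuclideanSpace ℝ (Fin 3) => ∑ i : Fin 3, ∑ j : Fin 3, ∑ k : Fin 3,
        (fderiv ℝ (fun y => Q y i j) x (EuclideanSpace.single k (1 : ℝ))) ^ 2)
      (Metric.closedBall (0 : EuclideanSpace ℝ (Fin 3)) R) volume) :
    (∫ x in Metric.closedBall (0 : EuclideanSpace ℝ (Fin 3)) R,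
      ((1 / 2) * ∑ i : Fin 3, ∑ j : Fin 3, ∑ k : Fin 3,
        (fderiv ℝ (fun y => Q y i j) x (EuclideanSpace.single k (1 : ℝ))) ^ 2)
        + fB (Q x))
      = 4 * Real.pi * ∫ r in (0 : ℝ)..R,
          r ^ 2 * ((1 / 2) * (deriv h r) ^ 2 + 3 * (h r) ^ 2 / r ^ 2 + ft (h r)) := by
  have hQij : ∀ y i j, Q y i j = Real.sqrt (3 / 2) * (h ‖y‖ *
      (y i * y j / ‖y‖ ^ 2 - (1 / 3) * (1 : Matrix (Fin 3) (Fin 3) ℝ) i j)) := by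
    intro y i j
    rw [hQ]
    simp
  set g : ℝ → ℝ := fun r =>
    (1 / 2) * (deriv h r) ^ 2 + 3 * (h r) ^ 2 / r ^ 2 + ft (h r) with hg
  have hpt : ∀ x : EuclideanSpace ℝ (Fin 3), x ≠ 0 → ‖x‖ < R →
      ((1 / 2) * ∑ i : Fin 3, ∑ j : Fin 3, ∑ k : Fin 3,
        (fderiv ℝ (fun y => Q y i j) x (EuclideanSpace.single k (1 : ℝ))) ^ 2)
        + fB (Q x) = g ‖x‖ := by
    intro x hx hxR
    have hr : 0 < ‖x‖ := norm_pos_iff.mpr hx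
    have hd : DifferentiableAt ℝ h ‖x‖ :=
      (hC1.differentiableOn one_ne_zero).differentiableAt (Ioo_mem_nhds hr hxR)
    have hn : (x 0 / ‖x‖) ^ 2 + (x 1 / ‖x‖) ^ 2 + (x 2 / ‖x‖) ^ 2 = 1 := by
      have := EuclideanSpace.norm_sq_eq x
      simp only [Fin.sum_univ_three, Real.norm_eq_abs, sq_abs] at this
      field_simp
      exact this.symm
    have hc : Real.sqrt (3 / 2) ^ 2 = 3 / 2 := Real.sq_sqrt (by norm_num)
    have hbulk := hedgehog_bulk (hplus / t) (hplus ^ 2 / (2 * t)) (h ‖x‖)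
      (fun l => x l / ‖x‖) hn (Q x) (by
        intro i j
        rw [hQij, div_mul_div_comm, sq])
    have hgrad := hedgehog_grad_sq (Real.sqrt (3 / 2) * deriv h ‖x‖)
      (Real.sqrt (3 / 2) * h ‖x‖ / ‖x‖) (fun l => x l / ‖x‖) hn
    simp_rw [hQij, hedgehog_fderiv h _ _ x hx hd]
    rw [hgrad, hfB, hg]
    simp only [hft]
    rw [← hbulk]
    rw [mul_pow, div_pow, mul_pow, hc]
    ring
  -- Both integrals become integrals of the radial extension of `g` by zero outside `(0, R)`.
  have hae : (Metric.closedBall (0 : EuclideanSpace ℝ (Fin 3)) R).indicator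
      (fun x => ((1 / 2) * ∑ i : Fin 3, ∑ j : Fin 3, ∑ k : Fin 3,
        (fderiv ℝ (fun y => Q y i j) x (EuclideanSpace.single k (1 : ℝ))) ^ 2)
        + fB (Q x)) =ᵐ[volume] fun x => (Set.Ioo 0 R).indicator g ‖x‖ := by
    have h0 : ∀ᵐ x : EuclideanSpace ℝ (Fin 3), x ≠ 0 := by
      simp [ae_iff]
    have hS : ∀ᵐ x : EuclideanSpace ℝ (Fin 3), x ∉ Metric.sphere 0 R :=
      measure_eq_zero_iff_ae_notMem.mp (Measure.addHaar_sphere volume 0 R)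
    filter_upwards [h0, hS] with x hx0 hxS
    have hxS' : ‖x‖ ≠ R := by simpa using hxS
    have hr : 0 < ‖x‖ := norm_pos_iff.mpr hx0
    by_cases hxR : ‖x‖ < R
    · rw [Set.indicator_of_mem (by simpa using hxR.le),
        Set.indicator_of_mem (Set.mem_Ioo.mpr ⟨hr, hxR⟩), hpt x hx0 hxR]
    · rw [Set.indicator_of_notMem, Set.indicator_of_notMem]
      · exact fun hm => hxR hm.2
      · intro hm
        exact hxR (lt_of_le_of_ne (by simpa using hm) hxS')
  rw [← integral_indicator Metric.isClosed_closedBall.measurableSet, integral_congr_ae hae,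
    integral_fun_norm_addHaar volume ((Set.Ioo 0 R).indicator g)]
  have hvol : (volume : Measure (EuclideanSpace ℝ (Fin 3))).real (Metric.ball 0 1)
      = 4 * Real.pi / 3 := by
    rw [Measure.real, EuclideanSpace.volume_ball_fin_three]
    simp [ENNReal.toReal_ofReal (by positivity : (0 : ℝ) ≤ Real.pi * 4 / 3)]
    ring
  have hrad : ∫ y in Set.Ioi (0 : ℝ),
      y ^ (Module.finrank ℝ (EuclideanSpace ℝ (Fin 3)) - 1) • (Set.Ioo 0 R).indicator g y
      = ∫ r in (0 : ℝ)..R, r ^ 2 * g r := by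
    rw [intervalIntegral.integral_of_le hR.le, integral_Ioc_eq_integral_Ioo,
      ← integral_indicator measurableSet_Ioi, ← integral_indicator measurableSet_Ioo]
    congr 1
    ext y
    by_cases hy : y ∈ Set.Ioo 0 R
    · rw [Set.indicator_of_mem (Set.mem_Ioi.mpr hy.1), Set.indicator_of_mem hy,
        Set.indicator_of_mem hy]
      simp
    · rw [Set.indicator_of_notMem hy]
      refine Set.indicator_apply_eq_zero.mpr fun _ => ?_
      rw [Set.indicator_of_notMem hy, smul_zero]
  rw [hrad, hvol]
  simp only [finrank_euclideanSpace, Fintype.card_fin, nsmul_eq_mul, smul_eq_mul]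
  push_cast
  ring
end

section
/- Let t > 1, h₊ = (3 + √(9 + 8t))/4, and let h : (0,∞) → ℝ be a twice continuously differentiable solution of the radial-hedgehog ODE h''(r) + (2/r)h'(r) − 6h(r)/r² = −h(r) + h(r)³ + (3h₊/t)(h(r)³ − h(r)²). Define Q(x) = √(3/2)·h(|x|)·(x xᵀ/|x|² − (1/3)I) for x ∈ ℝ³ \ {0}. Then at every x ≠ 0 and for all i,j ∈ {1,2,3}, the componentwise Laplacian satisfies ΔQ_{ij}(x) = −Q_{ij}(x) − (3√6 h₊/t)(Q_{ik}(x)Q_{kj}(x) − (δ_{ij}/3)tr(Q(x)²)) + (2h₊²/t)Q_{ij}(x)·tr(Q(x)²), where repeated index k is summed from 1 to 3. -/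
open Matrix

/-!
Write `M(x) = x xᵀ/|x|² − I/3`, so that `Q = √(3/2) h(|x|) M(x)`.

The left-hand side follows from the product rule: with `r = |x|`,
`∂ₖₖ(h M) = (h'' xₖ²/r² + h' (1/r − xₖ²/r³)) M + 2 h' (xₖ/r) ∂ₖM + h ∂ₖₖM`,
and summing over `k` uses `∑ xₖ² = r²`, Euler's relation `∑ xₖ ∂ₖM = 0` (`M` is homogeneous of
degree `0`) and `ΔM = −6 M/r²` (the entries of `r² M` are harmonic quadratic polynomials). Hence
`Δ(h M) = (h'' + 2h'/r − 6h/r²) M` (`laplacian_hedgehog`).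

The right-hand side is also a multiple of `M`, because `M² − (2/9) I = M/3` and `tr M² = 2/3`
(`dirM_sq`, `dirM_trace_sq`). The two scalar factors agree by the ODE, using `√6 √(3/2) = 3` and
`2 h₊² = 3 h₊ + t`, the quadratic equation solved by `h₊`.
-/

/-- Three-dimensional Euclidean space. -/
abbrev E3 : Type := EuclideanSpace ℝ (Fin 3)

/-- `f` is (totally) differentiable at `x` and its `k`-th partial derivative there is `d`. -/
def HasPartial (k : Fin 3) (f : E3 → ℝ) (d : ℝ) (x : E3) : Prop :=
  DifferentiableAt ℝ f x ∧ fderiv ℝ f x (EuclideanSpace.single k (1 : ℝ)) = d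

namespace HasPartial

variable {k : Fin 3} {f g : E3 → ℝ} {a b : ℝ} {x : E3}

lemma of_hasFDerivAt {L : E3 →L[ℝ] ℝ} (hf : HasFDerivAt f L x) :
    HasPartial k f (L (EuclideanSpace.single k (1 : ℝ))) x :=
  ⟨hf.differentiableAt, by rw [hf.fderiv]⟩

lemma congr_val (hf : HasPartial k f a x) (hab : a = b) : HasPartial k f b x := hab ▸ hf

lemma const (c : ℝ) : HasPartial k (fun _ => c) 0 x :=
  ⟨differentiableAt_const c, by simp⟩

lemma add (hf : HasPartial k f a x) (hg : HasPartial k g b x) :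
    HasPartial k (fun y => f y + g y) (a + b) x := by
  refine ⟨hf.1.add hg.1, ?_⟩
  rw [fderiv_fun_add hf.1 hg.1, _root_.add_apply, hf.2, hg.2]

lemma sub (hf : HasPartial k f a x) (hg : HasPartial k g b x) :
    HasPartial k (fun y => f y - g y) (a - b) x := by
  refine ⟨hf.1.sub hg.1, ?_⟩
  rw [fderiv_fun_sub hf.1 hg.1, _root_.sub_apply, hf.2, hg.2]

lemma mul (hf : HasPartial k f a x) (hg : HasPartial k g b x) :
    HasPartial k (fun y => f y * g y) (a * g x + f x * b) x := by
  refine ⟨hf.1.mul hg.1, ?_⟩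
  rw [fderiv_fun_mul hf.1 hg.1, _root_.add_apply, _root_.smul_apply, _root_.smul_apply, hf.2, hg.2,
    smul_eq_mul, smul_eq_mul]
  ring

lemma coord (k i : Fin 3) (x : E3) :
    HasPartial k (fun y : E3 => y i) (if i = k then 1 else 0) x := by
  let L : E3 →L[ℝ] ℝ := EuclideanSpace.proj i
  have hL : L (EuclideanSpace.single k (1 : ℝ)) = if i = k then 1 else 0 := by
    simp [L]
  exact (of_hasFDerivAt L.hasFDerivAt).congr_val hL

/-- The chain rule for a radial function, from `∂ₖ|x| = xₖ/|x|`. -/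
lemma radial {φ : ℝ → ℝ} {d : ℝ} (hx : x ≠ 0) (hφ : HasDerivAt φ d ‖x‖) :
    HasPartial k (fun y => φ ‖y‖) (d * (x k / ‖x‖)) x := by
  have hn := (hasStrictFDerivAt_norm_sq x).hasFDerivAt.sqrt
    (pow_ne_zero 2 (norm_ne_zero_iff.2 hx))
  simp only [Real.sqrt_sq (norm_nonneg _)] at hn
  refine (of_hasFDerivAt (hφ.comp_hasFDerivAt x hn)).congr_val ?_
  have hin : inner ℝ x (EuclideanSpace.single k (1 : ℝ)) = x k := by
    rw [EuclideanSpace.inner_single_right]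
    simp
  simp only [_root_.smul_apply, innerSL_apply_apply, hin, smul_eq_mul, nsmul_eq_mul]
  push_cast
  ring

end HasPartial

/-- Entries of the traceless direction tensor `M(x) = x xᵀ/|x|² − I/3`; the denominator is written
as a power of an inverse. -/
noncomputable def dirM (i j : Fin 3) (x : E3) : ℝ :=
  x i * x j * (‖x‖⁻¹) ^ 2 - (if i = j then 1 else 0) / 3

/-- The partial derivative `∂ₖ` of `dirM i j` away from the origin. -/
noncomputable def dirM₁ (i j k : Fin 3) (x : E3) : ℝ :=
  ((if i = k then 1 else 0) * x j + x i * (if j = k then 1 else 0)) * (‖x‖⁻¹) ^ 2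
    - 2 * (x i * x j * x k) * (‖x‖⁻¹) ^ 4

/-- The second partial derivative `∂ₖₖ` of `dirM i j` away from the origin. -/
noncomputable def dirM₂ (i j k : Fin 3) (x : E3) : ℝ :=
  2 * ((if i = k then 1 else 0) * (if j = k then 1 else 0)) * (‖x‖⁻¹) ^ 2
    - 4 * x k * ((if i = k then 1 else 0) * x j + x i * (if j = k then 1 else 0)) * (‖x‖⁻¹) ^ 4
    - 2 * (x i * x j) * (‖x‖⁻¹) ^ 4 + 8 * (x i * x j * x k ^ 2) * (‖x‖⁻¹) ^ 6

lemma hasPartial_norm_inv_pow (k : Fin 3) (n : ℕ) {x : E3} (hx : x ≠ 0) :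
    HasPartial k (fun y : E3 => (‖y‖⁻¹) ^ n) (-(n : ℝ) * x k * (‖x‖⁻¹) ^ (n + 2)) x := by
  have hr : ‖x‖ ≠ 0 := norm_ne_zero_iff.2 hx
  have := HasPartial.radial (k := k) hx (φ := fun r => (r⁻¹) ^ n) ((hasDerivAt_inv hr).pow n)
  refine this.congr_val ?_
  rcases n with _ | n
  · simp
  · rw [Nat.add_sub_cancel, ← inv_pow]
    ring

lemma hasPartial_dirM (i j k : Fin 3) {x : E3} (hx : x ≠ 0) :
    HasPartial k (dirM i j) (dirM₁ i j k x) x := by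
  have := (((HasPartial.coord k i x).mul (HasPartial.coord k j x)).mul
    (hasPartial_norm_inv_pow k 2 hx)).sub (HasPartial.const ((if i = j then 1 else 0) / 3))
  refine this.congr_val ?_
  unfold dirM₁
  push_cast
  ring

lemma hasPartial_dirM₁ (i j k : Fin 3) {x : E3} (hx : x ≠ 0) :
    HasPartial k (dirM₁ i j k) (dirM₂ i j k x) x := by
  have ci := HasPartial.coord k i x
  have cj := HasPartial.coord k j x
  have ck := HasPartial.coord k k x
  have := ((((HasPartial.const (if i = k then 1 else 0)).mul cj).add
      (ci.mul (HasPartial.const (if j = k then 1 else 0)))).mul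
      (hasPartial_norm_inv_pow k 2 hx)).sub
    (((HasPartial.const 2).mul ((ci.mul cj).mul ck)).mul (hasPartial_norm_inv_pow k 4 hx))
  refine this.congr_val ?_
  unfold dirM₂
  rw [if_pos (rfl : k = k)]
  push_cast
  ring

lemma sum_sq_mul_norm_inv {x : E3} (hx : x ≠ 0) :
    (x 0 ^ 2 + x 1 ^ 2 + x 2 ^ 2) * (‖x‖⁻¹) ^ 2 = 1 := by
  have h1 : ‖x‖ ^ 2 = x 0 ^ 2 + x 1 ^ 2 + x 2 ^ 2 := by
    rw [EuclideanSpace.norm_sq_eq, Fin.sum_univ_three]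
    simp
  rw [← h1]
  have hr : ‖x‖ ≠ 0 := norm_ne_zero_iff.2 hx
  field_simp

lemma sum_delta_mul (i : Fin 3) (f : Fin 3 → ℝ) :
    ∑ k, (if i = k then (1 : ℝ) else 0) * f k = f i := by
  simp

/-- Euler's relation: `M` is homogeneous of degree `0`. -/
lemma sum_mul_dirM₁ (i j : Fin 3) {x : E3} (hx : x ≠ 0) :
    ∑ k, x k * dirM₁ i j k x = 0 := by
  have hs := sum_sq_mul_norm_inv hx
  have hi := sum_delta_mul i (fun k => x k)
  have hj := sum_delta_mul j (fun k => x k)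
  simp only [Fin.sum_univ_three, dirM₁] at *
  linear_combination (x j * ‖x‖⁻¹ ^ 2) * hi + (x i * ‖x‖⁻¹ ^ 2) * hj
    - 2 * x i * x j * ‖x‖⁻¹ ^ 2 * hs

/-- `ΔM = −6 M/|x|²`. -/
lemma sum_dirM₂ (i j : Fin 3) {x : E3} (hx : x ≠ 0) :
    ∑ k, dirM₂ i j k x = -6 * (‖x‖⁻¹) ^ 2 * dirM i j x := by
  have hs := sum_sq_mul_norm_inv hx
  have hi := sum_delta_mul i (fun k => x k)
  have hj := sum_delta_mul j (fun k => x k)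
  have hij := sum_delta_mul i (fun k => if j = k then (1 : ℝ) else 0)
  simp only [eq_comm (a := j) (b := i)] at hij
  simp only [Fin.sum_univ_three, dirM₂, dirM] at *
  linear_combination 2 * ‖x‖⁻¹ ^ 2 * hij - 4 * (x j * ‖x‖⁻¹ ^ 4) * hi
    - 4 * (x i * ‖x‖⁻¹ ^ 4) * hj + 8 * x i * x j * ‖x‖⁻¹ ^ 4 * hs

/-- The identity `M² = M/3 + (2/9) I`. -/
lemma dirM_sq (i j : Fin 3) {x : E3} (hx : x ≠ 0) :
    ∑ k, dirM i k x * dirM k j x = dirM i j x / 3 + 2 / 9 * (if i = j then 1 else 0) := by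
  have hs := sum_sq_mul_norm_inv hx
  have hi := sum_delta_mul i (fun k => x k)
  have hj := sum_delta_mul j (fun k => x k)
  have hij := sum_delta_mul i (fun k => if j = k then (1 : ℝ) else 0)
  simp only [eq_comm (a := j)] at hij hj
  simp only [Fin.sum_univ_three, dirM] at *
  linear_combination hij / 9 - (x j * ‖x‖⁻¹ ^ 2) / 3 * hi
    - (x i * ‖x‖⁻¹ ^ 2) / 3 * hj + x i * x j * ‖x‖⁻¹ ^ 2 * hs

/-- `tr M² = 2/3`. -/
lemma dirM_trace_sq {x : E3} (hx : x ≠ 0) :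
    ∑ i, ∑ k, dirM i k x * dirM k i x = 2 / 3 := by
  have hs := sum_sq_mul_norm_inv hx
  simp only [dirM_sq _ _ hx]
  simp only [Fin.sum_univ_three, dirM, if_true]
  linear_combination hs / 3

/-- The Laplacian of an entry of `c φ(|x|) M(x)`, for a `C²` radial profile `φ`. -/
lemma laplacian_hedgehog {φ : ℝ → ℝ} (hφ : ContDiffOn ℝ 2 φ (Set.Ioi 0)) (c : ℝ) (i j : Fin 3)
    {F : E3 → ℝ} (hF : ∀ z, F z = c * (φ ‖z‖ * dirM i j z)) {x : E3} (hx : x ≠ 0) :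
    (∑ k : Fin 3,
      fderiv ℝ (fun y => fderiv ℝ F y (EuclideanSpace.single k (1 : ℝ)))
        x (EuclideanSpace.single k (1 : ℝ)))
      = c * ((deriv (deriv φ) ‖x‖ + 2 / ‖x‖ * deriv φ ‖x‖ - 6 * φ ‖x‖ / ‖x‖ ^ 2)
        * dirM i j x) := by
  obtain rfl : F = fun z => c * (φ ‖z‖ * dirM i j z) := funext hF
  have hd1 : ∀ r : ℝ, 0 < r → HasDerivAt φ (deriv φ r) r := fun r hr =>
    ((hφ.differentiableOn (by norm_num)).differentiableAt (Ioi_mem_nhds hr)).hasDerivAt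
  have hd2 : ∀ r : ℝ, 0 < r → HasDerivAt (deriv φ) (deriv (deriv φ) r) r := fun r hr =>
    (((contDiffOn_succ_iff_deriv_of_isOpen (n := 1) isOpen_Ioi).1 hφ).2.2.differentiableOn
      (by norm_num) |>.differentiableAt (Ioi_mem_nhds hr)).hasDerivAt
  have first : ∀ (k : Fin 3) (y : E3), y ≠ 0 →
      fderiv ℝ (fun z => c * (φ ‖z‖ * dirM i j z)) y (EuclideanSpace.single k (1 : ℝ))
        = c * (deriv φ ‖y‖ * (y k * ‖y‖⁻¹ ^ 1) * dirM i j y + φ ‖y‖ * dirM₁ i j k y) := by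
    intro k y hy
    rw [((HasPartial.const c).mul ((HasPartial.radial hy (hd1 _ (norm_pos_iff.2 hy))).mul
      (hasPartial_dirM i j k hy))).2]
    ring
  have second : ∀ k : Fin 3,
      fderiv ℝ (fun y => fderiv ℝ (fun z => c * (φ ‖z‖ * dirM i j z)) y
        (EuclideanSpace.single k (1 : ℝ))) x (EuclideanSpace.single k (1 : ℝ))
      = c * ((deriv (deriv φ) ‖x‖ * (x k ^ 2 * ‖x‖⁻¹ ^ 2)
          + deriv φ ‖x‖ * (‖x‖⁻¹ - x k ^ 2 * ‖x‖⁻¹ ^ 3)) * dirM i j x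
          + 2 * deriv φ ‖x‖ * ‖x‖⁻¹ * (x k * dirM₁ i j k x) + φ ‖x‖ * dirM₂ i j k x) := by
    intro k
    -- The formula for the first partial holds only off the origin, hence on a neighbourhood of `x`.
    have hev : (fun y => fderiv ℝ (fun z => c * (φ ‖z‖ * dirM i j z)) y
        (EuclideanSpace.single k (1 : ℝ))) =ᶠ[nhds x] fun y =>
          c * (deriv φ ‖y‖ * (y k * ‖y‖⁻¹ ^ 1) * dirM i j y + φ ‖y‖ * dirM₁ i j k y) := by
      filter_upwards [isOpen_ne.mem_nhds hx] with y hy using first k y hy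
    have hr := norm_pos_iff.2 hx
    rw [hev.fderiv_eq, ((HasPartial.const c).mul
      ((((HasPartial.radial hx (hd2 _ hr)).mul
        ((HasPartial.coord k k x).mul (hasPartial_norm_inv_pow k 1 hx))).mul
        (hasPartial_dirM i j k hx)).add
      ((HasPartial.radial hx (hd1 _ hr)).mul (hasPartial_dirM₁ i j k hx)))).2]
    rw [if_pos (rfl : k = k)]
    push_cast
    ring
  have hs := sum_sq_mul_norm_inv hx
  have h1 := sum_mul_dirM₁ i j hx
  have h2 := sum_dirM₂ i j hx
  simp only [second]
  simp only [Fin.sum_univ_three] at *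
  linear_combination
    c * (deriv (deriv φ) ‖x‖ - deriv φ ‖x‖ * ‖x‖⁻¹) * dirM i j x * hs
    + c * 2 * deriv φ ‖x‖ * ‖x‖⁻¹ * h1 + c * φ ‖x‖ * h2

/-- If `h` is a `C²` solution of the radial-hedgehog ODE on `(0,∞)`, then
`Q(x) = √(3/2)·h(|x|)·(x xᵀ/|x|² − (1/3)I)` solves the Landau–de Gennes Euler–Lagrange
system `ΔQ_ij = −Q_ij − (3√6 h₊/t)(Q_ik Q_kj − (δ_ij/3)tr Q²) + (2h₊²/t)Q_ij tr Q²`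
at every `x ≠ 0`. -/
theorem stmt3 (t : ℝ) (ht : 1 < t) (hplus : ℝ)
    (hplus_def : hplus = (3 + Real.sqrt (9 + 8 * t)) / 4)
    (h : ℝ → ℝ) (hC2 : ContDiffOn ℝ 2 h (Set.Ioi 0))
    (hode : ∀ r : ℝ, 0 < r →
      deriv (deriv h) r + (2 / r) * deriv h r - 6 * h r / r ^ 2
        = -h r + (h r) ^ 3 + (3 * hplus / t) * ((h r) ^ 3 - (h r) ^ 2))
    (Q : EuclideanSpace ℝ (Fin 3) → Matrix (Fin 3) (Fin 3) ℝ)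
    (hQ : ∀ x, Q x = Real.sqrt (3 / 2) • h ‖x‖ •
      (Matrix.of (fun i j : Fin 3 => x i * x j / ‖x‖ ^ 2) -
        (1 / 3 : ℝ) • (1 : Matrix (Fin 3) (Fin 3) ℝ))) :
    ∀ x : EuclideanSpace ℝ (Fin 3), x ≠ 0 → ∀ i j : Fin 3,
      (∑ k : Fin 3,
        fderiv ℝ (fun y => fderiv ℝ (fun z => Q z i j) y (EuclideanSpace.single k (1 : ℝ)))
          x (EuclideanSpace.single k (1 : ℝ)))
        = -Q x i j
          - (3 * Real.sqrt 6 * hplus / t) *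
            ((∑ k : Fin 3, Q x i k * Q x k j) -
              ((if i = j then (1 : ℝ) else 0) / 3) * (Q x * Q x).trace)
          + (2 * hplus ^ 2 / t) * Q x i j * (Q x * Q x).trace := by
  intro x hx i j
  have hQe : ∀ z a b, Q z a b = Real.sqrt (3 / 2) * (h ‖z‖ * dirM a b z) := by
    intro z a b
    rw [hQ z]
    simp [dirM, Matrix.one_apply, div_eq_mul_inv]
  rw [laplacian_hedgehog hC2 _ i j (fun z => hQe z i j) hx, hode _ (norm_pos_iff.2 hx)]
  have hs2 : Real.sqrt (3 / 2) ^ 2 = 3 / 2 := Real.sq_sqrt (by norm_num)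
  have hs6 : Real.sqrt 6 * Real.sqrt (3 / 2) = 3 := by
    rw [← Real.sqrt_mul (by norm_num), show (6 : ℝ) * (3 / 2) = 3 ^ 2 by norm_num,
      Real.sqrt_sq (by norm_num)]
  have hp : 2 * hplus ^ 2 = 3 * hplus + t := by
    have := Real.sq_sqrt (show (0 : ℝ) ≤ 9 + 8 * t by linarith)
    rw [hplus_def]
    linear_combination this / 8
  have ht' : t * t⁻¹ = 1 := mul_inv_cancel₀ (by linarith)
  have hsq : ∀ a b, ∑ k, Q x a k * Q x k b
      = 3 / 2 * h ‖x‖ ^ 2 * ∑ k, dirM a k x * dirM k b x := by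
    intro a b
    rw [Finset.mul_sum]
    refine Finset.sum_congr rfl fun k _ => ?_
    rw [hQe, hQe]
    linear_combination h ‖x‖ ^ 2 * dirM a k x * dirM k b x * hs2
  have htr : (Q x * Q x).trace = h ‖x‖ ^ 2 := by
    simp only [Matrix.trace, Matrix.diag_apply, Matrix.mul_apply, hsq]
    rw [← Finset.mul_sum, dirM_trace_sq hx]
    ring
  rw [htr, hsq, dirM_sq i j hx, hQe]
  simp only [div_eq_mul_inv] at *
  generalize Real.sqrt (3 * 2⁻¹) = s at *
  have hs6' : Real.sqrt 6 = 2 * s := by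
    linear_combination (-(2:ℝ)/3 * Real.sqrt 6) * hs2 + (2:ℝ)/3 * s * hs6
  rw [hs6']
  linear_combination
    (-(s * dirM i j x * h ‖x‖ ^ 3 * t⁻¹)) * hp - s * dirM i j x * h ‖x‖ ^ 3 * ht'
end

section
/- Let t > 1, h₊ = (3 + √(9 + 8t))/4, r₀ > 0 and M > 0. Suppose h : (0,r₀] → ℝ is a twice continuously differentiable solution of the radial-hedgehog ODE h''(r) + (2/r)h'(r) − 6h(r)/r² = −h(r) + h(r)³ + (3h₊/t)(h(r)³ − h(r)²) on (0,r₀] with |h'(r)| ≤ M for all r ∈ (0,r₀], and suppose h₀ is a real number such that h(r) ≥ h₀ for all r ∈ (0,r₀]. Then h₀ ≤ 0. In other words, a solution with bounded derivative cannot stay above any positive constant on an interval punctured at the origin. -/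
/-!
Suppose `h₀ > 0` and put `c = 3 h₊ / t > 0`. The equation reads `(r² h')' = 6 h + r² F(h)`
with `F(x) = x³ - x + c (x³ - x²)`, and `F(x) ≥ -1 - c` for `x ≥ 0`. Hence `(r² h')' ≥ 3 h₀`
near the origin, so `r² h' - 3 h₀ r` is nondecreasing there. As `h'` is bounded this function
tends to `0` at the origin, which would force `h' ≥ 3 h₀ / r`, contradicting boundedness.
The contradiction is made quantitative by comparing its values at `ε` and `ε / 4` for
a single small `ε` with `M ε ≤ h₀`.
-/

/-- A `C²` solution of the radial-hedgehog ODE on `(0, r₀]` whose derivative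
is bounded by `M` cannot stay above any positive constant: if `h(r) ≥ h₀` on `(0,r₀]`,
then `h₀ ≤ 0`. -/
theorem stmt4 (t : ℝ) (ht : 1 < t) (hplus : ℝ)
    (hplus_def : hplus = (3 + Real.sqrt (9 + 8 * t)) / 4)
    (r₀ M : ℝ) (hr₀ : 0 < r₀) (hM : 0 < M)
    (h : ℝ → ℝ) (hC2 : ContDiffOn ℝ 2 h (Set.Ioc 0 r₀))
    (hode : ∀ r ∈ Set.Ioc (0 : ℝ) r₀,
      deriv (deriv h) r + (2 / r) * deriv h r - 6 * h r / r ^ 2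
        = -h r + (h r) ^ 3 + (3 * hplus / t) * ((h r) ^ 3 - (h r) ^ 2))
    (hbdd : ∀ r ∈ Set.Ioc (0 : ℝ) r₀, |deriv h r| ≤ M)
    (h₀ : ℝ) (hlow : ∀ r ∈ Set.Ioc (0 : ℝ) r₀, h₀ ≤ h r) :
    h₀ ≤ 0 := by
  by_contra! hpos
  have hc : 0 ≤ 3 * hplus / t := by rw [hplus_def]; positivity
  generalize 3 * hplus / t = c at hode hc
  obtain ⟨ε, hε, hεr, hεM, hε1, hεc⟩ :
      ∃ ε : ℝ, 0 < ε ∧ ε < r₀ ∧ M * ε ≤ h₀ ∧ ε ≤ 1 ∧ (1 + c) * ε ≤ 3 * h₀ := by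
    refine ⟨min (min (r₀ / 2) (h₀ / M)) (min 1 (3 * h₀ / (1 + c))), by positivity, ?_, ?_, ?_, ?_⟩
    · exact ((min_le_left _ _).trans (min_le_left _ _)).trans_lt (by linarith)
    · rw [mul_comm, ← le_div_iff₀ hM]
      exact (min_le_left _ _).trans (min_le_right _ _)
    · exact (min_le_right _ _).trans (min_le_left _ _)
    · rw [mul_comm, ← le_div_iff₀ (by positivity)]
      exact (min_le_right _ _).trans (min_le_right _ _)
  have hdiff : ∀ x ∈ Set.Ioo (0 : ℝ) r₀, DifferentiableAt ℝ (deriv h) x := by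
    intro x hx
    have h1 : ContDiffOn ℝ 1 (deriv h) (Set.Ioo 0 r₀) :=
      ((contDiffOn_succ_iff_deriv_of_isOpen (n := 1) isOpen_Ioo).1
        (hC2.mono Set.Ioo_subset_Ioc_self)).2.2
    exact (h1.differentiableOn one_ne_zero).differentiableAt (isOpen_Ioo.mem_nhds hx)
  have hderiv : ∀ x ∈ Set.Ioo (0 : ℝ) r₀,
      HasDerivAt (fun r => r ^ 2 * deriv h r - 3 * h₀ * r)
        (2 * x * deriv h x + x ^ 2 * deriv (deriv h) x - 3 * h₀) x := by
    intro x hx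
    have := ((hasDerivAt_pow 2 x).mul (hdiff x hx).hasDerivAt).sub
      ((hasDerivAt_id x).const_mul (3 * h₀))
    exact this.congr_deriv (by simp)
  have hmono : MonotoneOn (fun r => r ^ 2 * deriv h r - 3 * h₀ * r) (Set.Icc (ε / 4) ε) := by
    have hsub : Set.Icc (ε / 4) ε ⊆ Set.Ioo 0 r₀ := fun x hx =>
      ⟨by linarith [hx.1], by linarith [hx.2]⟩
    refine monotoneOn_of_deriv_nonneg (convex_Icc _ _)
      (fun x hx => (hderiv x (hsub hx)).continuousAt.continuousWithinAt)
      (fun x hx => (hderiv x (hsub (interior_subset hx))).differentiableAt.differentiableWithinAt)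
      fun x hx => ?_
    have hx := interior_subset hx
    have hxo := hsub hx
    rw [(hderiv x hxo).deriv]
    have hx0 : 0 < x := hxo.1
    have e := hode x ⟨hxo.1, hxo.2.le⟩
    have hl := hlow x ⟨hxo.1, hxo.2.le⟩
    have e2 : 2 * x * deriv h x + x ^ 2 * deriv (deriv h) x = 6 * h x
        + x ^ 2 * (-h x + (h x) ^ 3 + c * ((h x) ^ 3 - (h x) ^ 2)) := by
      rw [← e]; field_simp; ring
    generalize h x = y at *
    have hy : 0 < y := by linarith
    have f1 : -1 ≤ y ^ 3 - y := by nlinarith [mul_nonneg hy.le (sq_nonneg (y - 1)), sq_nonneg (y - 1)]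
    have f2 : -1 ≤ y ^ 3 - y ^ 2 := by nlinarith [mul_nonneg hy.le (sq_nonneg (y - 1)), sq_nonneg (y - 1)]
    have f3 : -(1 + c) ≤ -y + y ^ 3 + c * (y ^ 3 - y ^ 2) := by nlinarith
    have f4 : x ^ 2 ≤ ε := by nlinarith [hx.2]
    have f5 : x ^ 2 * -(1 + c) ≤ x ^ 2 * (-y + y ^ 3 + c * (y ^ 3 - y ^ 2)) :=
      mul_le_mul_of_nonneg_left f3 (sq_nonneg x)
    have f6 : x ^ 2 * (1 + c) ≤ ε * (1 + c) := mul_le_mul_of_nonneg_right f4 (by linarith)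
    linarith
  have key := hmono (Set.left_mem_Icc.2 (by linarith)) (Set.right_mem_Icc.2 (by linarith))
    (by linarith : ε / 4 ≤ ε)
  have b1 := (abs_le.1 (hbdd ε ⟨hε, hεr.le⟩)).2
  have b2 := (abs_le.1 (hbdd (ε / 4) ⟨by linarith, by linarith⟩)).1
  have k1 : ε ^ 2 * deriv h ε ≤ ε ^ 2 * M := mul_le_mul_of_nonneg_left b1 (sq_nonneg _)
  have k2 : (ε / 4) ^ 2 * -M ≤ (ε / 4) ^ 2 * deriv h (ε / 4) :=
    mul_le_mul_of_nonneg_left b2 (sq_nonneg _)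
  have k3 : ε * (M * ε) ≤ ε * h₀ := mul_le_mul_of_nonneg_left hεM hε.le
  have k4 : 0 < ε * h₀ := mul_pos hε hpos
  simp only at key
  nlinarith
end

section
/- Let t > 1, h₊ = (3 + √(9 + 8t))/4, R > 0, let h : [0,R] → ℝ be absolutely continuous with derivative h' ∈ L²(0,R), and assume r² f_t(h(r)) and h(r)²/... are integrable as required for I[h] below to be finite. Define I[g] = ∫₀^R r²( (1/2)g'(r)² + 3g(r)²/r² + f_t(g(r)) ) dr. Then I[h] − I[|h|] = (2h₊/t) ∫_{{r ∈ [0,R] : h(r) < 0}} r² |h(r)|³ dr ≥ 0; in particular, if the set {r ∈ [0,R] : h(r) < 0} has positive Lebesgue measure, then I[|h|] < I[h]. -/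
/-!
The gradient term and the even terms of `f_t` agree for `h` and `|h|`, so the two integrands differ
almost everywhere only through the cubic term `-(h₊/t) r² h³`, whose difference is
`(2h₊/t) r² |h|³` where `h < 0` and `0` elsewhere. Integrating gives the identity. The integrand
`r² |h|³` is positive on `{h < 0}` except possibly at `r = 0`, which yields the strict inequality.
-/

open MeasureTheory

/-- For the reduced radial-hedgehog energy
`I[g] = ∫₀^R r²((1/2)g'² + 3g²/r² + f_t(g)) dr` and an absolutely continuous `h` with
`L²` derivative, `I[h] − I[|h|] = (2h₊/t)∫_{{h<0}} r²|h|³ dr ≥ 0`, and if `{h < 0}` has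
positive measure then `I[|h|] < I[h]`.  (The derivative of `|h|` is `habs'`,
with `|habs'| = |h'|` a.e.) -/
theorem stmt5 (t : ℝ) (ht : 1 < t) (hplus : ℝ)
    (hplus_def : hplus = (3 + Real.sqrt (9 + 8 * t)) / 4)
    (R : ℝ) (hR : 0 < R)
    (ft : ℝ → ℝ)
    (hft : ∀ s : ℝ, ft s = -s ^ 2 / 2 - (hplus / t) * s ^ 3 + (hplus ^ 2 / (2 * t)) * s ^ 4)
    (h h' habs' : ℝ → ℝ)
    (hcont : ContinuousOn h (Set.Icc 0 R))
    (hAC : ∀ᵐ r ∂(volume.restrict (Set.Icc (0 : ℝ) R)), HasDerivAt h (h' r) r)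
    (hACabs : ∀ᵐ r ∂(volume.restrict (Set.Icc (0 : ℝ) R)),
      HasDerivAt (fun s => |h s|) (habs' r) r)
    (habs_eq : ∀ᵐ r ∂(volume.restrict (Set.Icc (0 : ℝ) R)), |habs' r| = |h' r|)
    (hL2 : IntegrableOn (fun r => (h' r) ^ 2) (Set.Icc (0 : ℝ) R))
    (I : (ℝ → ℝ) → (ℝ → ℝ) → ℝ)
    (hI : ∀ g g' : ℝ → ℝ, I g g' =
      ∫ r in (0 : ℝ)..R, r ^ 2 * ((1 / 2) * (g' r) ^ 2 + 3 * (g r) ^ 2 / r ^ 2 + ft (g r)))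
    (hint1 : IntervalIntegrable
      (fun r => r ^ 2 * ((1 / 2) * (h' r) ^ 2 + 3 * (h r) ^ 2 / r ^ 2 + ft (h r)))
      volume 0 R)
    (hint2 : IntervalIntegrable
      (fun r => r ^ 2 * ((1 / 2) * (habs' r) ^ 2 + 3 * |h r| ^ 2 / r ^ 2 + ft |h r|))
      volume 0 R) :
    I h h' - I (fun r => |h r|) habs'
        = (2 * hplus / t) * ∫ r in {r ∈ Set.Icc (0 : ℝ) R | h r < 0}, r ^ 2 * |h r| ^ 3 ∧
    0 ≤ (2 * hplus / t) * ∫ r in {r ∈ Set.Icc (0 : ℝ) R | h r < 0}, r ^ 2 * |h r| ^ 3 ∧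
    (0 < volume {r ∈ Set.Icc (0 : ℝ) R | h r < 0} →
      I (fun r => |h r|) habs' < I h h') := by
  have hp : 0 < hplus := by
    rw [hplus_def]
    positivity
  have hc : 0 < 2 * hplus / t := by positivity
  set S : Set ℝ := {r ∈ Set.Icc (0 : ℝ) R | h r < 0} with hS
  have hSsub : S ⊆ Set.Icc 0 R := fun r hr => hr.1
  have hSm : MeasurableSet S := by
    obtain ⟨u, hu, hu'⟩ := continuousOn_iff'.1 hcont (Set.Iio 0) isOpen_Iio
    have hSu : S = u ∩ Set.Icc 0 R := by
      rw [← hu']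
      ext r
      exact and_comm
    rw [hSu]
    exact hu.measurableSet.inter measurableSet_Icc
  have hint : IntegrableOn (fun r => r ^ 2 * |h r| ^ 3) S :=
    (ContinuousOn.integrableOn_Icc (by fun_prop)).mono_set hSsub
  have hnn : ∀ r, 0 ≤ r ^ 2 * |h r| ^ 3 := fun r => by positivity
  have heq : I h h' - I (fun r => |h r|) habs'
      = (2 * hplus / t) * ∫ r in S, r ^ 2 * |h r| ^ 3 := by
    rw [hI, hI, ← intervalIntegral.integral_sub hint1 hint2,
      intervalIntegral.integral_of_le hR.le, ← integral_Icc_eq_integral_Ioc,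
      ← integral_const_mul, ← Set.inter_eq_self_of_subset_right hSsub,
      ← setIntegral_indicator hSm]
    refine integral_congr_ae ?_
    filter_upwards [habs_eq, ae_restrict_mem measurableSet_Icc] with r hr hrI
    have hsq : habs' r ^ 2 = h' r ^ 2 := (sq_eq_sq_iff_abs_eq_abs _ _).2 hr
    by_cases hneg : h r < 0
    · rw [Set.indicator_of_mem (show r ∈ S from ⟨hrI, hneg⟩)]
      simp only [hft, hsq, abs_of_neg hneg]
      ring
    · rw [Set.indicator_of_notMem (show r ∉ S from fun hrS => hneg hrS.2)]
      simp only [hft, hsq, abs_of_nonneg (not_lt.1 hneg)]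
      ring
  refine ⟨heq, mul_nonneg hc.le (integral_nonneg hnn), fun hpos => ?_⟩
  have hint_pos : 0 < ∫ r in S, r ^ 2 * |h r| ^ 3 := by
    rw [setIntegral_pos_iff_support_of_nonneg_ae (Filter.Eventually.of_forall hnn) hint]
    -- On `S` the integrand vanishes at most at `r = 0`, which is a null set.
    have hsub : S \ {0} ⊆ Function.support (fun r => r ^ 2 * |h r| ^ 3) ∩ S := by
      rintro r ⟨hrS, hr0⟩
      exact ⟨mul_ne_zero (pow_ne_zero _ hr0) (pow_ne_zero _ (abs_ne_zero.2 hrS.2.ne)), hrS⟩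
    refine lt_of_lt_of_le ?_ (measure_mono hsub)
    rwa [measure_sdiff_null (measure_singleton 0)]
  have := mul_pos hc hint_pos
  linarith
end

section
/- Let t > 1 and h₊ = (3 + √(9 + 8t))/4. Suppose h is real-analytic on an interval [0,R₀) with h(0) = 0 and satisfies r²h''(r) + 2r h'(r) − 6h(r) = r²(−h(r) + h(r)³ + (3h₊/t)(h(r)³ − h(r)²)) for all r ∈ (0,R₀). Then every odd-order derivative of h at 0 vanishes (h⁽²ⁿ⁺¹⁾(0) = 0 for all n ≥ 0), and the Taylor coefficients a_n = h⁽ⁿ⁾(0)/n! satisfy a₄ = −a₂/14; that is, h(r) = a₂ r²(1 − r²/14 + o(r²)) as r → 0. -/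
/-!
The proof is the Frobenius method, carried out in the ring `ℝ⟦X⟧`.

Write `p = Σ aₙ Xⁿ`. Representing a function on `(0, R)` by a power series (`Represents`) is
compatible with sums, products and derivatives, so the difference of the two sides of the ODE is
represented by the same differential polynomial in `p`. A power series whose sum vanishes on
`(0, R)` is zero (`Represents.eq_zero`), so the ODE holds formally:
`X² p'' + 2 X p' - 6 p = X² (-p + p³ + c (p³ - p²))`.

Comparing coefficients of `Xᵐ⁺²`, the factor on the left is `(m + 2)(m + 3) - 6 = m (m + 5)`, which
is nonzero for `m ≥ 1`. Since `a₀ = 0` and `a₁ = 0`, a strong induction kills all odd coefficients: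
an odd-degree coefficient of `p²` or `p³` only involves products with an odd-index factor
(`coeff_mul_odd`). The coefficient of `X⁴` reads `14 a₄ = -a₂`, because `p²` and `p³` have no
term in degree two.
-/

open PowerSeries Set Filter Topology

theorem hasSum_of_eq {u v : ℕ → ℝ} {x : ℝ} (hv : HasSum v x) (huv : ∀ n, u n = v n) :
    HasSum u x :=
  (funext huv : u = v) ▸ hv

/-- The power series `p` converges on `(0, R)` with sum `f` there. -/
def Represents (R : ℝ) (p : ℝ⟦X⟧) (f : ℝ → ℝ) : Prop :=
  ∀ r ∈ Ioo (0 : ℝ) R, HasSum (fun n : ℕ => coeff n p * r ^ n) (f r)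

namespace Represents

variable {R : ℝ} {p q : ℝ⟦X⟧} {f g : ℝ → ℝ}

theorem add (hp : Represents R p f) (hq : Represents R q g) :
    Represents R (p + q) (fun r => f r + g r) := by
  intro r hr
  simpa [add_mul] using (hp r hr).add (hq r hr)

theorem constMul (c : ℝ) (hp : Represents R p f) :
    Represents R (C c * p) (fun r => c * f r) := by
  intro r hr
  simpa [mul_assoc] using (hp r hr).mul_left c

theorem xMul (hp : Represents R p f) : Represents R (X * p) (fun r => r * f r) := by
  intro r hr
  rw [← hasSum_nat_add_iff' 1]
  have := (hp r hr).mul_left r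
  simp only [Finset.range_one, Finset.sum_singleton, coeff_zero_X_mul, zero_mul, sub_zero,
    coeff_succ_X_mul]
  refine hasSum_of_eq this fun n => ?_
  ring

theorem mul (hp : Represents R p f) (hq : Represents R q g) :
    Represents R (p * q) (fun r => f r * g r) := by
  intro r hr
  have h1 := (hp r hr).summable.norm
  have h2 := (hq r hr).summable.norm
  have hs := (summable_norm_sum_mul_antidiagonal_of_summable_norm h1 h2).of_norm
  have ht := tsum_mul_tsum_eq_tsum_sum_antidiagonal_of_summable_norm h1 h2
  rw [(hp r hr).tsum_eq, (hq r hr).tsum_eq] at ht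
  have hfg := hs.hasSum
  rw [← ht] at hfg
  refine hasSum_of_eq hfg fun n => ?_
  rw [coeff_mul, Finset.sum_mul]
  refine Finset.sum_congr rfl fun x hx => ?_
  rw [← Finset.HasAntidiagonal.mem_antidiagonal.mp hx, pow_add]
  ring

/-- Termwise differentiation: on `(0, s)` with `s < s' < R` the differentiated terms are dominated
by a constant times `n (s / s')ⁿ`. -/
theorem hasSum_deriv (hp : Represents R p f) {r : ℝ} (hr : r ∈ Ioo (0 : ℝ) R) :
    HasSum (fun n : ℕ => coeff n (d⁄dX ℝ p) * r ^ n) (deriv f r) := by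
  obtain ⟨s, hrs, hsR⟩ := exists_between hr.2
  obtain ⟨s', hss, hsR'⟩ := exists_between hsR
  have hs0 : 0 < s := hr.1.trans hrs
  have hs0' : 0 < s' := hs0.trans hss
  obtain ⟨B, hB⟩ := (hp s' ⟨hs0', hsR'⟩).summable.tendsto_atTop_zero.norm.bddAbove_range
  have hB' : ∀ n : ℕ, |coeff n p| * s' ^ n ≤ B := fun n => by
    have := hB (mem_range_self n)
    simpa [abs_mul, abs_of_pos hs0'] using this
  set u : ℕ → ℝ := fun n => B / s * ((n : ℝ) ^ 1 * (s / s') ^ n) with hu_def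
  have hu : Summable u := by
    refine Summable.mul_left _ (summable_pow_mul_geometric_of_norm_lt_one 1 ?_)
    rw [Real.norm_eq_abs, abs_of_pos (by positivity)]
    exact (div_lt_one hs0').2 hss
  have hbound : ∀ (n : ℕ) (y : ℝ), y ∈ Ioo 0 s →
      ‖coeff n p * ((n : ℝ) * y ^ (n - 1))‖ ≤ u n := by
    intro n y hy
    rcases n with _ | n
    · simp [hu_def]
    · have h1 : y ^ n ≤ s ^ n := pow_le_pow_left₀ hy.1.le hy.2.le n
      have h2 := hB' (n + 1)
      have h3 : |coeff (n + 1) p| ≤ B / s' ^ (n + 1) := by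
        rwa [le_div_iff₀ (by positivity)]
      rw [norm_mul, norm_mul, Real.norm_eq_abs, Real.norm_eq_abs, Real.norm_eq_abs,
        Nat.add_sub_cancel, abs_of_nonneg (pow_nonneg hy.1.le n), Nat.abs_cast]
      calc |coeff (n + 1) p| * (((n + 1 : ℕ) : ℝ) * y ^ n)
          ≤ B / s' ^ (n + 1) * (((n + 1 : ℕ) : ℝ) * s ^ n) := by
            gcongr
            · exact mul_nonneg (Nat.cast_nonneg _) (pow_nonneg hy.1.le n)
            · exact (abs_nonneg _).trans h3
        _ = u (n + 1) := by
            simp only [hu_def, pow_one, div_pow]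
            field_simp
            ring
  have hrmem : r ∈ Ioo 0 s := ⟨hr.1, hrs⟩
  have hd := hasDerivAt_tsum_of_isPreconnected hu isOpen_Ioo isPreconnected_Ioo
    (g := fun n y => coeff n p * y ^ n) (g' := fun n y => coeff n p * ((n : ℝ) * y ^ (n - 1)))
    (fun n y _ => (hasDerivAt_pow n y).const_mul _) hbound hrmem (hp r hr).summable hrmem
  have hf : f =ᶠ[𝓝 r] fun z => ∑' n : ℕ, coeff n p * z ^ n := by
    filter_upwards [isOpen_Ioo.mem_nhds hr] with z hz
    exact (hp z hz).tsum_eq.symm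
  rw [hf.deriv_eq, hd.deriv]
  have hS : Summable fun n : ℕ => coeff n p * ((n : ℝ) * r ^ (n - 1)) :=
    hu.of_norm_bounded fun n => hbound n r hrmem
  have hh := (hasSum_nat_add_iff' 1).2 hS.hasSum
  simp only [Finset.range_one, Finset.sum_singleton, Nat.cast_zero, zero_mul, mul_zero,
    sub_zero, Nat.add_sub_cancel] at hh
  refine hasSum_of_eq hh fun n => ?_
  rw [coeff_derivative]
  push_cast
  ring

theorem deriv (hp : Represents R p f) : Represents R (d⁄dX ℝ p) (_root_.deriv f) :=
  fun _ hr => hp.hasSum_deriv hr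

/-- The sum of the series is right-continuous at `0`, so its constant term is the limit there. -/
theorem coeff_zero_eq (hR : 0 < R) (hp : Represents R p (fun _ => 0)) : coeff 0 p = 0 := by
  obtain ⟨s, hs0, hsR⟩ := exists_between hR
  have hcont : ContinuousOn (fun z : ℝ => ∑' n : ℕ, coeff n p * z ^ n) (Icc 0 s) := by
    refine continuousOn_tsum (fun n => by fun_prop) (hp s ⟨hs0, hsR⟩).summable.norm ?_
    intro n x hx
    rw [norm_mul, norm_mul, norm_pow, norm_pow, Real.norm_of_nonneg hx.1,
      Real.norm_of_nonneg hs0.le]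
    have := pow_le_pow_left₀ hx.1 hx.2 n
    gcongr
  have h1 := (hcont 0 ⟨le_rfl, hs0.le⟩).mono_left (nhdsWithin_mono 0 Ioo_subset_Icc_self)
  have h2 : Tendsto (fun z : ℝ => ∑' n : ℕ, coeff n p * z ^ n) (𝓝[Ioo 0 s] 0) (𝓝 0) := by
    refine tendsto_const_nhds.congr' ?_
    filter_upwards [self_mem_nhdsWithin] with z hz
    exact (hp z ⟨hz.1, hz.2.trans hsR⟩).tsum_eq.symm
  have : (𝓝[Ioo 0 s] (0 : ℝ)).NeBot := by
    rw [nhdsWithin_Ioo_eq_nhdsGT hs0]; infer_instance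
  have h3 : ∑' n : ℕ, coeff n p * (0 : ℝ) ^ n = 0 := tendsto_nhds_unique h1 h2
  rwa [tsum_eq_single 0 (fun n hn => by simp [hn]), pow_zero, mul_one] at h3

/-- Identity theorem: remove the constant term, divide by `r`, and repeat. -/
theorem eq_zero (hR : 0 < R) (hp : Represents R p (fun _ => 0)) : p = 0 := by
  ext n
  rw [map_zero]
  induction n generalizing p with
  | zero => exact hp.coeff_zero_eq hR
  | succ n ih =>
    have h0 := hp.coeff_zero_eq hR
    have : Represents R (PowerSeries.mk fun k => coeff (k + 1) p) (fun _ => 0) := by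
      intro r hr
      have h1 := ((hasSum_nat_add_iff' 1).2 (hp r hr)).mul_left r⁻¹
      simp only [Finset.range_one, Finset.sum_singleton, h0, zero_mul, sub_zero, mul_zero] at h1
      refine hasSum_of_eq h1 fun k => ?_
      have := hr.1.ne'
      rw [coeff_mk]
      field_simp
      ring
    simpa using ih this

end Represents

/-- If all coefficients of `p` and `q` of odd degree up to `m` vanish, then so does the coefficient
of `p * q` in odd degree `m`: of two indices with odd sum, one is odd. -/
theorem coeff_mul_odd {p q : ℝ⟦X⟧} {m : ℕ} (hm : Odd m)
    (hp : ∀ k ≤ m, Odd k → coeff k p = 0) (hq : ∀ k ≤ m, Odd k → coeff k q = 0) :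
    coeff m (p * q) = 0 := by
  rw [coeff_mul]
  refine Finset.sum_eq_zero fun x hx => ?_
  have hx' := Finset.HasAntidiagonal.mem_antidiagonal.mp hx
  rcases Nat.even_or_odd x.1 with h1 | h1
  · have h2 : Odd x.2 := by
      rw [← hx'] at hm
      exact (Nat.odd_add'.mp hm).mpr h1
    rw [hq _ (by omega) h2, mul_zero]
  · rw [hp _ (by omega) h1, zero_mul]

/-- If `h` is real-analytic near `0`, `h(0) = 0`, with convergent Taylor
expansion `h(r) = Σ aₙ rⁿ` on `[0,R₀)`, and `h` solves the radial-hedgehog ODE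
(multiplied by `r²`) on `(0,R₀)`, then all odd Taylor coefficients vanish and
`a₄ = −a₂/14`; i.e. `h(r) = a₂ r²(1 − r²/14 + o(r²))` as `r → 0`. -/
theorem stmt6 (t : ℝ) (ht : 1 < t) (hplus : ℝ)
    (hplus_def : hplus = (3 + Real.sqrt (9 + 8 * t)) / 4)
    (R₀ : ℝ) (hR₀ : 0 < R₀)
    (h : ℝ → ℝ) (a : ℕ → ℝ)
    (hsum : ∀ r ∈ Set.Ico (0 : ℝ) R₀, Summable (fun n : ℕ => a n * r ^ n))
    (hseries : ∀ r ∈ Set.Ico (0 : ℝ) R₀, h r = ∑' n : ℕ, a n * r ^ n)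
    (h0 : h 0 = 0)
    (hode : ∀ r ∈ Set.Ioo (0 : ℝ) R₀,
      r ^ 2 * deriv (deriv h) r + 2 * r * deriv h r - 6 * h r
        = r ^ 2 * (-h r + (h r) ^ 3 + (3 * hplus / t) * ((h r) ^ 3 - (h r) ^ 2))) :
    (∀ n : ℕ, a (2 * n + 1) = 0) ∧ a 4 = -(a 2) / 14 := by
  have ha0 : a 0 = 0 := by
    have := hseries 0 ⟨le_rfl, hR₀⟩
    rwa [h0, tsum_eq_single 0 (fun n hn => by simp [hn]), pow_zero, mul_one, eq_comm] at this
  set c := 3 * hplus / t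
  set p : ℝ⟦X⟧ := PowerSeries.mk a with hp_def
  have hpa : ∀ n, coeff n p = a n := fun n => coeff_mk n a
  have hp : Represents R₀ p h := by
    intro r hr
    have hr' : r ∈ Ico 0 R₀ := ⟨hr.1.le, hr.2⟩
    simp only [hpa]
    rw [hseries r hr']
    exact (hsum r hr').hasSum
  -- The right-hand side of the ODE divided by `r²`, as a power series.
  set N : ℝ⟦X⟧ := C (-1) * p + (C (1 + c) * (p * (p * p)) + C (-c) * (p * p)) with hN_def
  have hformal : X * (X * d⁄dX ℝ (d⁄dX ℝ p)) + (C 2 * (X * d⁄dX ℝ p) +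
      (C (-6) * p + C (-1) * (X * (X * N)))) = 0 := by
    have hN := (hp.constMul (-1)).add
      (((hp.mul (hp.mul hp)).constMul (1 + c)).add ((hp.mul hp).constMul (-c)))
    have hall := hp.deriv.deriv.xMul.xMul.add ((hp.deriv.xMul.constMul 2).add
      ((hp.constMul (-6)).add (hN.xMul.xMul.constMul (-1))))
    refine Represents.eq_zero hR₀ fun r hr => ?_
    have := hall r hr
    convert this using 1
    linear_combination -(hode r hr)
  have ha1 : a 1 = 0 := by
    have := congrArg (coeff 1) hformal
    simp only [map_add, coeff_C_mul, coeff_succ_X_mul, coeff_zero_X_mul, coeff_derivative, hpa,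
      map_zero] at this
    norm_num at this
    linarith
  have hrec : ∀ m : ℕ, (m : ℝ) * (m + 5) * a (m + 2) = coeff m N := by
    intro m
    have := congrArg (coeff (m + 2)) hformal
    simp only [map_add, coeff_C_mul, coeff_succ_X_mul, coeff_derivative, hpa,
      map_zero] at this
    push_cast at this
    linear_combination this
  have hodd : ∀ k : ℕ, Odd k → coeff k p = 0 := by
    intro k
    induction k using Nat.strong_induction_on with
    | _ k ih =>
      intro hk
      rcases k with _ | _ | m
      · simp at hk
      · rw [hpa]; exact ha1
      · have hm : Odd m := by
          rw [Nat.odd_iff] at hk ⊢; omega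
        have hlow : ∀ j ≤ m, Odd j → coeff j p = 0 := fun j hj => ih j (by omega)
        have hsq : ∀ j ≤ m, Odd j → coeff j (p * p) = 0 := fun j hj hjo =>
          coeff_mul_odd hjo (fun i hi => hlow i (hi.trans hj)) (fun i hi => hlow i (hi.trans hj))
        have h1 := hrec m
        rw [hN_def, map_add, map_add, coeff_C_mul, coeff_C_mul, coeff_C_mul,
          hlow m le_rfl hm, hsq m le_rfl hm, coeff_mul_odd hm hlow hsq] at h1
        have hmpos : (0 : ℝ) < m := by exact_mod_cast hm.pos
        have hne : (m : ℝ) * (m + 5) ≠ 0 := by positivity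
        rw [hpa]
        simpa [hne, hmpos.ne'] using h1
  refine ⟨fun n => by rw [← hpa]; exact hodd _ ⟨n, rfl⟩, ?_⟩
  have h4 := hrec 2
  have e2 : Finset.HasAntidiagonal.antidiagonal 2 = {(0, 2), (1, 1), (2, 0)} := rfl
  have hsq2 : coeff 2 (p * p) = 0 := by
    simp [coeff_mul, e2, hpa, ha0, ha1]
  have hsq0 : coeff 0 (p * p) = 0 := by
    rw [coeff_mul]; simp [hpa, ha0]
  have hcu2 : coeff 2 (p * (p * p)) = 0 := by
    rw [coeff_mul, e2]
    simp [hpa, ha0, ha1, hsq0]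
  rw [hN_def, map_add, map_add, coeff_C_mul, coeff_C_mul, coeff_C_mul, hsq2, hcu2, hpa] at h4
  push_cast at h4
  norm_num at h4
  linarith
end

section
/- Let t > 1, h₊ = (3 + √(9 + 8t))/4, and let h : (0,∞) → ℝ be a twice continuously differentiable solution of the radial-hedgehog ODE h''(r) + (2/r)h'(r) − 6h(r)/r² = −h(r) + h(r)³ + (3h₊/t)(h(r)³ − h(r)²) such that 0 < h(r) ≤ 1 and h'(r) > 0 for all r > 0. Then lim_{r→∞} h(r) = 1. -/
/-!
With `k = 3 h₊ / t > 0`, the right-hand side of the ODE factors as `h (h - 1) (h + 1 + k h)`.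
If the increasing function `h` did not tend to `1`, it would satisfy `h ≤ b` on `(0,∞)` for some
`b < 1`, while `h ≥ h 1 > 0` on `[1,∞)`. The right-hand side is then at most `-(h 1) (1 - b)` on
`[1,∞)`. Since `6 h / r²` tends to `0` and `h' > 0`, the ODE gives `h'' ≤ -c` for large `r`,
with a constant `c > 0`. Hence `h'` eventually becomes nonpositive, contradicting `h' > 0`.
-/

/-- A `C²` solution of the radial-hedgehog ODE on `(0,∞)` with
`0 < h ≤ 1` and `h' > 0` everywhere satisfies `h(r) → 1` as `r → ∞`. -/
theorem stmt9 (t : ℝ) (ht : 1 < t) (hplus : ℝ)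
    (hplus_def : hplus = (3 + Real.sqrt (9 + 8 * t)) / 4)
    (h : ℝ → ℝ) (hC2 : ContDiffOn ℝ 2 h (Set.Ioi 0))
    (hode : ∀ r : ℝ, 0 < r →
      deriv (deriv h) r + (2 / r) * deriv h r - 6 * h r / r ^ 2
        = -h r + (h r) ^ 3 + (3 * hplus / t) * ((h r) ^ 3 - (h r) ^ 2))
    (hpos : ∀ r : ℝ, 0 < r → 0 < h r)
    (hle : ∀ r : ℝ, 0 < r → h r ≤ 1)
    (hmono : ∀ r : ℝ, 0 < r → 0 < deriv h r) :
    Filter.Tendsto h Filter.atTop (nhds 1) := by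
  have hk : 0 < 3 * hplus / t := by
    have : 0 < hplus := by rw [hplus_def]; positivity
    positivity
  set k := 3 * hplus / t with hkdef
  clear_value k
  have hsm : StrictMonoOn h (Set.Ioi 0) := by
    refine strictMonoOn_of_deriv_pos (convex_Ioi 0) hC2.continuousOn ?_
    rw [interior_Ioi]
    exact hmono
  rw [tendsto_order]
  refine ⟨fun b hb => ?_, fun b hb => ?_⟩
  swap
  · filter_upwards [Filter.eventually_gt_atTop 0] with r hr
    exact (hle r hr).trans_lt hb
  -- By monotonicity it suffices to exceed `b` at one point.
  suffices hex : ∃ r, 0 < r ∧ b < h r by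
    obtain ⟨r, hr, hbr⟩ := hex
    filter_upwards [Filter.eventually_ge_atTop r] with s hs
    exact hbr.trans_le (hsm.monotoneOn hr (hr.trans_le hs) hs)
  by_contra! hcon
  obtain ⟨a, ha⟩ : ∃ a, a = h 1 := ⟨_, rfl⟩
  have ha0 : 0 < a := ha ▸ hpos 1 one_pos
  have hd : 0 < a * (1 - b) := mul_pos ha0 (by linarith)
  obtain ⟨d, hdd⟩ : ∃ d, d = a * (1 - b) := ⟨_, rfl⟩
  rw [← hdd] at hd
  -- Beyond `R` the term `6 h / r²` is at most `d / 2`, because `r² ≥ r ≥ 12 / d`.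
  obtain ⟨R, hR⟩ : ∃ R, R = 1 + 12 / d := ⟨_, rfl⟩
  have h12 : 0 < 12 / d := by positivity
  have hconc : ∀ r, R ≤ r → deriv (deriv h) r ≤ -(d / 2) := by
    intro r hr
    have hr1 : 1 ≤ r := by linarith
    have hr0 : 0 < r := by linarith
    have hah : a ≤ h r := ha ▸ hsm.monotoneOn (Set.mem_Ioi.2 one_pos) hr0 hr1
    have hsix : 6 * h r / r ^ 2 ≤ d / 2 := by
      have h1 : 12 ≤ r * d := by
        rw [← div_le_iff₀ hd]; linarith
      rw [div_le_iff₀ (by positivity)]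
      nlinarith [hle r hr0]
    have hfirst : 0 < 2 / r * deriv h r := mul_pos (by positivity) (hmono r hr0)
    have hrhs : -h r + h r ^ 3 + k * (h r ^ 3 - h r ^ 2) ≤ -d := by
      have h1 : d ≤ h r * (1 - h r) := by
        rw [hdd]
        exact mul_le_mul hah (by linarith [hcon r hr0]) (by linarith) (hpos r hr0).le
      have h2 : 0 ≤ h r * (1 - h r) * (h r + k * h r) := by
        have := hpos r hr0
        have := hle r hr0
        have : 0 ≤ 1 - h r := by linarith
        positivity
      linarith
    linarith [hode r hr0]
  -- A nonzero value of `deriv` certifies differentiability.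
  have hdiff : ∀ r, R ≤ r → DifferentiableAt ℝ (deriv h) r := fun r hr =>
    differentiableAt_of_deriv_ne_zero (by linarith [hconc r hr])
  have hR0 : 0 < R := by linarith
  obtain ⟨x, hx⟩ : ∃ x, x = R + deriv h R / (d / 2) := ⟨_, rfl⟩
  have hRx : R ≤ x := by
    have : 0 < deriv h R / (d / 2) := div_pos (hmono R hR0) (by positivity)
    linarith
  have hmvt := (convex_Ici R).image_sub_le_mul_sub_of_deriv_le
    (fun r hr => (hdiff r hr).continuousAt.continuousWithinAt)
    (fun r hr => (hdiff r (interior_subset hr)).differentiableWithinAt)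
    (fun r hr => hconc r (interior_subset hr))
    R Set.self_mem_Ici x hRx hRx
  have hval : -(d / 2) * (x - R) = -deriv h R := by
    rw [hx]; field_simp; ring
  linarith [hmono x (by linarith)]
end

section
/- Let t > 1, h₊ = (3 + √(9 + 8t))/4, and let h : (0,∞) → ℝ be a twice continuously differentiable solution of the radial-hedgehog ODE h''(r) + (2/r)h'(r) − 6h(r)/r² = −h(r) + h(r)³ + (3h₊/t)(h(r)³ − h(r)²) with 0 ≤ h(r) ≤ 1 for all r > 0, h(r) > 1/2 for all r ≥ R₀ (for some R₀ > 0), and h(r) → 1 as r → ∞. Then there exists R₁ ≥ R₀ such that h'(r) > 0 for all r > R₁; i.e., h is monotonically increasing in the far field. -/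
/-!
Write `k = 3 h₊ / t > 0`, `F(s) = s² - 1 + k (s² - s)` and `G(r) = F(h(r)) + 6 / r²`. The equation
reads `h'' + (2/r) h' = h G`, equivalently `(r² h')' = r² h G`, and `F` is strictly increasing on
`[1/2, ∞)`.

The heart of the matter is that `h'(a) ≤ 0` forces `G(a) > 0` for `a ≥ R₀` (`potential_pos`).
Suppose `G(a) ≤ 0`. Then `G'(a) = F'(h) h' - 12 / a³ < 0`, so `r² h'` decreases strictly just after
`a` and `h` drops below `h(a)` (`exists_lt_right`). Since `h(a) < 1` and `h → 1`, `h` attains its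
minimum over some `[a, d]` at an interior point `m`, where `h'(m) = 0`. As `h` does not drop below
`h(m)` right after `m`, `G(m) > 0`; but then `F(h(m)) > -6 / m² > -6 / a² ≥ F(h(a))`, so
`h(m) > h(a)`, a contradiction.

Consequently `h'' = h G - (2/r) h' > 0` wherever `h' ≤ 0`, so `h'`, once positive, can never
return to a nonpositive value: just before the first such return `h'` would be even smaller. Finally
`h'` is positive somewhere, since otherwise `h` is nonincreasing with limit `1`, hence constantly
`1`, which does not solve the equation.
-/

open Set Filter Topology

/-- The factor `G(r) = F(h(r)) + 6 / r²` for which the equation reads `h'' + (2/r) h' = h G`. -/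
noncomputable def potential (k : ℝ) (h : ℝ → ℝ) (r : ℝ) : ℝ :=
  (h r) ^ 2 - 1 + k * ((h r) ^ 2 - h r) + 6 / r ^ 2

lemma eventually_right_lt {f : ℝ → ℝ} {f' x : ℝ} (hf : HasDerivAt f f' x) (hneg : f' < 0) :
    ∀ᶠ y in 𝓝[>] x, f y < f x := by
  have h1 := (hasDerivAt_iff_tendsto_slope.1 hf).eventually (eventually_lt_nhds hneg)
  have h2 : ∀ᶠ y in 𝓝[>] x, slope f x y < 0 :=
    h1.filter_mono (nhdsWithin_mono x fun y hy => (ne_of_gt hy : y ≠ x))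
  filter_upwards [h2, self_mem_nhdsWithin] with y hy hxy
  have hxy' : 0 < y - x := sub_pos.2 hxy
  rw [slope_def_field, div_lt_iff₀ hxy'] at hy
  linarith

lemma eventually_left_lt {f : ℝ → ℝ} {f' x : ℝ} (hf : HasDerivAt f f' x) (hpos : 0 < f') :
    ∀ᶠ y in 𝓝[<] x, f y < f x := by
  have h1 := (hasDerivAt_iff_tendsto_slope.1 hf).eventually (eventually_gt_nhds hpos)
  have h2 : ∀ᶠ y in 𝓝[<] x, 0 < slope f x y :=
    h1.filter_mono (nhdsWithin_mono x fun y hy => (ne_of_lt hy : y ≠ x))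
  filter_upwards [h2, self_mem_nhdsWithin] with y hy hxy
  have hxy' : y - x < 0 := sub_neg.2 hxy
  rw [slope_def_field] at hy
  rcases div_pos_iff.1 hy with h3 | h3 <;> linarith [h3.1, h3.2]

/-- If `h'(a) ≤ 0` and `G(a) ≤ 0`, then `G < 0` just after `a`, so `r² h'` is strictly decreasing
there and `h` drops below `h(a)`. -/
lemma exists_lt_right {k : ℝ} (hk : 0 < k) {h : ℝ → ℝ}
    (hd : ∀ r, 0 < r → HasDerivAt h (deriv h r) r)
    (hd2 : ∀ r, 0 < r → HasDerivAt (deriv h) (deriv (deriv h) r) r)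
    (hode : ∀ r, 0 < r → deriv (deriv h) r + (2 / r) * deriv h r = h r * potential k h r)
    {a d : ℝ} (ha : 0 < a) (had : a < d) (hhalf : ∀ r, a ≤ r → 1 / 2 < h r)
    (hda : deriv h a ≤ 0) (hG : potential k h a ≤ 0) :
    ∃ x ∈ Ioo a d, h x < h a := by
  have hGd : HasDerivAt (potential k h)
      (deriv h a * (2 * h a + k * (2 * h a - 1)) - 12 / a ^ 3) a := by
    have h1 := hd a ha
    have h2 : HasDerivAt (fun r : ℝ => 6 / r ^ 2) (-(12 / a ^ 3)) a := by
      have := (hasDerivAt_const a (6 : ℝ)).div (hasDerivAt_pow 2 a) (by positivity)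
      refine this.congr_deriv ?_
      field_simp
      norm_num
      ring
    have := (((h1.pow 2).sub_const 1).add (((h1.pow 2).sub h1).const_mul k)).add h2
    refine this.congr_deriv ?_
    push_cast
    ring
  have hneg : deriv h a * (2 * h a + k * (2 * h a - 1)) - 12 / a ^ 3 < 0 := by
    have h1 : 0 < 12 / a ^ 3 := by positivity
    have h2 : 0 ≤ 2 * h a + k * (2 * h a - 1) := by
      have := hhalf a le_rfl
      have := mul_nonneg hk.le (by linarith : 0 ≤ 2 * h a - 1)
      linarith
    have := mul_nonpos_of_nonpos_of_nonneg hda h2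
    linarith
  obtain ⟨e, hae, he⟩ := (mem_nhdsGT_iff_exists_Ioo_subset' had).1
    (eventually_right_lt hGd hneg)
  have hGneg : ∀ x ∈ Ioo a e, potential k h x < 0 := fun x hx => lt_of_lt_of_le (he hx) hG
  have hφ : ∀ r, 0 < r → HasDerivAt (fun r => r ^ 2 * deriv h r)
      (r ^ 2 * (h r * potential k h r)) r := by
    intro r hr
    have := (hasDerivAt_pow 2 r).mul (hd2 r hr)
    refine this.congr_deriv ?_
    rw [← hode r hr]
    field_simp
    norm_num
    ring
  have hanti : StrictAntiOn (fun r => r ^ 2 * deriv h r) (Ico a e) := by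
    apply strictAntiOn_of_deriv_neg (convex_Ico a e)
    · intro x hx
      exact (hφ x (ha.trans_le hx.1)).continuousAt.continuousWithinAt
    · intro x hx
      rw [interior_Ico] at hx
      have hx0 := ha.trans hx.1
      rw [(hφ x hx0).deriv]
      have h1 : 0 < h x := by linarith [hhalf x hx.1.le]
      exact mul_neg_of_pos_of_neg (by positivity) (mul_neg_of_pos_of_neg h1 (hGneg x hx))
  have hdneg : ∀ x ∈ Ioo a e, deriv h x < 0 := by
    intro x hx
    have h1 := hanti ⟨le_rfl, hae⟩ ⟨hx.1.le, hx.2⟩ hx.1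
    have h2 : a ^ 2 * deriv h a ≤ 0 := mul_nonpos_of_nonneg_of_nonpos (by positivity) hda
    have h3 : x ^ 2 * deriv h x < 0 := lt_of_lt_of_le h1 h2
    exact (pos_iff_neg_of_mul_neg h3).1 (pow_pos (ha.trans hx.1) 2)
  have hanti2 : StrictAntiOn h (Ico a e) := by
    apply strictAntiOn_of_deriv_neg (convex_Ico a e)
    · intro x hx
      exact (hd x (ha.trans_le hx.1)).continuousAt.continuousWithinAt
    · intro x hx
      rw [interior_Ico] at hx
      exact hdneg x hx
  obtain ⟨x, hax, hx⟩ := exists_between (lt_min hae had)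
  exact ⟨x, ⟨hax, hx.trans_le (min_le_right _ _)⟩,
    hanti2 ⟨le_rfl, hae⟩ ⟨hax.le, hx.trans_le (min_le_left _ _)⟩ hax⟩

lemma potential_pos {k : ℝ} (hk : 0 < k) {h : ℝ → ℝ}
    (hd : ∀ r, 0 < r → HasDerivAt h (deriv h r) r)
    (hd2 : ∀ r, 0 < r → HasDerivAt (deriv h) (deriv (deriv h) r) r)
    (hode : ∀ r, 0 < r → deriv (deriv h) r + (2 / r) * deriv h r = h r * potential k h r)
    {a : ℝ} (ha : 0 < a) (hhalf : ∀ r, a ≤ r → 1 / 2 < h r)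
    (hle : h a ≤ 1) (hlim : Tendsto h atTop (𝓝 1)) (hda : deriv h a ≤ 0) :
    0 < potential k h a := by
  by_contra! hG
  have hlt : h a < 1 := by
    refine lt_of_le_of_ne hle fun h1 => ?_
    have : 0 < 6 / a ^ 2 := by positivity
    simp only [potential, h1] at hG
    linarith
  obtain ⟨d, hd1, had⟩ :=
    ((hlim.eventually (eventually_gt_nhds hlt)).and (eventually_gt_atTop a)).exists
  have hcont : ContinuousOn h (Icc a d) := fun x hx =>
    (hd x (ha.trans_le hx.1)).continuousAt.continuousWithinAt
  obtain ⟨m, hm, hmin⟩ := isCompact_Icc.exists_isMinOn (nonempty_Icc.2 had.le) hcont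
  obtain ⟨x, hx, hxa⟩ := exists_lt_right hk hd hd2 hode ha had hhalf hda hG
  have hma : h m < h a := (hmin (Ioo_subset_Icc_self hx)).trans_lt hxa
  have ham : a < m := lt_of_le_of_ne hm.1 fun e => by subst e; exact lt_irrefl _ hma
  have hmd : m < d := lt_of_le_of_ne hm.2 fun e => by subst e; linarith
  have hdm : deriv h m = 0 := (hmin.isLocalMin (Icc_mem_nhds ham hmd)).deriv_eq_zero
  have hGm : 0 < potential k h m := by
    by_contra! hGm
    obtain ⟨y, hy, hym⟩ := exists_lt_right hk hd hd2 hode (ha.trans ham) hmd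
      (fun r hr => hhalf r (ham.le.trans hr)) hdm.le hGm
    exact absurd (hmin (show y ∈ Icc a d from ⟨(ham.trans hy.1).le, hy.2.le⟩)) (not_le.2 hym)
  have h6 : 6 / m ^ 2 < 6 / a ^ 2 := by gcongr
  have hm2 := hhalf m ham.le
  have ha2 := hhalf a le_rfl
  simp only [potential] at hG hGm
  -- monotonicity of `F` on `[1/2, ∞)`, through `F(s) - F(s') = (s - s') (s + s' + k (s + s' - 1))`
  have hF : 0 < (h a - h m) * (h a + h m + k * (h a + h m - 1)) := by
    have := mul_pos hk (by linarith : 0 < h a + h m - 1)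
    exact mul_pos (by linarith) (by linarith)
  nlinarith

lemma exists_deriv_pos {k R : ℝ} {h : ℝ → ℝ} (hR : 0 < R)
    (hd : ∀ r, 0 < r → HasDerivAt h (deriv h r) r)
    (hode : ∀ r, 0 < r → deriv (deriv h) r + (2 / r) * deriv h r = h r * potential k h r)
    (hle : ∀ r, 0 < r → h r ≤ 1) (hlim : Tendsto h atTop (𝓝 1)) :
    ∃ b, R ≤ b ∧ 0 < deriv h b := by
  by_contra! hno
  have hanti : AntitoneOn h (Ici R) := by
    apply antitoneOn_of_deriv_nonpos (convex_Ici R)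
    · intro x hx
      exact (hd x (hR.trans_le hx)).continuousAt.continuousWithinAt
    · intro x hx
      rw [interior_Ici] at hx
      exact (hd x (hR.trans hx)).differentiableAt.differentiableWithinAt
    · intro x hx
      rw [interior_Ici] at hx
      exact hno x (le_of_lt hx)
  have hone : ∀ x, R ≤ x → h x = 1 := by
    intro x hx
    refine le_antisymm (hle x (hR.trans_le hx)) (le_of_tendsto hlim ?_)
    filter_upwards [eventually_ge_atTop x] with y hy
    exact hanti hx (hx.trans hy) hy
  have hd0 : ∀ x, R < x → deriv h x = 0 := by
    intro x hx
    have : h =ᶠ[𝓝 x] fun _ => (1 : ℝ) := by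
      filter_upwards [Ioi_mem_nhds hx] with y hy
      exact hone y (le_of_lt hy)
    rw [this.deriv_eq, deriv_const]
  have hdd0 : deriv (deriv h) (R + 1) = 0 := by
    have : deriv h =ᶠ[𝓝 (R + 1)] fun _ => (0 : ℝ) := by
      filter_upwards [Ioi_mem_nhds (lt_add_one R)] with y hy
      exact hd0 y hy
    rw [this.deriv_eq, deriv_const]
  have := hode (R + 1) (by linarith)
  rw [hdd0, hd0 _ (lt_add_one R), potential, hone _ (lt_add_one R).le] at this
  have h6 : 0 < 6 / (R + 1) ^ 2 := by positivity
  linarith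

/-- A `C²` solution of the radial-hedgehog ODE with `0 ≤ h ≤ 1`,
`h > 1/2` beyond some `R₀ > 0`, and `h(r) → 1` as `r → ∞`, is eventually monotonically
increasing: there is `R₁ ≥ R₀` with `h'(r) > 0` for all `r > R₁`. -/
theorem stmt12 (t : ℝ) (ht : 1 < t) (hplus : ℝ)
    (hplus_def : hplus = (3 + Real.sqrt (9 + 8 * t)) / 4)
    (R₀ : ℝ) (hR₀ : 0 < R₀)
    (h : ℝ → ℝ) (hC2 : ContDiffOn ℝ 2 h (Set.Ioi 0))
    (hode : ∀ r : ℝ, 0 < r →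
      deriv (deriv h) r + (2 / r) * deriv h r - 6 * h r / r ^ 2
        = -h r + (h r) ^ 3 + (3 * hplus / t) * ((h r) ^ 3 - (h r) ^ 2))
    (hrange : ∀ r : ℝ, 0 < r → 0 ≤ h r ∧ h r ≤ 1)
    (hhalf : ∀ r : ℝ, R₀ ≤ r → 1 / 2 < h r)
    (hlim : Filter.Tendsto h Filter.atTop (nhds 1)) :
    ∃ R₁ : ℝ, R₀ ≤ R₁ ∧ ∀ r : ℝ, R₁ < r → 0 < deriv h r := by
  have hk : 0 < 3 * hplus / t := by
    have : 0 < hplus := by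
      rw [hplus_def]
      have := Real.sqrt_nonneg (9 + 8 * t)
      linarith
    have : 0 < t := by linarith
    positivity
  have hd : ∀ r, 0 < r → HasDerivAt h (deriv h r) r := fun r hr =>
    ((hC2.differentiableOn (by norm_num)).differentiableAt (Ioi_mem_nhds hr)).hasDerivAt
  have hd2 : ∀ r, 0 < r → HasDerivAt (deriv h) (deriv (deriv h) r) r := by
    have h1 : ContDiffOn ℝ 1 (deriv h) (Ioi 0) :=
      hC2.deriv_of_isOpen isOpen_Ioi (by norm_num)
    exact fun r hr =>
      ((h1.differentiableOn (by norm_num)).differentiableAt (Ioi_mem_nhds hr)).hasDerivAt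
  have hode' : ∀ r, 0 < r →
      deriv (deriv h) r + (2 / r) * deriv h r = h r * potential (3 * hplus / t) h r := by
    intro r hr
    have h1 := hode r hr
    have h2 : 6 * h r / r ^ 2 = h r * (6 / r ^ 2) := by ring
    rw [h2] at h1
    simp only [potential]
    linear_combination h1
  obtain ⟨b, hRb, hb⟩ := exists_deriv_pos hR₀ hd hode' (fun r hr => (hrange r hr).2) hlim
  refine ⟨b, hRb, fun e hbe => ?_⟩
  by_contra! he
  have hb0 : 0 < b := hR₀.trans_le hRb
  have hcont : ContinuousOn (deriv h) (Icc b e) := fun x hx =>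
    (hd2 x (hb0.trans_le hx.1)).continuousAt.continuousWithinAt
  -- `c` is the first point after `b` where `h'` is nonpositive
  have hcomp : IsCompact (Icc b e ∩ deriv h ⁻¹' Iic 0) :=
    isCompact_Icc.of_isClosed_subset (hcont.preimage_isClosed_of_isClosed isClosed_Icc isClosed_Iic)
      inter_subset_left
  obtain ⟨c, ⟨hc, hc0⟩, hleast⟩ := hcomp.exists_isLeast ⟨e, ⟨hbe.le, le_rfl⟩, he⟩
  have hc0 : deriv h c ≤ 0 := hc0
  have hbc : b < c := lt_of_le_of_ne hc.1 fun h1 => by subst h1; linarith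
  have hcpos : 0 < c := hb0.trans hbc
  have hG := potential_pos hk hd hd2 hode' hcpos
    (fun r hr => hhalf r (hRb.trans (hbc.le.trans hr))) (hrange c hcpos).2 hlim hc0
  have hdd : 0 < deriv (deriv h) c := by
    have h1 := hode' c hcpos
    have h2 : 0 < h c := by linarith [hhalf c (hRb.trans hbc.le)]
    have h3 := mul_pos h2 hG
    have h4 : 2 / c * deriv h c ≤ 0 := mul_nonpos_of_nonneg_of_nonpos (by positivity) hc0
    linarith
  obtain ⟨x, hx, hxb⟩ :=
    ((eventually_left_lt (hd2 c hcpos) hdd).and (Ioo_mem_nhdsLT hbc)).exists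
  have := hleast ⟨⟨hxb.1.le, hxb.2.le.trans hc.2⟩, hx.le.trans hc0⟩
  exact absurd hxb.2 (not_lt.2 this)
end

section
/- Let t > 1, h₊ = (3 + √(9 + 8t))/4, let α ≥ β > 0 and R₀ > 0, and let h : (0,∞) → ℝ be a twice continuously differentiable solution of the radial-hedgehog ODE h''(r) + (2/r)h'(r) − 6h(r)/r² = −h(r) + h(r)³ + (3h₊/t)(h(r)³ − h(r)²) such that h'(r) ≥ 0 and 1 − α/r² ≤ h(r) ≤ 1 − β/r² for all r ≥ R₀. Then lim_{r→∞} r² h'(r) = 0. -/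
/-!
Put `u = 1 - h`, `v = r² u`, `g = r² h'`, `c = 3 h₊ / t`, `m = 2 + c > 0` and `k = √m`. Multiplying
the ODE by `r²` gives `g' = 6 - m v + e₁`, while `v' = -g + e₂`, with
`e₁ = -6u + v u ((3 + 2c) - (1 + c) u)` and `e₂ = 2 v / r`. The sandwich bounds make `v` bounded and
`u → 0`, hence `e₁, e₂ → 0`. With `y = v - 6 / m` this is, up to vanishing errors, the linear system
`g' = -m y`, `y' = -g`, which is diagonalised by `P = g + k y` and `Q = g - k y`:
`P' = -k P + o(1)` and `Q' = k Q + o(1)`. The first equation forces `P → 0`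
(`tendsto_zero_of_stable`). Since `y` is bounded, so is `Q = P - 2 k y`, and a bounded solution of
the second equation tends to `0` (`tendsto_zero_of_unstable`). Therefore `g = (P + Q) / 2 → 0`.
-/

open Filter Topology

/-- `exp (k r) (P r - ε)` is nonincreasing once the forcing term is at most `k ε`, so `P` is
eventually below `2 ε`. -/
lemma eventually_lt_of_stable {k : ℝ} (hk : 0 < k) {P e : ℝ → ℝ}
    (hP : ∀ r, 0 < r → HasDerivAt P (-k * P r + e r) r)
    (he : Tendsto e atTop (𝓝 0)) {ε : ℝ} (hε : 0 < ε) : ∀ᶠ r in atTop, P r < 2 * ε := by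
  obtain ⟨R₁, hR₁⟩ := eventually_atTop.1 (he.eventually_lt_const (mul_pos hk hε))
  set R := max R₁ 1
  have hR1 : R₁ ≤ R := le_max_left _ _
  have hR0 : 0 < R := lt_of_lt_of_le one_pos (le_max_right _ _)
  have hd : ∀ r, R ≤ r → HasDerivAt (fun s => Real.exp (k * s) * (P s - ε))
      (Real.exp (k * r) * (e r - k * ε)) r := by
    intro r hr
    have h1 : HasDerivAt (fun s => Real.exp (k * s)) (Real.exp (k * r) * (k * 1)) r :=
      ((hasDerivAt_id r).const_mul k).exp
    refine (h1.mul ((hP r (hR0.trans_le hr)).sub_const ε)).congr_deriv ?_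
    ring
  have hanti : AntitoneOn (fun s => Real.exp (k * s) * (P s - ε)) (Set.Ici R) := by
    apply antitoneOn_of_deriv_nonpos (convex_Ici R)
    · exact fun r hr => (hd r hr).continuousAt.continuousWithinAt
    · intro r hr
      exact (hd r (interior_subset hr)).differentiableAt.differentiableWithinAt
    · intro r hr
      have hr' : R ≤ r := interior_subset hr
      rw [(hd r hr').deriv]
      exact mul_nonpos_of_nonneg_of_nonpos (Real.exp_pos _).le
        (by linarith [hR₁ r (hR1.trans hr')])
  have hexp : Tendsto (fun r => Real.exp (k * r) * ε) atTop atTop :=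
    (Real.tendsto_exp_atTop.comp (tendsto_id.const_mul_atTop hk)).atTop_mul_const hε
  filter_upwards [hexp.eventually_gt_atTop (Real.exp (k * R) * (P R - ε)),
    eventually_ge_atTop R] with r h1 h2
  have h3 : Real.exp (k * r) * (P r - ε) ≤ Real.exp (k * R) * (P R - ε) :=
    hanti Set.self_mem_Ici h2 h2
  have h4 := lt_of_mul_lt_mul_left (h3.trans_lt h1) (Real.exp_pos _).le
  linarith

lemma tendsto_zero_of_eventually_bounds {P : ℝ → ℝ}
    (h1 : ∀ ε > 0, ∀ᶠ r in atTop, P r < 2 * ε)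
    (h2 : ∀ ε > 0, ∀ᶠ r in atTop, -P r < 2 * ε) : Tendsto P atTop (𝓝 0) := by
  rw [Metric.tendsto_nhds]
  intro ε hε
  filter_upwards [h1 (ε / 2) (half_pos hε), h2 (ε / 2) (half_pos hε)] with r h3 h4
  rw [Real.dist_eq, sub_zero, abs_lt]
  constructor <;> linarith

lemma tendsto_zero_of_stable {k : ℝ} (hk : 0 < k) {P e : ℝ → ℝ}
    (hP : ∀ r, 0 < r → HasDerivAt P (-k * P r + e r) r)
    (he : Tendsto e atTop (𝓝 0)) : Tendsto P atTop (𝓝 0) := by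
  refine tendsto_zero_of_eventually_bounds
    (fun ε hε => eventually_lt_of_stable hk hP he hε)
    (fun ε hε => eventually_lt_of_stable (P := fun r => -P r) (e := fun r => -e r) hk
      (fun r hr => ((hP r hr).neg).congr_deriv (by ring)) (by simpa using he.neg) hε)

/-- `exp (-k r) (Q r + ε)` is eventually nonincreasing and, `Q` being bounded, tends to `0`; hence it
is eventually nonnegative. -/
lemma eventually_neg_lt_of_unstable {k : ℝ} (hk : 0 < k) {Q e : ℝ → ℝ}
    (hQ : ∀ r, 0 < r → HasDerivAt Q (k * Q r + e r) r)
    (he : Tendsto e atTop (𝓝 0)) {M : ℝ} (hM : ∀ᶠ r in atTop, |Q r| ≤ M)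
    {ε : ℝ} (hε : 0 < ε) : ∀ᶠ r in atTop, -Q r < 2 * ε := by
  obtain ⟨R₁, hR₁⟩ := eventually_atTop.1 (he.eventually_lt_const (mul_pos hk hε))
  set R := max R₁ 1
  have hR1 : R₁ ≤ R := le_max_left _ _
  have hR0 : 0 < R := lt_of_lt_of_le one_pos (le_max_right _ _)
  have hd : ∀ r, R ≤ r → HasDerivAt (fun s => Real.exp (-k * s) * (Q s + ε))
      (Real.exp (-k * r) * (e r - k * ε)) r := by
    intro r hr
    have h1 : HasDerivAt (fun s => Real.exp (-k * s)) (Real.exp (-k * r) * (-k * 1)) r :=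
      ((hasDerivAt_id r).const_mul (-k)).exp
    refine (h1.mul ((hQ r (hR0.trans_le hr)).add_const ε)).congr_deriv ?_
    ring
  have hanti : AntitoneOn (fun s => Real.exp (-k * s) * (Q s + ε)) (Set.Ici R) := by
    apply antitoneOn_of_deriv_nonpos (convex_Ici R)
    · exact fun r hr => (hd r hr).continuousAt.continuousWithinAt
    · intro r hr
      exact (hd r (interior_subset hr)).differentiableAt.differentiableWithinAt
    · intro r hr
      have hr' : R ≤ r := interior_subset hr
      rw [(hd r hr').deriv]
      exact mul_nonpos_of_nonneg_of_nonpos (Real.exp_pos _).le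
        (by linarith [hR₁ r (hR1.trans hr')])
  have hexp : Tendsto (fun r => Real.exp (-k * r)) atTop (𝓝 0) :=
    Real.tendsto_exp_atBot.comp (tendsto_id.const_mul_atTop_of_neg (neg_lt_zero.2 hk))
  have hlim : Tendsto (fun s => Real.exp (-k * s) * (Q s + ε)) atTop (𝓝 0) := by
    refine squeeze_zero_norm' (a := fun r => Real.exp (-k * r) * (M + ε)) ?_
      (by simpa using hexp.mul_const (M + ε))
    filter_upwards [hM] with r hr
    rw [norm_mul, Real.norm_eq_abs, Real.norm_eq_abs, abs_of_pos (Real.exp_pos _)]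
    refine mul_le_mul_of_nonneg_left ?_ (Real.exp_pos _).le
    calc |Q r + ε| ≤ |Q r| + |ε| := abs_add_le _ _
      _ ≤ M + ε := by rw [abs_of_pos hε]; linarith
  filter_upwards [eventually_ge_atTop R] with r hr
  have h0 : 0 ≤ Real.exp (-k * r) * (Q r + ε) := by
    refine le_of_tendsto hlim ?_
    filter_upwards [eventually_ge_atTop r] with s hs
    exact hanti hr (hr.trans hs) hs
  have := nonneg_of_mul_nonneg_right h0 (Real.exp_pos _)
  linarith

lemma tendsto_zero_of_unstable {k : ℝ} (hk : 0 < k) {Q e : ℝ → ℝ}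
    (hQ : ∀ r, 0 < r → HasDerivAt Q (k * Q r + e r) r)
    (he : Tendsto e atTop (𝓝 0)) {M : ℝ} (hM : ∀ᶠ r in atTop, |Q r| ≤ M) :
    Tendsto Q atTop (𝓝 0) := by
  refine tendsto_zero_of_eventually_bounds (fun ε hε => ?_)
    (fun ε hε => eventually_neg_lt_of_unstable hk hQ he hM hε)
  have := eventually_neg_lt_of_unstable (Q := fun r => -Q r) (e := fun r => -e r) hk
    (fun r hr => ((hQ r hr).neg).congr_deriv (by ring)) (by simpa using he.neg)
    (by simpa using hM) hε
  simpa using this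

/-- A nondecreasing `C²` solution of the radial-hedgehog ODE satisfying
the sandwich bounds `1 − α/r² ≤ h(r) ≤ 1 − β/r²` for `r ≥ R₀` satisfies
`r²h'(r) → 0` as `r → ∞`. -/
theorem stmt14 (t : ℝ) (ht : 1 < t) (hplus : ℝ)
    (hplus_def : hplus = (3 + Real.sqrt (9 + 8 * t)) / 4)
    (α β R₀ : ℝ) (hβ : 0 < β) (hαβ : β ≤ α) (hR₀ : 0 < R₀)
    (h : ℝ → ℝ) (hC2 : ContDiffOn ℝ 2 h (Set.Ioi 0))
    (hode : ∀ r : ℝ, 0 < r →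
      deriv (deriv h) r + (2 / r) * deriv h r - 6 * h r / r ^ 2
        = -h r + (h r) ^ 3 + (3 * hplus / t) * ((h r) ^ 3 - (h r) ^ 2))
    (hmono : ∀ r : ℝ, 0 < r → 0 ≤ deriv h r)
    (hsandwich : ∀ r : ℝ, R₀ ≤ r →
      1 - α / r ^ 2 ≤ h r ∧ h r ≤ 1 - β / r ^ 2) :
    Filter.Tendsto (fun r => r ^ 2 * deriv h r) Filter.atTop (nhds 0) := by
  have hc : 0 < 3 * hplus / t := by rw [hplus_def]; positivity
  generalize 3 * hplus / t = c at hode hc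
  have hm : 0 < 2 + c := by linarith
  obtain ⟨k, hk, hkm⟩ : ∃ k : ℝ, 0 < k ∧ k ^ 2 = 2 + c :=
    ⟨√(2 + c), Real.sqrt_pos.2 hm, Real.sq_sqrt hm.le⟩
  have hd1 : ∀ r, 0 < r → HasDerivAt h (deriv h r) r := fun r hr =>
    ((hC2.differentiableOn (by norm_num)).differentiableAt (Ioi_mem_nhds hr)).hasDerivAt
  have hd2 : ∀ r, 0 < r → HasDerivAt (deriv h) (deriv (deriv h) r) r := fun r hr =>
    (((hC2.deriv_of_isOpen (m := 1) isOpen_Ioi (by norm_num)).differentiableOn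
      (by norm_num)).differentiableAt (Ioi_mem_nhds hr)).hasDerivAt
  have hvb : ∀ r, R₀ ≤ r → 0 ≤ r ^ 2 * (1 - h r) ∧ r ^ 2 * (1 - h r) ≤ α := by
    intro r hr
    have hr2 : 0 < r ^ 2 := pow_pos (hR₀.trans_le hr) 2
    obtain ⟨h1, h2⟩ := hsandwich r hr
    have h3 : 0 < β / r ^ 2 := div_pos hβ hr2
    constructor
    · exact mul_nonneg hr2.le (by linarith)
    · have : 1 - h r ≤ α / r ^ 2 := by linarith
      rw [le_div_iff₀ hr2] at this
      linarith
  have hvr : Tendsto (fun r => r ^ 2 * (1 - h r) / r) atTop (𝓝 0) := by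
    refine squeeze_zero' (g := fun r => α / r) ?_ ?_ (tendsto_const_nhds.div_atTop tendsto_id)
    · filter_upwards [eventually_ge_atTop R₀] with r hr
      exact div_nonneg (hvb r hr).1 (hR₀.trans_le hr).le
    · filter_upwards [eventually_ge_atTop R₀] with r hr
      exact div_le_div_of_nonneg_right (hvb r hr).2 (hR₀.trans_le hr).le
  have hu : Tendsto (fun r => 1 - h r) atTop (𝓝 0) := by
    have := hvr.mul tendsto_inv_atTop_zero
    rw [zero_mul] at this
    refine this.congr' ?_
    filter_upwards [eventually_gt_atTop 0] with r hr
    field_simp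
  have hvu : Tendsto (fun r => r ^ 2 * (1 - h r) * (1 - h r)) atTop (𝓝 0) := by
    -- `v u = (v / r) ^ 2`
    have := hvr.mul hvr
    rw [zero_mul] at this
    refine this.congr' ?_
    filter_upwards [eventually_gt_atTop 0] with r hr
    field_simp
  set e₁ : ℝ → ℝ := fun r =>
    -6 * (1 - h r) + r ^ 2 * (1 - h r) * (1 - h r) * ((3 + 2 * c) - (1 + c) * (1 - h r)) with he₁
  set e₂ : ℝ → ℝ := fun r => 2 * (r ^ 2 * (1 - h r) / r) with he₂
  have hl1 : Tendsto e₁ atTop (𝓝 0) := by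
    simpa [he₁] using (hu.const_mul (-6)).add
      (hvu.mul ((tendsto_const_nhds (x := 3 + 2 * c)).sub (hu.const_mul (1 + c))))
  have hl2 : Tendsto e₂ atTop (𝓝 0) := by simpa using hvr.const_mul 2
  have hg : ∀ r, 0 < r → HasDerivAt (fun s => s ^ 2 * deriv h s)
      (6 - k ^ 2 * (r ^ 2 * (1 - h r)) + e₁ r) r := by
    intro r hr
    refine ((hasDerivAt_pow 2 r).mul (hd2 r hr)).congr_deriv ?_
    have ho := hode r hr
    have ho2 : deriv (deriv h) r = -(2 / r) * deriv h r + 6 * h r / r ^ 2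
        + (-h r + (h r) ^ 3 + c * ((h r) ^ 3 - (h r) ^ 2)) := by linarith
    rw [ho2, hkm, he₁]
    field_simp
    push_cast
    ring
  have hy : ∀ r, 0 < r → HasDerivAt (fun s => s ^ 2 * (1 - h s) - 6 / k ^ 2)
      (-(r ^ 2 * deriv h r) + e₂ r) r := by
    intro r hr
    refine (((hasDerivAt_pow 2 r).mul ((hd1 r hr).const_sub 1)).sub_const _).congr_deriv ?_
    rw [he₂]
    field_simp
    push_cast
    ring
  have hP : Tendsto (fun s => s ^ 2 * deriv h s + k * (s ^ 2 * (1 - h s) - 6 / k ^ 2))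
      atTop (𝓝 0) := by
    refine tendsto_zero_of_stable (e := fun r => e₁ r + k * e₂ r) hk (fun r hr => ?_)
      (by simpa using hl1.add (hl2.const_mul k))
    refine ((hg r hr).add ((hy r hr).const_mul k)).congr_deriv ?_
    field_simp
    ring
  have hQ : Tendsto (fun s => s ^ 2 * deriv h s - k * (s ^ 2 * (1 - h s) - 6 / k ^ 2))
      atTop (𝓝 0) := by
    refine tendsto_zero_of_unstable (e := fun r => e₁ r - k * e₂ r)
      (M := 1 + 2 * k * (α + 6 / k ^ 2)) hk (fun r hr => ?_)
      (by simpa using hl1.sub (hl2.const_mul k)) ?_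
    · refine ((hg r hr).sub ((hy r hr).const_mul k)).congr_deriv ?_
      field_simp
      ring
    · have hP1 := hP.abs
      rw [abs_zero] at hP1
      filter_upwards [hP1.eventually_lt_const one_pos, eventually_ge_atTop R₀] with r h1 hr
      obtain ⟨h2, h3⟩ := hvb r hr
      have h6 : 0 < 6 / k ^ 2 := by positivity
      have hyb : |r ^ 2 * (1 - h r) - 6 / k ^ 2| ≤ α + 6 / k ^ 2 := by
        rw [abs_le]; constructor <;> linarith
      have hky : |2 * k * (r ^ 2 * (1 - h r) - 6 / k ^ 2)| ≤ 2 * k * (α + 6 / k ^ 2) := by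
        rw [abs_mul, abs_of_pos (by positivity : 0 < 2 * k)]
        exact mul_le_mul_of_nonneg_left hyb (by positivity)
      rw [abs_lt] at h1
      rw [abs_le] at hky ⊢
      constructor <;> linarith [h1.1, h1.2, hky.1, hky.2]
  have hfin := (hP.add hQ).div_const 2
  rw [add_zero, zero_div] at hfin
  refine hfin.congr (fun r => ?_)
  ring
end

section
/- Let t > 1, h₊ = (3 + √(9 + 8t))/4, and let h : (0,∞) → ℝ be a twice continuously differentiable solution of the radial-hedgehog ODE h''(r) + (2/r)h'(r) − 6h(r)/r² = −h(r) + h(r)³ + (3h₊/t)(h(r)³ − h(r)²) with 0 ≤ h(r) ≤ 1 for all r > 0, h(r) → 1 as r → ∞, and r²h'(r) → 0 as r → ∞. Then: (i) lim_{r→∞} r²(1 − h(r))(1 + (1 + 3h₊/t)h(r)) = 6; (ii) lim_{r→∞} r² h''(r) = 0; and consequently (iii) lim_{r→∞} r²(1 − h(r)) = 6/(2 + 3h₊/t), i.e. h(r) = 1 − 6/(r²(2 + 3h₊/t)) + o(1/r²) as r → ∞. -/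
/-!
Write `u = 1 - h`, `w = r² u`, `c = 1 + 3h₊/t`. Since `h → 1` and `r² h' → 0`, L'Hôpital's rule
gives `r u → 0`, hence `w' = 2 r u - r² h' → 0`. The ODE turns into `w'' = a w - b` with
`a = h (1 + c h) → 1 + c > 0` and `b = 6 h - 2 (1 - h) + 2 r h' → 6`.

These facts force `w → 6 / (1 + c)` (`tendsto_of_deriv_tendsto_zero`): by the mean value
theorem there is `s ∈ (r, r + 1)` with `w''(s) = w'(r + 1) - w'(r) → 0`, so that `w(s) → 6 / (1 + c)`,
while `w(s) - w(r) → 0` because `w' → 0`. This is (iii); multiplying by `1 + c h → 1 + c` gives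
(i), and solving the ODE for `r² h''` gives (ii).
-/

open Filter Topology Set

/-- A solution of `w'' = a w - b` with `a → A > 0`, `b → B` and `w' → 0` at infinity converges to
the equilibrium `B / A`; no boundedness of `w` is assumed. -/
lemma tendsto_of_deriv_tendsto_zero {w w' a b : ℝ → ℝ} {A B : ℝ} (hA : 0 < A)
    (hw : ∀ r, 0 < r → HasDerivAt w (w' r) r)
    (hw' : ∀ r, 0 < r → HasDerivAt w' (a r * w r - b r) r)
    (ha : Tendsto a atTop (𝓝 A)) (hb : Tendsto b atTop (𝓝 B))
    (h0 : Tendsto w' atTop (𝓝 0)) : Tendsto w atTop (𝓝 (B / A)) := by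
  have ex1 : ∀ r : ℝ, ∃ s, r < s ∧ s < r + 1 ∧
      (0 < r → a s * w s - b s = w' (r + 1) - w' r) := by
    intro r
    by_cases hr : 0 < r
    · obtain ⟨s, hs, hs'⟩ := exists_hasDerivAt_eq_slope w' (fun s => a s * w s - b s)
        (show r < r + 1 by linarith)
        (fun x hx => (hw' x (hr.trans_le hx.1)).continuousAt.continuousWithinAt)
        (fun x hx => hw' x (hr.trans hx.1))
      exact ⟨s, hs.1, hs.2, fun _ => by simpa using hs'⟩
    · exact ⟨r + 1 / 2, by linarith, by linarith, fun h => absurd h hr⟩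
  choose s hs1 hs2 hs using ex1
  have ex2 : ∀ r : ℝ, ∃ x, r < x ∧ (0 < r → w (s r) - w r = w' x * (s r - r)) := by
    intro r
    by_cases hr : 0 < r
    · obtain ⟨x, hx, hx'⟩ := exists_hasDerivAt_eq_slope w w' (hs1 r)
        (fun x hx => (hw x (hr.trans_le hx.1)).continuousAt.continuousWithinAt)
        (fun x hx => hw x (hr.trans hx.1))
      refine ⟨x, hx.1, fun _ => ?_⟩
      rw [hx', div_mul_cancel₀ _ (sub_pos.2 (hs1 r)).ne']
    · exact ⟨r + 1, by linarith, fun h => absurd h hr⟩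
  choose x hx1 hx using ex2
  have hsT : Tendsto s atTop atTop := tendsto_atTop_mono (fun r => (hs1 r).le) tendsto_id
  have hxT : Tendsto x atTop atTop := tendsto_atTop_mono (fun r => (hx1 r).le) tendsto_id
  have haw : Tendsto (fun r => a (s r) * w (s r) - b (s r)) atTop (𝓝 0) := by
    have h1 : Tendsto (fun r => w' (r + 1) - w' r) atTop (𝓝 0) := by
      simpa using (h0.comp (tendsto_atTop_add_const_right atTop 1 tendsto_id)).sub h0
    refine h1.congr' ?_
    filter_upwards [eventually_gt_atTop 0] with r hr using (hs r hr).symm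
  have hws : Tendsto (fun r => w (s r)) atTop (𝓝 (B / A)) := by
    have h1 := (haw.add (hb.comp hsT)).div (ha.comp hsT) hA.ne'
    rw [zero_add] at h1
    refine h1.congr' ?_
    filter_upwards [(ha.comp hsT).eventually (lt_mem_nhds hA)] with r hr
    have hr' : a (s r) ≠ 0 := ne_of_gt hr
    simp only [Pi.div_apply, Function.comp_apply]
    field_simp
    ring
  have hdiff : Tendsto (fun r => w' (x r) * (s r - r)) atTop (𝓝 0) := by
    refine squeeze_zero_norm (fun r => ?_) (by simpa using (h0.comp hxT).norm)
    rw [norm_mul]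
    refine mul_le_of_le_one_right (norm_nonneg _) ?_
    rw [Real.norm_eq_abs, abs_le]
    constructor <;> linarith [hs1 r, hs2 r]
  have h2 := hws.sub hdiff
  rw [sub_zero] at h2
  refine h2.congr' ?_
  filter_upwards [eventually_gt_atTop 0] with r hr
  rw [← hx r hr]
  ring

/-- Far-field expansion of the radial-hedgehog profile: if `0 ≤ h ≤ 1`,
`h(r) → 1`, and `r²h'(r) → 0` as `r → ∞`, then
(i) `r²(1 − h)(1 + (1 + 3h₊/t)h) → 6`, (ii) `r²h''(r) → 0`, and
(iii) `r²(1 − h) → 6/(2 + 3h₊/t)`, i.e. `h(r) = 1 − 6/(r²(2 + 3h₊/t)) + o(1/r²)`. -/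
theorem stmt15 (t : ℝ) (ht : 1 < t) (hplus : ℝ)
    (hplus_def : hplus = (3 + Real.sqrt (9 + 8 * t)) / 4)
    (h : ℝ → ℝ) (hC2 : ContDiffOn ℝ 2 h (Set.Ioi 0))
    (hode : ∀ r : ℝ, 0 < r →
      deriv (deriv h) r + (2 / r) * deriv h r - 6 * h r / r ^ 2
        = -h r + (h r) ^ 3 + (3 * hplus / t) * ((h r) ^ 3 - (h r) ^ 2))
    (hrange : ∀ r : ℝ, 0 < r → 0 ≤ h r ∧ h r ≤ 1)
    (hlim : Filter.Tendsto h Filter.atTop (nhds 1))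
    (hd : Filter.Tendsto (fun r => r ^ 2 * deriv h r) Filter.atTop (nhds 0)) :
    Filter.Tendsto (fun r => r ^ 2 * (1 - h r) * (1 + (1 + 3 * hplus / t) * h r))
        Filter.atTop (nhds 6) ∧
    Filter.Tendsto (fun r => r ^ 2 * deriv (deriv h) r) Filter.atTop (nhds 0) ∧
    Filter.Tendsto (fun r => r ^ 2 * (1 - h r)) Filter.atTop
        (nhds (6 / (2 + 3 * hplus / t))) := by
  have hk : 0 < 3 * hplus / t := by
    have := Real.sqrt_nonneg (9 + 8 * t)
    have : 0 < hplus := by rw [hplus_def]; positivity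
    positivity
  set k := 3 * hplus / t with hk_def
  have hA : 0 < 2 + k := by linarith
  have d1 : ∀ r, 0 < r → HasDerivAt h (deriv h r) r := fun r hr =>
    ((hC2.differentiableOn (by norm_num)).differentiableAt (Ioi_mem_nhds hr)).hasDerivAt
  have d2 : ∀ r, 0 < r → HasDerivAt (deriv h) (deriv (deriv h) r) r := fun r hr =>
    (((hC2.deriv_of_isOpen (m := 1) isOpen_Ioi (by norm_num)).differentiableOn
      (by norm_num)).differentiableAt (Ioi_mem_nhds hr)).hasDerivAt
  have hrd : Tendsto (fun r => r * deriv h r) atTop (𝓝 0) := by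
    have h1 := hd.mul tendsto_inv_atTop_zero
    rw [zero_mul] at h1
    refine h1.congr' ?_
    filter_upwards [eventually_gt_atTop 0] with r hr
    field_simp
  have hu : Tendsto (fun r => 1 - h r) atTop (𝓝 0) := by
    simpa using hlim.const_sub 1
  -- L'Hôpital for `(1 - h) / r⁻¹`: the ratio of derivatives is `r² h'`.
  have hru : Tendsto (fun r => r * (1 - h r)) atTop (𝓝 0) := by
    have h1 : Tendsto (fun r => (1 - h r) / r⁻¹) atTop (𝓝 0) := by
      refine HasDerivAt.lhopital_zero_atTop (f' := fun r => -deriv h r)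
        (g' := fun r => -(r ^ 2)⁻¹) ?_ ?_ ?_ hu tendsto_inv_atTop_zero ?_
      · filter_upwards [eventually_gt_atTop 0] with r hr using (d1 r hr).const_sub 1
      · filter_upwards [eventually_gt_atTop 0] with r hr using hasDerivAt_inv hr.ne'
      · filter_upwards [eventually_gt_atTop 0] with r hr
        have : 0 < (r ^ 2)⁻¹ := by positivity
        linarith
      · refine hd.congr fun r => ?_
        rw [neg_div_neg_eq, div_inv_eq_mul, mul_comm]
    refine h1.congr fun r => ?_
    rw [div_inv_eq_mul, mul_comm]
  have hode' : ∀ r, 0 < r → r ^ 2 * deriv (deriv h) r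
      = 6 * h r - 2 * (r * deriv h r)
        - h r * (r ^ 2 * (1 - h r) * (1 + (1 + k) * h r)) := by
    intro r hr
    have h1 := hode r hr
    have h2 : deriv (deriv h) r = 6 * h r / r ^ 2 - (2 / r) * deriv h r
        + (-h r + (h r) ^ 3 + k * ((h r) ^ 3 - (h r) ^ 2)) := by linarith
    rw [h2]
    field_simp
    ring
  have hfac : Tendsto (fun r => 1 + (1 + k) * h r) atTop (𝓝 (2 + k)) := by
    have h1 := (hlim.const_mul (1 + k)).const_add 1
    rwa [show 1 + (1 + k) * 1 = 2 + k by ring] at h1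
  have iii : Tendsto (fun r => r ^ 2 * (1 - h r)) atTop (𝓝 (6 / (2 + k))) := by
    refine tendsto_of_deriv_tendsto_zero
      (w' := fun r => 2 * (r * (1 - h r)) - r ^ 2 * deriv h r)
      (a := fun r => h r * (1 + (1 + k) * h r))
      (b := fun r => 6 * h r - 2 * (1 - h r) + 2 * (r * deriv h r)) hA ?_ ?_ ?_ ?_ ?_
    · intro r hr
      refine ((hasDerivAt_pow 2 r).mul ((d1 r hr).const_sub 1)).congr_deriv ?_
      push_cast
      ring
    · intro r hr
      refine ((((hasDerivAt_id r).mul ((d1 r hr).const_sub 1)).const_mul 2).sub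
        ((hasDerivAt_pow 2 r).mul (d2 r hr))).congr_deriv ?_
      rw [hode' r hr]
      push_cast
      simp only [id]
      ring
    · simpa using hlim.mul hfac
    · simpa using ((hlim.const_mul 6).sub (hu.const_mul 2)).add (hrd.const_mul 2)
    · simpa using (hru.const_mul 2).sub hd
  have i : Tendsto (fun r => r ^ 2 * (1 - h r) * (1 + (1 + k) * h r)) atTop (𝓝 6) := by
    have h1 := iii.mul hfac
    rwa [div_mul_cancel₀ _ hA.ne'] at h1
  refine ⟨i, ?_, iii⟩
  have h1 := ((hlim.const_mul 6).sub (hrd.const_mul 2)).sub (hlim.mul i)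
  rw [show (6 : ℝ) * 1 - 2 * 0 - 1 * 6 = 0 by norm_num] at h1
  refine h1.congr' ?_
  filter_upwards [eventually_gt_atTop 0] with r hr using (hode' r hr).symm
end

section
/- Let t = 200, h₊ = (3 + √1609)/4, λ² = 24/(1609 + 3√1609) (so that tλ² = 4800/(1609 + 3√1609)), and define p : [0,10] → ℝ by p(r) = (1 − r/10)/(r² + 12)². Then ∫₀^{10} [ (r²/3)·p'(r)² − (r²/3)·p(r)² − (2√6 h₊/(9t))·r²·p(r)³ + (r² h₊²/(2t))·( (4/9)p(r)⁴ + (28/15)·(r²/(r² + tλ²))²·p(r)² ) ] dr < 0. -/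
/-!
On `[0, 10]` the integrand is bounded above by `majorant r / 100`, a rational function with rational
coefficients (`integrand_le_majorant`): the cubic term is nonpositive and is dropped; the quartic
term is absorbed into the `p²` term, because `p ≤ 1/144`; `h₊²/400 · 28/15` is at most `2711/5000`;
and `t λ² ≥ 111/40`. These simplifications use up only a small part of the margin, which is about
`7e-8` while the individual terms of the integral have size `1e-5`.

The majorant is then integrated exactly. Its partial fraction decomposition over the denominators
`r² + 12` and `r² + 111/40` gives the explicit antiderivative `primitive`. Comparing its values at
`10` and `0` leaves a combination of two arctangents and logarithms, to be bounded with a total error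
below `5e-6` (`primitive_lt`). The logarithms combine to one close to `-2 log 2`, and
the arctangents are handled through `arctan (10/s) = π/2 - arctan (s/10)` and the truncated series at `s/10`.
-/

namespace HedgehogEnergy

open Real Set

/-- One hundred times a rational upper bound of the integrand on `[0, 10]`. -/
noncomputable def majorant (r : ℝ) : ℝ :=
  r ^ 2 / 3 * (3 * r ^ 2 - 40 * r - 12) ^ 2 / (r ^ 2 + 12) ^ 6
    - 3333 / 10000 * r ^ 2 * (10 - r) ^ 2 / (r ^ 2 + 12) ^ 4
    + 2711 / 5000 * r ^ 6 * (10 - r) ^ 2 / ((r ^ 2 + 111 / 40) ^ 2 * (r ^ 2 + 12) ^ 4)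

/-- An antiderivative of `majorant`, obtained by partial fractions. -/
noncomputable def primitive (r : ℝ) : ℝ :=
  ((-21251869096007 / 109865587680000) * r + (-237526976 / 1144433205)) / (r ^ 2 + 12) ^ 1
      + ((-106002398087 / 111652020000) * r + (599087089 / 3721734000)) / (r ^ 2 + 12) ^ 2
      + ((-1007461673 / 113467500) * r + (-37948243 / 3782250)) / (r ^ 2 + 12) ^ 3
      + ((-908 / 15) * r + (-280)) / (r ^ 2 + 12) ^ 4
      + ((2816 / 5) * r + (1536)) / (r ^ 2 + 12) ^ 5
      + ((-14433475151 / 514994942250) * r + (-274640566 / 17166498075)) / (r ^ 2 + 111 / 40) ^ 1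
      + (-17328577096285783 / 40540401853920000) * (arctan (r / √12) / √12)
      + (13047553493707 / 63344377896750) * (arctan (r / √(111 / 40)) / √(111 / 40))
      + (30700361648 / 1266887557935) * (log (r ^ 2 + 12) - log (r ^ 2 + 111 / 40))

lemma hasDerivAt_arctan_div_sqrt {a : ℝ} (ha : 0 < a) (r : ℝ) :
    HasDerivAt (fun x => arctan (x / √a) / √a) (1 / (r ^ 2 + a)) r := by
  have hs : 0 < √a := Real.sqrt_pos.mpr ha
  have h := (((hasDerivAt_id r).div_const (√a)).arctan).div_const (√a)
  refine h.congr_deriv ?_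
  have h2 : √a ^ 2 = a := Real.sq_sqrt ha.le
  have h3 : 0 < r ^ 2 + a := by positivity
  rw [id, div_pow, h2]
  field_simp
  rw [h2]
  ring

lemma hasDerivAt_log_sq_add {a : ℝ} (ha : 0 < a) (r : ℝ) :
    HasDerivAt (fun x => log (x ^ 2 + a)) (2 * r / (r ^ 2 + a)) r := by
  have h := ((hasDerivAt_pow 2 r).add_const a).log (by positivity)
  refine h.congr_deriv ?_
  norm_num

lemma hasDerivAt_linear_div_pow {a : ℝ} (ha : 0 < a) (u v : ℝ) (n : ℕ) (r : ℝ) :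
    HasDerivAt (fun x => (u * x + v) / (x ^ 2 + a) ^ (n + 1))
      ((u * (r ^ 2 + a) - 2 * (n + 1) * r * (u * r + v)) / (r ^ 2 + a) ^ (n + 2)) r := by
  have h3 : 0 < r ^ 2 + a := by positivity
  have h := (((hasDerivAt_id r).const_mul u).add_const v).div
    (((hasDerivAt_pow 2 r).add_const a).pow (n + 1)) (by simp; positivity)
  refine h.congr_deriv ?_
  simp only [id, Pi.pow_apply, Nat.add_sub_cancel]
  push_cast
  field_simp
  ring

lemma hasDerivAt_primitive (r : ℝ) : HasDerivAt primitive (majorant r) r := by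
  have h12 : (0 : ℝ) < 12 := by norm_num
  have ha : (0 : ℝ) < 111 / 40 := by norm_num
  have hq : 0 < r ^ 2 + 12 := by positivity
  have hs : 0 < r ^ 2 + 111 / 40 := by positivity
  have h := ((((((((hasDerivAt_linear_div_pow h12 (-21251869096007 / 109865587680000) (-237526976 / 1144433205) 0 r).add
    (hasDerivAt_linear_div_pow h12 (-106002398087 / 111652020000) (599087089 / 3721734000) 1 r)).add
    (hasDerivAt_linear_div_pow h12 (-1007461673 / 113467500) (-37948243 / 3782250) 2 r)).add
    (hasDerivAt_linear_div_pow h12 (-908 / 15) (-280) 3 r)).add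
    (hasDerivAt_linear_div_pow h12 (2816 / 5) (1536) 4 r)).add
    (hasDerivAt_linear_div_pow ha (-14433475151 / 514994942250) (-274640566 / 17166498075) 0 r)).add
    ((hasDerivAt_arctan_div_sqrt h12 r).const_mul (-17328577096285783 / 40540401853920000))).add
    ((hasDerivAt_arctan_div_sqrt ha r).const_mul (13047553493707 / 63344377896750))).add
    (((hasDerivAt_log_sq_add h12 r).sub (hasDerivAt_log_sq_add ha r)).const_mul
      (30700361648 / 1266887557935))
  refine h.congr_deriv ?_
  rw [majorant]
  push_cast
  field_simp
  ring

lemma arctan_le {x : ℝ} (hx : 0 ≤ x) :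
    arctan x ≤ x - x ^ 3 / 3 + x ^ 5 / 5 - x ^ 7 / 7 + x ^ 9 / 9 := by
  have hd (y : ℝ) : HasDerivAt
      (fun x => x - x ^ 3 / 3 + x ^ 5 / 5 - x ^ 7 / 7 + x ^ 9 / 9 - arctan x)
      (y ^ 10 / (1 + y ^ 2)) y := by
    have h := ((((((hasDerivAt_id y).sub ((hasDerivAt_pow 3 y).div_const 3)).add
      ((hasDerivAt_pow 5 y).div_const 5)).sub ((hasDerivAt_pow 7 y).div_const 7)).add
      ((hasDerivAt_pow 9 y).div_const 9)).sub (hasDerivAt_arctan y))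
    refine h.congr_deriv ?_
    have : 0 < 1 + y ^ 2 := by positivity
    push_cast
    field_simp
    ring
  have hm := monotone_of_hasDerivAt_nonneg hd (fun y => by positivity)
  have := hm hx
  simp at this
  linarith

lemma le_arctan {x : ℝ} (hx : 0 ≤ x) :
    x - x ^ 3 / 3 + x ^ 5 / 5 - x ^ 7 / 7 ≤ arctan x := by
  have hd (y : ℝ) : HasDerivAt
      (fun x => arctan x - (x - x ^ 3 / 3 + x ^ 5 / 5 - x ^ 7 / 7))
      (y ^ 8 / (1 + y ^ 2)) y := by
    have h := (hasDerivAt_arctan y).sub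
      ((((hasDerivAt_id y).sub ((hasDerivAt_pow 3 y).div_const 3)).add
      ((hasDerivAt_pow 5 y).div_const 5)).sub ((hasDerivAt_pow 7 y).div_const 7))
    refine h.congr_deriv ?_
    have : 0 < 1 + y ^ 2 := by positivity
    push_cast
    field_simp
    ring
  have hm := monotone_of_hasDerivAt_nonneg hd (fun y => by positivity)
  have := hm hx
  simp at this
  linarith

lemma arctan_ten_div {s : ℝ} (hs : 0 < s) : arctan (10 / s) = π / 2 - arctan (s / 10) := by
  rw [← Real.arctan_inv_of_pos (by positivity), inv_div]

lemma le_arctan_sqrt_twelve : (0.357181 : ℝ) ≤ arctan (10 / √12) / √12 := by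
  have hs : 0 < √(12 : ℝ) := Real.sqrt_pos.mpr (by norm_num)
  have h2 : √(12 : ℝ) ^ 2 = 12 := Real.sq_sqrt (by norm_num)
  have hle : √(12 : ℝ) ≤ 3.464102 := Real.sqrt_le_iff.mpr (by norm_num)
  rw [arctan_ten_div hs, le_div_iff₀ hs]
  have h := arctan_le (x := √12 / 10) (by positivity)
  generalize √(12 : ℝ) = s at *
  -- the truncated series is `s` times a polynomial in `s ^ 2 = 12`
  have e : s / 10 - (s / 10) ^ 3 / 3 + (s / 10) ^ 5 / 5 - (s / 10) ^ 7 / 7 + (s / 10) ^ 9 / 9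
      = s * (1 / 10 - s ^ 2 / 3000 + (s ^ 2) ^ 2 / 500000 - (s ^ 2) ^ 3 / (7 * 10 ^ 7)
        + (s ^ 2) ^ 4 / (9 * 10 ^ 9)) := by
    ring
  rw [e, h2] at h
  have := pi_gt_d6
  norm_num at *
  linarith

lemma arctan_sqrt_le : arctan (10 / √(111 / 40)) / √(111 / 40) ≤ (0.84386 : ℝ) := by
  have hs : 0 < √(111 / 40 : ℝ) := Real.sqrt_pos.mpr (by norm_num)
  have h2 : √(111 / 40 : ℝ) ^ 2 = 111 / 40 := Real.sq_sqrt (by norm_num)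
  have hle : 1.665833 ≤ √(111 / 40 : ℝ) := Real.le_sqrt_of_sq_le (by norm_num)
  rw [arctan_ten_div hs, div_le_iff₀ hs]
  have h := le_arctan (x := √(111 / 40) / 10) (by positivity)
  generalize √(111 / 40 : ℝ) = s at *
  have e : s / 10 - (s / 10) ^ 3 / 3 + (s / 10) ^ 5 / 5 - (s / 10) ^ 7 / 7
      = s * (1 / 10 - s ^ 2 / 3000 + (s ^ 2) ^ 2 / 500000 - (s ^ 2) ^ 3 / (7 * 10 ^ 7)) := by
    ring
  rw [e, h2] at h
  have := pi_lt_d6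
  norm_num at *
  linarith

lemma log_combination_le :
    (log (10 ^ 2 + 12) - log (10 ^ 2 + 111 / 40)) - (log (0 ^ 2 + 12) - log (0 ^ 2 + 111 / 40))
      ≤ -2 * log 2 + 33 / 4111 := by
  have h1 : log ((10 : ℝ) ^ 2 + 12) - log (10 ^ 2 + 111 / 40)
      - (log (0 ^ 2 + 12) - log (0 ^ 2 + 111 / 40)) = log (4144 / 4111 / 2 ^ 2) := by
    rw [← log_div (by norm_num) (by norm_num), ← log_div (by norm_num) (by norm_num),
      ← log_div (by norm_num) (by norm_num)]
    norm_num
  rw [h1, log_div (by norm_num) (by norm_num), log_pow]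
  have := log_le_sub_one_of_pos (show (0 : ℝ) < 4144 / 4111 by norm_num)
  push_cast
  linarith

lemma primitive_lt : primitive 10 - primitive 0 < 0 := by
  have h1 := le_arctan_sqrt_twelve
  have h2 := arctan_sqrt_le
  have h3 := log_combination_le
  have h4 := log_two_gt_d9
  simp only [primitive, zero_div, arctan_zero]
  norm_num at *
  linarith

lemma continuous_majorant : Continuous majorant := by
  unfold majorant
  refine ((Continuous.div₀ (by fun_prop) (by fun_prop) fun r => by positivity).sub
    (Continuous.div₀ (by fun_prop) (by fun_prop) fun r => by positivity)).add
    (Continuous.div₀ (by fun_prop) (by fun_prop) fun r => by positivity)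

lemma integral_majorant_neg : ∫ r in (0 : ℝ)..10, majorant r / 100 < 0 := by
  rw [intervalIntegral.integral_div,
    intervalIntegral.integral_eq_sub_of_hasDerivAt (fun r _ => hasDerivAt_primitive r)
      (continuous_majorant.intervalIntegrable _ _)]
  linarith [primitive_lt]

lemma hasDerivAt_profile (r : ℝ) :
    HasDerivAt (fun r : ℝ => (1 - r / 10) / (r ^ 2 + 12) ^ 2)
      ((3 * r ^ 2 - 40 * r - 12) / (10 * (r ^ 2 + 12) ^ 3)) r := by
  have h := hasDerivAt_linear_div_pow (a := 12) (by norm_num) (-1 / 10) 1 1 r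
  convert h using 1
  · funext x
    ring
  · have : 0 < r ^ 2 + 12 := by positivity
    push_cast
    field_simp
    ring

/-- Pointwise comparison; `H`, `b` and `d` stand for `h₊`, `t λ²` and the (nonnegative) coefficient
of the cubic term. -/
lemma integrand_le_majorant {H b d r : ℝ} (hH0 : 0 ≤ H) (hH : H ≤ 10.7786) (hb : 111 / 40 ≤ b)
    (hd : 0 ≤ d) (h0 : 0 ≤ r) (h10 : r ≤ 10) :
    (r ^ 2 / 3) * ((3 * r ^ 2 - 40 * r - 12) / (10 * (r ^ 2 + 12) ^ 3)) ^ 2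
      - (r ^ 2 / 3) * ((1 - r / 10) / (r ^ 2 + 12) ^ 2) ^ 2
      - d * r ^ 2 * ((1 - r / 10) / (r ^ 2 + 12) ^ 2) ^ 3
      + (r ^ 2 * H ^ 2 / (2 * 200)) * ((4 / 9) * ((1 - r / 10) / (r ^ 2 + 12) ^ 2) ^ 4
        + (28 / 15) * (r ^ 2 / (r ^ 2 + b)) ^ 2 * ((1 - r / 10) / (r ^ 2 + 12) ^ 2) ^ 2)
      ≤ majorant r / 100 := by
  have hq : 0 < r ^ 2 + 12 := by positivity
  have hs : 0 < r ^ 2 + 111 / 40 := by positivity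
  obtain ⟨P, hP⟩ : ∃ P, P = (1 - r / 10) / (r ^ 2 + 12) ^ 2 := ⟨_, rfl⟩
  obtain ⟨w, hw⟩ : ∃ w, w = r ^ 2 / (r ^ 2 + 111 / 40) := ⟨_, rfl⟩
  have hM : majorant r / 100 =
      (r ^ 2 / 3) * ((3 * r ^ 2 - 40 * r - 12) / (10 * (r ^ 2 + 12) ^ 3)) ^ 2
        - 3333 / 10000 * (r ^ 2 * P ^ 2) + 2711 / 5000 * (w ^ 2 * (r ^ 2 * P ^ 2)) := by
    rw [hP, hw, majorant]
    field_simp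
    ring
  have hP0 : 0 ≤ P := by
    rw [hP]
    exact div_nonneg (by linarith) (by positivity)
  have hP1 : P ≤ 1 / 144 := by
    rw [hP]
    exact div_le_div₀ (by norm_num) (by linarith) (by norm_num) (by nlinarith [sq_nonneg r])
  have hH2 : H ^ 2 ≤ 116.1783 := by nlinarith
  have hwle : (r ^ 2 / (r ^ 2 + b)) ^ 2 ≤ w ^ 2 := by
    rw [hw]
    gcongr
  have hcube : 0 ≤ d * r ^ 2 * P ^ 3 := by positivity
  have hP2 : P ^ 2 ≤ (1 / 144) ^ 2 := by gcongr
  have hquart : r ^ 2 * H ^ 2 / (2 * 200) * (4 / 9 * P ^ 4) ≤ 1 / 30000 * (r ^ 2 * P ^ 2) := by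
    have : H ^ 2 * P ^ 2 ≤ 116.1783 * (1 / 144) ^ 2 := by gcongr
    have := mul_le_mul_of_nonneg_left this (show 0 ≤ r ^ 2 * P ^ 2 by positivity)
    have h' : 0 ≤ r ^ 2 * P ^ 2 := by positivity
    norm_num at this ⊢
    nlinarith
  have hmain : r ^ 2 * H ^ 2 / (2 * 200) * (28 / 15 * (r ^ 2 / (r ^ 2 + b)) ^ 2 * P ^ 2)
      ≤ 2711 / 5000 * (w ^ 2 * (r ^ 2 * P ^ 2)) := by
    calc _ = (28 / 6000 * H ^ 2) * ((r ^ 2 / (r ^ 2 + b)) ^ 2 * (r ^ 2 * P ^ 2)) := by ring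
      _ ≤ _ := by
        gcongr
        linarith
  rw [hM, ← hP]
  linarith

end HedgehogEnergy

open HedgehogEnergy in
/-- With `t = 200`, `h₊ = (3+√1609)/4`, `λ² = 24/(1609+3√1609)` and
`p(r) = (1 − r/10)/(r²+12)²`, the explicit one-dimensional energy-difference integral
over `[0,10]` is negative, so the biaxial perturbation lowers the Landau–de Gennes
energy of the radial hedgehog. -/
theorem stmt18 (t hplus lam2 : ℝ)
    (ht : t = 200)
    (hplus_def : hplus = (3 + Real.sqrt 1609) / 4)
    (hlam2 : lam2 = 24 / (1609 + 3 * Real.sqrt 1609))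
    (p : ℝ → ℝ)
    (hp : ∀ r : ℝ, p r = (1 - r / 10) / (r ^ 2 + 12) ^ 2) :
    (∫ r in (0 : ℝ)..10,
      ((r ^ 2 / 3) * (deriv p r) ^ 2 - (r ^ 2 / 3) * (p r) ^ 2
        - (2 * Real.sqrt 6 * hplus / (9 * t)) * r ^ 2 * (p r) ^ 3
        + (r ^ 2 * hplus ^ 2 / (2 * t)) *
          ((4 / 9) * (p r) ^ 4
            + (28 / 15) * (r ^ 2 / (r ^ 2 + t * lam2)) ^ 2 * (p r) ^ 2))) < 0 := by
  have hpf : p = fun r => (1 - r / 10) / (r ^ 2 + 12) ^ 2 := funext hp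
  have hderiv (r : ℝ) : deriv p r = (3 * r ^ 2 - 40 * r - 12) / (10 * (r ^ 2 + 12) ^ 3) := by
    rw [hpf]
    exact (hasDerivAt_profile r).deriv
  have hs0 : 0 ≤ Real.sqrt 1609 := Real.sqrt_nonneg _
  have hs1 : Real.sqrt 1609 ≤ 40.1124 := Real.sqrt_le_iff.mpr (by norm_num)
  have hH0 : 0 ≤ hplus := by rw [hplus_def]; positivity
  have hH : hplus ≤ 10.7786 := by rw [hplus_def]; linarith
  have hb : 111 / 40 ≤ t * lam2 := by
    rw [ht, hlam2, ← mul_div_assoc, le_div_iff₀ (by positivity)]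
    linarith
  have hd : 0 ≤ 2 * Real.sqrt 6 * hplus / (9 * t) := by rw [ht]; positivity
  simp only [hderiv, hp]
  refine lt_of_le_of_lt (intervalIntegral.integral_mono_on (by norm_num) ?_
    ((continuous_majorant.div_const 100).intervalIntegrable _ _) ?_) integral_majorant_neg
  · apply Continuous.intervalIntegrable
    have h1 : Continuous fun r : ℝ => (3 * r ^ 2 - 40 * r - 12) / (10 * (r ^ 2 + 12) ^ 3) :=
      Continuous.div₀ (by fun_prop) (by fun_prop) fun r => by positivity
    have h2 : Continuous fun r : ℝ => (1 - r / 10) / (r ^ 2 + 12) ^ 2 :=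
      Continuous.div₀ (by fun_prop) (by fun_prop) fun r => by positivity
    have h3 : Continuous fun r : ℝ => r ^ 2 / (r ^ 2 + t * lam2) :=
      Continuous.div₀ (by fun_prop) (by fun_prop) fun r => by positivity
    fun_prop
  · intro r hr
    have := integrand_le_majorant hH0 hH hb hd hr.1 hr.2
    rw [ht] at this ⊢
    exact this
end

section
/- Let t > 1, h₊ = (3 + √(9 + 8t))/4, and let R > 0 satisfy R² < (1/4)·1/(1 + 4√6·h₊/t). Let h* : [0,R] → [0,1] be continuous, twice continuously differentiable on (0,R], with h*(0) = 0, solving the radial-hedgehog ODE h''(r) + (2/r)h'(r) − 6h(r)/r² = −h(r) + h(r)³ + (3h₊/t)(h(r)³ − h(r)²) on (0,R], and set Q*(x) = √(3/2)·h*(|x|)·(x xᵀ/|x|² − (1/3)I). Let P be any continuously differentiable map from the closed ball B(0,R) ⊂ ℝ³ into the real symmetric traceless 3×3 matrices with P = 0 on the boundary sphere |x| = R and P not almost everywhere zero. Then the function g(ε) = ∫_{B(0,R)} [ (1/2)Σ_{i,j,k}(∂(Q* + εP)_{ij}/∂x_k)² − (1/2)tr((Q* + εP)²) − (√6 h₊/t)tr((Q*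 + εP)³) + (h₊²/(2t))(tr((Q* + εP)²))² ] dx satisfies g''(0) > 0; i.e., the radial-hedgehog solution is linearly stable against all such perturbations when the (dimensionless) ball radius is sufficiently small. -/
open Matrix MeasureTheory

/-!
The energy along `Q* + εP` is a quartic polynomial in `ε`, and
`g''(0) = ∫ |∇P|² - |P|² - 6 (√6 h₊/t) tr(Q* P²) + (h₊²/t) (4 (tr Q*P)² + 2 |Q*|² |P|²)`.
For this the coefficients must be integrable (`second_variation_formula`); the only delicate one is
`|∇Q*|²`. Writing the radial equation as `(r² h')' = 6 h + r² f(h)` with bounded right-hand side and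
using that `h` is bounded yields `|h'| ≤ C / r` (`radial_deriv_bound`), so `|∇Q*|² ≤ C / |x|²`, which
is integrable in three dimensions.

The quartic contribution to `g''(0)` is nonnegative. For the cubic one, `|P n|² ≤ (2/3) |P|²` for
`P` symmetric and traceless and `n` a unit vector (`norm_mulVec_sq_le`), whence
`6 (√6 h₊/t) tr(Q* P²) ≤ 6 (h₊/t) |P|²` (`cubic_term_bound`). Therefore
`g''(0) ≥ ∫ |∇P|² - K |P|²` with `K = 1 + 6 h₊/t ≤ 1 + 4 √6 h₊/t`. The Poincaré inequality
`∫ |P|² ≤ 4 R² ∫ |∇P|²` (`poincare_ball`) and `4 R² K < 1` conclude, since `∫ |P|² > 0`.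
-/

/-! ### Poincaré inequality on the ball -/

/-- A `C¹` function on the closed ball is bounded, Lipschitz, and has bounded full derivative in
the open ball, all with a common constant. -/
lemma c1_ball_bounds {R : ℝ} (hR : 0 < R) {u : EuclideanSpace ℝ (Fin 3) → ℝ}
    (hu : ContDiffOn ℝ 1 u (Metric.closedBall (0 : EuclideanSpace ℝ (Fin 3)) R)) :
    ∃ D : ℝ, 0 ≤ D ∧
      (∀ x ∈ Metric.ball (0 : EuclideanSpace ℝ (Fin 3)) R,
        DifferentiableAt ℝ u x ∧ ‖fderiv ℝ u x‖ ≤ D) ∧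
      (∀ x ∈ Metric.closedBall (0 : EuclideanSpace ℝ (Fin 3)) R, |u x| ≤ D) ∧
      (∀ x ∈ Metric.closedBall (0 : EuclideanSpace ℝ (Fin 3)) R,
        ∀ y ∈ Metric.closedBall (0 : EuclideanSpace ℝ (Fin 3)) R, |u y - u x| ≤ D * ‖y - x‖) := by
  have hconv : Convex ℝ (Metric.closedBall (0 : EuclideanSpace ℝ (Fin 3)) R) :=
    convex_closedBall _ _
  have hinteg : (interior (Metric.closedBall (0 : EuclideanSpace ℝ (Fin 3)) R)).Nonempty := by
    rw [interior_closedBall _ hR.ne']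
    exact ⟨0, Metric.mem_ball_self hR⟩
  have hud := uniqueDiffOn_convex hconv hinteg
  have hcpt : IsCompact (Metric.closedBall (0 : EuclideanSpace ℝ (Fin 3)) R) :=
    isCompact_closedBall _ _
  obtain ⟨D₁, hD₁⟩ := hcpt.exists_bound_of_continuousOn (hu.continuousOn_fderivWithin hud le_rfl)
  obtain ⟨D₂, hD₂⟩ := hcpt.exists_bound_of_continuousOn hu.continuousOn
  have hdiff : DifferentiableOn ℝ u (Metric.closedBall (0 : EuclideanSpace ℝ (Fin 3)) R) :=
    hu.differentiableOn one_ne_zero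
  refine ⟨max (max D₁ D₂) 0, le_max_right _ _, ?_, ?_, ?_⟩
  · intro x hx
    have hn : Metric.closedBall (0 : EuclideanSpace ℝ (Fin 3)) R ∈ nhds x :=
      Filter.mem_of_superset (Metric.isOpen_ball.mem_nhds hx) Metric.ball_subset_closedBall
    refine ⟨hdiff.differentiableAt hn, ?_⟩
    rw [← fderivWithin_of_mem_nhds hn]
    exact (hD₁ x (Metric.ball_subset_closedBall hx)).trans
      ((le_max_left _ _).trans (le_max_left _ _))
  · intro x hx
    exact (hD₂ x hx).trans ((le_max_right _ _).trans (le_max_left _ _))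
  · intro x hx y hy
    refine hconv.norm_image_sub_le_of_norm_fderivWithin_le (𝕜 := ℝ) hdiff (fun z hz => ?_) hx hy
    exact (hD₁ z hz).trans ((le_max_left _ _).trans (le_max_left _ _))

/-- Poincaré inequality with constant `4 R²`, using only the first partial derivative. The zero
extension of `u²` is differentiable on the whole space, so it can be integrated by parts against
the coordinate `x₀`: `∫ u² = -∫ 2 x₀ u ∂₀u ≤ ½ ∫ u² + 2 R² ∫ (∂₀u)²`. -/
lemma poincare_ball {R : ℝ} (hR : 0 < R) {u : EuclideanSpace ℝ (Fin 3) → ℝ}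
    (hu : ContDiffOn ℝ 1 u (Metric.closedBall (0 : EuclideanSpace ℝ (Fin 3)) R))
    (hbd : ∀ x : EuclideanSpace ℝ (Fin 3), ‖x‖ = R → u x = 0) :
    ∫ x in Metric.ball (0 : EuclideanSpace ℝ (Fin 3)) R, u x ^ 2 ≤
      4 * R ^ 2 * ∫ x in Metric.ball (0 : EuclideanSpace ℝ (Fin 3)) R,
        (fderiv ℝ u x (EuclideanSpace.single 0 (1 : ℝ))) ^ 2 := by
  obtain ⟨D, hD0, hDd, hDb, hDl⟩ := c1_ball_bounds hR hu
  set e : EuclideanSpace ℝ (Fin 3) := EuclideanSpace.single 0 (1 : ℝ) with he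
  have he1 : ‖e‖ = 1 := by simp [he]
  set B := Metric.ball (0 : EuclideanSpace ℝ (Fin 3)) R with hB
  have hBm : MeasurableSet B := measurableSet_ball
  have hBfin : volume B ≠ ⊤ := measure_ball_lt_top.ne
  let w : EuclideanSpace ℝ (Fin 3) → ℝ := B.indicator (fun x => u x ^ 2)
  -- Differentiability on the sphere holds because `u` is Lipschitz, so `u ^ 2` is
  -- quadratically small there.
  have hw : ∀ x, HasFDerivAt w (B.indicator (fun x => (2 * u x) • fderiv ℝ u x) x) x := by
    intro x
    rcases lt_trichotomy ‖x‖ R with hx | hx | hx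
    · have hxB : x ∈ B := by simpa [hB] using hx
      rw [Set.indicator_of_mem hxB]
      have h1 : HasFDerivAt (fun x => u x ^ 2) ((2 * u x) • fderiv ℝ u x) x := by
        have := ((hDd x hxB).1.hasFDerivAt).pow 2
        simpa using this
      refine h1.congr_of_eventuallyEq ?_
      filter_upwards [Metric.isOpen_ball.mem_nhds hxB] with y hy
      exact Set.indicator_of_mem hy _
    · have hxB : x ∉ B := by simp [hB, hx]
      rw [Set.indicator_of_notMem hxB]
      refine Asymptotics.IsBigO.hasFDerivAt (n := 2) ?_ one_lt_two
      refine Asymptotics.IsBigO.of_bound (D ^ 2) (Filter.Eventually.of_forall fun y => ?_)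
      by_cases hy : y ∈ B
      · have h2 := hDl x (by simp [hx]) y (Metric.ball_subset_closedBall hy)
        rw [hbd x hx, sub_zero] at h2
        simp only [w, Set.indicator_of_mem hy, norm_pow, Real.norm_eq_abs, abs_norm]
        rw [← mul_pow]
        exact pow_le_pow_left₀ (abs_nonneg _) h2 2
      · simp only [w, Set.indicator_of_notMem hy, norm_zero]
        positivity
    · have hxB : x ∉ B := by simp [hB, hx.le]
      rw [Set.indicator_of_notMem hxB]
      refine (hasFDerivAt_const (0 : ℝ) x).congr_of_eventuallyEq ?_
      filter_upwards [(isOpen_lt continuous_const continuous_norm).mem_nhds hx] with y hy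
      have : y ∉ B := by simpa [hB] using (le_of_lt hy)
      exact Set.indicator_of_notMem this _
  have hwd : ∀ x, fderiv ℝ w x e = B.indicator (fun x => 2 * u x * fderiv ℝ u x e) x := by
    intro x
    rw [(hw x).fderiv]
    by_cases hx : x ∈ B <;> simp [hx]
  have hum : AEStronglyMeasurable u (volume.restrict B) :=
    (hu.continuousOn.mono Metric.ball_subset_closedBall).aestronglyMeasurable hBm
  have hdm : AEStronglyMeasurable (fun x => fderiv ℝ u x e) (volume.restrict B) :=
    (measurable_fderiv_apply_const ℝ u e).aestronglyMeasurable
  have hcm : Continuous (fun x : EuclideanSpace ℝ (Fin 3) => x 0) := by fun_prop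
  have hub : ∀ x ∈ B, |u x| ≤ D := fun x hx => hDb x (Metric.ball_subset_closedBall hx)
  have hdb : ∀ x ∈ B, |fderiv ℝ u x e| ≤ D := fun x hx => by
    have := (fderiv ℝ u x).le_opNorm e
    rw [he1, mul_one] at this
    exact this.trans (hDd x hx).2
  have hcb : ∀ x ∈ B, |x 0| ≤ R := fun x hx =>
    (PiLp.norm_apply_le x 0).trans (by simpa [hB] using (Metric.ball_subset_closedBall hx))
  have : IsFiniteMeasure (volume.restrict B) := ⟨by simpa using hBfin.lt_top⟩
  have huL : MemLp u ⊤ (volume.restrict B) := memLp_top_of_bound hum D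
    ((ae_restrict_iff' hBm).2 (Filter.Eventually.of_forall hub))
  have hdL : MemLp (fun x => fderiv ℝ u x e) ⊤ (volume.restrict B) := memLp_top_of_bound hdm D
    ((ae_restrict_iff' hBm).2 (Filter.Eventually.of_forall hdb))
  have hcL : MemLp (fun x : EuclideanSpace ℝ (Fin 3) => x 0) ⊤ (volume.restrict B) :=
    memLp_top_of_bound hcm.aestronglyMeasurable R
      ((ae_restrict_iff' hBm).2 (Filter.Eventually.of_forall hcb))
  have i1 : Integrable (fun x => u x ^ 2) (volume.restrict B) := by
    simp only [pow_two]
    exact (huL.mul' (r := ⊤) huL).integrable le_top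
  have i2 : Integrable (fun x => (fderiv ℝ u x e) ^ 2) (volume.restrict B) := by
    simp only [pow_two]
    exact (hdL.mul' (r := ⊤) hdL).integrable le_top
  have i3 : Integrable (fun x => x 0 * (2 * u x * fderiv ℝ u x e)) (volume.restrict B) :=
    ((hdL.mul' (r := ⊤) (huL.const_mul 2)).mul' (r := ⊤) hcL).integrable le_top
  have i4 : Integrable (fun x => x 0 * u x ^ 2) (volume.restrict B) := by
    simp only [pow_two]
    exact ((huL.mul' (r := ⊤) huL).mul' (r := ⊤) hcL).integrable le_top
  have hcd : ∀ x : EuclideanSpace ℝ (Fin 3),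
      HasFDerivAt (fun x : EuclideanSpace ℝ (Fin 3) => x 0)
        (EuclideanSpace.proj 0 : EuclideanSpace ℝ (Fin 3) →L[ℝ] ℝ) x := fun x =>
    (EuclideanSpace.proj 0 : EuclideanSpace ℝ (Fin 3) →L[ℝ] ℝ).hasFDerivAt
  have hcd' : ∀ x, fderiv ℝ (fun x : EuclideanSpace ℝ (Fin 3) => x 0) x e = 1 := by
    intro x
    rw [(hcd x).fderiv]
    simp [he]
  have e1 : (fun x => fderiv ℝ (fun x : EuclideanSpace ℝ (Fin 3) => x 0) x e * w x)
      = B.indicator (fun x => u x ^ 2) := by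
    funext x; rw [hcd', one_mul]
  have e2 : (fun x : EuclideanSpace ℝ (Fin 3) => x 0 * fderiv ℝ w x e)
      = B.indicator (fun x => x 0 * (2 * u x * fderiv ℝ u x e)) := by
    funext x; rw [hwd]; by_cases hx : x ∈ B <;> simp [hx]
  have e3 : (fun x : EuclideanSpace ℝ (Fin 3) => x 0 * w x)
      = B.indicator (fun x => x 0 * u x ^ 2) := by
    funext x; by_cases hx : x ∈ B <;> simp [hx, w]
  have key := integral_mul_fderiv_eq_neg_fderiv_mul_of_integrable (μ := volume)
    (f := fun x : EuclideanSpace ℝ (Fin 3) => x 0) (g := w) (v := e)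
    (by rw [e1]; exact (integrable_indicator_iff hBm).2 i1)
    (by rw [e2]; exact (integrable_indicator_iff hBm).2 i3)
    (by rw [e3]; exact (integrable_indicator_iff hBm).2 i4)
    (fun x _ => (hcd x).differentiableAt) (fun x _ => (hw x).differentiableAt)
  rw [e1, e2, integral_indicator hBm, integral_indicator hBm] at key
  have hle : -∫ x in B, x 0 * (2 * u x * fderiv ℝ u x e) ≤
      ∫ x in B, ((1 / 2) * u x ^ 2 + 2 * R ^ 2 * (fderiv ℝ u x e) ^ 2) := by
    rw [← integral_neg]
    refine setIntegral_mono_on i3.neg ((i1.const_mul _).add (i2.const_mul _)) hBm fun x hx => ?_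
    have h1 := sq_le_sq' (neg_le_of_abs_le (hcb x hx)) (le_of_abs_le (hcb x hx))
    nlinarith [sq_nonneg (u x + 2 * (x 0 * fderiv ℝ u x e)),
      mul_le_mul_of_nonneg_right h1 (sq_nonneg (fderiv ℝ u x e))]
  rw [integral_add (i1.const_mul _) (i2.const_mul _), integral_const_mul, integral_const_mul] at hle
  linarith

/-! ### Regularity of the hedgehog at the origin -/

/-- A bounded solution of the radial equation satisfies `|h'(r)| ≤ C / r`; this rules out the
singular behaviour `r⁻³` of the linearized equation and makes the hedgehog energy finite. -/
lemma radial_deriv_bound {R c : ℝ} (hc : 0 ≤ c) {h : ℝ → ℝ}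
    (hC2 : ContDiffOn ℝ 2 h (Set.Ioc 0 R))
    (hrange : ∀ r ∈ Set.Icc (0 : ℝ) R, 0 ≤ h r ∧ h r ≤ 1)
    (hode : ∀ r ∈ Set.Ioc (0 : ℝ) R,
      deriv (deriv h) r + (2 / r) * deriv h r - 6 * h r / r ^ 2
        = -h r + (h r) ^ 3 + c * ((h r) ^ 3 - (h r) ^ 2)) :
    ∃ C : ℝ, 0 ≤ C ∧ ∀ r ∈ Set.Ioo (0 : ℝ) R, DifferentiableAt ℝ h r ∧ |deriv h r| ≤ C / r := by
  have hC2' : ContDiffOn ℝ 2 h (Set.Ioo 0 R) := hC2.mono Set.Ioo_subset_Ioc_self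
  have hd1 : ∀ r ∈ Set.Ioo (0 : ℝ) R, DifferentiableAt ℝ h r := fun r hr =>
    (hC2'.differentiableOn two_ne_zero).differentiableAt (isOpen_Ioo.mem_nhds hr)
  have hC1 : ContDiffOn ℝ 1 (deriv h) (Set.Ioo 0 R) :=
    hC2'.deriv_of_isOpen isOpen_Ioo (by norm_num)
  have hd2 : ∀ r ∈ Set.Ioo (0 : ℝ) R, DifferentiableAt ℝ (deriv h) r := fun r hr =>
    (hC1.differentiableOn one_ne_zero).differentiableAt (isOpen_Ioo.mem_nhds hr)
  set M : ℝ := 6 + R ^ 2 * (1 + c) with hM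
  have hM0 : 0 ≤ M := by positivity
  -- The equation in divergence form: `(r² h')' = 6 h + r² f(h)`, which is bounded.
  have hw : ∀ r ∈ Set.Ioo (0 : ℝ) R, HasDerivAt (fun r => r ^ 2 * deriv h r)
      (6 * h r + r ^ 2 * (-h r + (h r) ^ 3 + c * ((h r) ^ 3 - (h r) ^ 2))) r := by
    intro r hr
    have h1 := (hasDerivAt_pow 2 r).mul (hd2 r hr).hasDerivAt
    refine h1.congr_deriv ?_
    rw [← hode r ⟨hr.1, hr.2.le⟩]
    have : r ≠ 0 := hr.1.ne'
    field_simp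
    ring
  have hwb : ∀ r ∈ Set.Ioo (0 : ℝ) R,
      ‖6 * h r + r ^ 2 * (-h r + (h r) ^ 3 + c * ((h r) ^ 3 - (h r) ^ 2))‖ ≤ M := by
    intro r hr
    obtain ⟨ha, hb⟩ := hrange r ⟨hr.1.le, hr.2.le⟩
    have hrR : r ^ 2 ≤ R ^ 2 := pow_le_pow_left₀ hr.1.le hr.2.le 2
    have hsq : h r ^ 2 ≤ 1 := pow_le_one₀ ha hb
    have h32 : h r ^ 3 ≤ h r ^ 2 := pow_le_pow_of_le_one ha hb (by norm_num)
    have h3 : h r ^ 3 ≤ h r := by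
      simpa using pow_le_pow_of_le_one ha hb (show 1 ≤ 3 by norm_num)
    have h30 : 0 ≤ h r ^ 3 := pow_nonneg ha 3
    have hf : |-h r + (h r) ^ 3 + c * ((h r) ^ 3 - (h r) ^ 2)| ≤ 1 + c := by
      rw [abs_le]
      constructor <;> nlinarith
    calc ‖6 * h r + r ^ 2 * (-h r + (h r) ^ 3 + c * ((h r) ^ 3 - (h r) ^ 2))‖
        ≤ |6 * h r| + |r ^ 2 * (-h r + (h r) ^ 3 + c * ((h r) ^ 3 - (h r) ^ 2))| := abs_add_le _ _
      _ ≤ M := by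
          rw [abs_mul, abs_mul, abs_of_nonneg (sq_nonneg r), abs_of_nonneg ha,
            abs_of_pos (by norm_num : (0 : ℝ) < 6)]
          have := mul_le_mul hrR hf (abs_nonneg _) (sq_nonneg R)
          linarith
  refine ⟨4 + M, by positivity, fun r hr => ⟨hd1 r hr, ?_⟩⟩
  have hr0 := hr.1
  -- On `[r/2, r]` some slope is at most `2/r`, since `h` takes values in `[0, 1]`.
  have hsub : ∀ s ∈ Set.Icc (r / 2) r, s ∈ Set.Ioo (0 : ℝ) R := fun s hs =>
    ⟨by linarith [hs.1], by linarith [hs.2, hr.2]⟩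
  obtain ⟨ξ, hξ, hslope⟩ := exists_deriv_eq_slope h (by linarith : r / 2 < r)
    (fun s hs => (hd1 s (hsub s hs)).continuousAt.continuousWithinAt)
    (fun s hs => (hd1 s (hsub s (Set.Ioo_subset_Icc_self hs))).differentiableWithinAt)
  have hξ' := hsub ξ (Set.Ioo_subset_Icc_self hξ)
  have hξ0 : 0 < ξ := hξ'.1
  have hdξ : |deriv h ξ| ≤ 2 / r := by
    rw [hslope, abs_div, abs_of_pos (by linarith : 0 < r - r / 2)]
    have h1 := hrange r ⟨hr.1.le, hr.2.le⟩
    have h2 := hrange (r / 2) ⟨by linarith, by linarith [hr.2]⟩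
    have h3 : |h r - h (r / 2)| ≤ 1 := by
      rw [abs_le]; constructor <;> linarith
    rw [div_le_div_iff₀ (by linarith) hr0]
    nlinarith
  have hmv := (convex_Ioo (0 : ℝ) R).norm_image_sub_le_of_norm_hasDerivWithin_le
    (fun s hs => (hw s hs).hasDerivWithinAt) hwb hξ' hr
  rw [Real.norm_eq_abs, Real.norm_eq_abs] at hmv
  have hrξ : |r - ξ| ≤ r := by
    rw [abs_le]; constructor <;> linarith [hξ.2]
  have hA : |ξ ^ 2 * deriv h ξ| ≤ 2 * r := by
    rw [abs_mul, abs_of_nonneg (sq_nonneg ξ)]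
    calc ξ ^ 2 * |deriv h ξ| ≤ r ^ 2 * (2 / r) :=
          mul_le_mul (pow_le_pow_left₀ hξ0.le hξ.2.le 2) hdξ (abs_nonneg _) (sq_nonneg r)
      _ = 2 * r := by field_simp
  have hB : |r ^ 2 * deriv h r| ≤ (4 + M) * r := by
    have h1 : |r ^ 2 * deriv h r| ≤ |r ^ 2 * deriv h r - ξ ^ 2 * deriv h ξ| + |ξ ^ 2 * deriv h ξ| := by
      have := abs_add_le (r ^ 2 * deriv h r - ξ ^ 2 * deriv h ξ) (ξ ^ 2 * deriv h ξ)
      rwa [sub_add_cancel] at this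
    have h2 : M * |r - ξ| ≤ M * r := mul_le_mul_of_nonneg_left hrξ hM0
    nlinarith
  rw [abs_mul, abs_of_nonneg (sq_nonneg r)] at hB
  rw [le_div_iff₀ hr0]
  nlinarith

lemma deriv_mul_bound {E : Type*} [NormedAddCommGroup E] [NormedSpace ℝ E] {f g : E → ℝ} {x : E}
    {A A' B B' : ℝ} (hf : DifferentiableAt ℝ f x) (hg : DifferentiableAt ℝ g x)
    (hA : |f x| ≤ A) (hA' : ‖fderiv ℝ f x‖ ≤ A') (hB : |g x| ≤ B) (hB' : ‖fderiv ℝ g x‖ ≤ B') :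
    DifferentiableAt ℝ (fun y => f y * g y) x ∧
      ‖fderiv ℝ (fun y => f y * g y) x‖ ≤ A * B' + B * A' := by
  refine ⟨hf.mul hg, ?_⟩
  rw [fderiv_fun_mul hf hg]
  refine (norm_add_le _ _).trans ?_
  rw [norm_smul, norm_smul, Real.norm_eq_abs, Real.norm_eq_abs]
  have hA0 := (abs_nonneg _).trans hA
  have hB0 := (abs_nonneg _).trans hB
  exact add_le_add (mul_le_mul hA hB' (norm_nonneg _) hA0) (mul_le_mul hB hA' (norm_nonneg _) hB0)

lemma coord_div_norm_bound (i : Fin 3) {x : EuclideanSpace ℝ (Fin 3)} (hx : x ≠ 0) :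
    |x i / ‖x‖| ≤ 1 ∧ DifferentiableAt ℝ (fun y : EuclideanSpace ℝ (Fin 3) => y i / ‖y‖) x ∧
      ‖fderiv ℝ (fun y : EuclideanSpace ℝ (Fin 3) => y i / ‖y‖) x‖ ≤ 2 / ‖x‖ := by
  have hn : 0 < ‖x‖ := norm_pos_iff.2 hx
  have hxi : |x i| ≤ ‖x‖ := PiLp.norm_apply_le x i
  have hdn : DifferentiableAt ℝ (fun y : EuclideanSpace ℝ (Fin 3) => ‖y‖) x :=
    differentiableAt_id.norm ℝ hx
  have hnb : ‖fderiv ℝ (fun y : EuclideanSpace ℝ (Fin 3) => ‖y‖) x‖ ≤ 1 := by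
    simpa using norm_fderiv_le_of_lipschitz ℝ (x₀ := x)
      (lipschitzWith_one_norm (E := EuclideanSpace ℝ (Fin 3)))
  have hinv : HasFDerivAt (fun y : EuclideanSpace ℝ (Fin 3) => ‖y‖⁻¹)
      ((-(‖x‖ ^ 2)⁻¹) • fderiv ℝ (fun y : EuclideanSpace ℝ (Fin 3) => ‖y‖) x) x :=
    (hasDerivAt_inv hn.ne').comp_hasFDerivAt x hdn.hasFDerivAt
  have hci : HasFDerivAt (fun y : EuclideanSpace ℝ (Fin 3) => y i)
      (EuclideanSpace.proj i : EuclideanSpace ℝ (Fin 3) →L[ℝ] ℝ) x :=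
    (EuclideanSpace.proj i : EuclideanSpace ℝ (Fin 3) →L[ℝ] ℝ).hasFDerivAt
  have hcn : ‖fderiv ℝ (fun y : EuclideanSpace ℝ (Fin 3) => y i) x‖ ≤ 1 := by
    rw [hci.fderiv]
    refine ContinuousLinearMap.opNorm_le_bound _ zero_le_one fun y => ?_
    rw [one_mul]
    exact PiLp.norm_apply_le y i
  have hin : ‖fderiv ℝ (fun y : EuclideanSpace ℝ (Fin 3) => ‖y‖⁻¹) x‖ ≤ (‖x‖ ^ 2)⁻¹ := by
    rw [hinv.fderiv, norm_smul, norm_neg, norm_inv, norm_pow, norm_norm]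
    exact mul_le_of_le_one_right (by positivity) hnb
  refine ⟨?_, ?_⟩
  · rw [abs_div, abs_norm]
    exact div_le_one_of_le₀ hxi hn.le
  · have := deriv_mul_bound hci.differentiableAt hinv.differentiableAt hxi hcn
      (abs_of_pos (inv_pos.2 hn)).le hin
    simp only [div_eq_mul_inv]
    refine ⟨this.1, this.2.trans (le_of_eq ?_)⟩
    field_simp
    norm_num

/-- Away from the origin the hedgehog has bounded entries and gradient of order `1 / |x|`. -/
lemma hedgehog_entry_bounds {R C : ℝ} {h : ℝ → ℝ}
    (hd : ∀ r ∈ Set.Ioo (0 : ℝ) R, DifferentiableAt ℝ h r ∧ |deriv h r| ≤ C / r)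
    (hrange : ∀ r ∈ Set.Icc (0 : ℝ) R, 0 ≤ h r ∧ h r ≤ 1)
    {Q : EuclideanSpace ℝ (Fin 3) → Matrix (Fin 3) (Fin 3) ℝ}
    (hQ : ∀ x, Q x = Real.sqrt (3 / 2) • h ‖x‖ •
      (Matrix.of (fun i j : Fin 3 => x i * x j / ‖x‖ ^ 2) -
        (1 / 3 : ℝ) • (1 : Matrix (Fin 3) (Fin 3) ℝ))) (i j : Fin 3) :
    ∀ x ∈ Metric.ball (0 : EuclideanSpace ℝ (Fin 3)) R \ {0},
      DifferentiableAt ℝ (fun y => Q y i j) x ∧ |Q x i j| ≤ 4 ∧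
      ‖fderiv ℝ (fun y => Q y i j) x‖ ≤ (2 * (4 + 2 * C)) / ‖x‖ := by
  intro x hx
  have hx0 : x ≠ 0 := by simpa using hx.2
  have hn : 0 < ‖x‖ := norm_pos_iff.2 hx0
  have hxR : ‖x‖ < R := by simpa using hx.1
  obtain ⟨hi1, hi2, hi3⟩ := coord_div_norm_bound i hx0
  obtain ⟨hj1, hj2, hj3⟩ := coord_div_norm_bound j hx0
  obtain ⟨hd1, hd2⟩ := hd ‖x‖ ⟨hn, hxR⟩
  have hdn : DifferentiableAt ℝ (fun y : EuclideanSpace ℝ (Fin 3) => ‖y‖) x :=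
    differentiableAt_id.norm ℝ hx0
  have hnb : ‖fderiv ℝ (fun y : EuclideanSpace ℝ (Fin 3) => ‖y‖) x‖ ≤ 1 := by
    simpa using norm_fderiv_le_of_lipschitz ℝ (x₀ := x)
      (lipschitzWith_one_norm (E := EuclideanSpace ℝ (Fin 3)))
  have hh : HasFDerivAt (fun y : EuclideanSpace ℝ (Fin 3) => h ‖y‖)
      (deriv h ‖x‖ • fderiv ℝ (fun y : EuclideanSpace ℝ (Fin 3) => ‖y‖) x) x :=
    hd1.hasDerivAt.comp_hasFDerivAt x hdn.hasFDerivAt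
  have hhb : ‖fderiv ℝ (fun y : EuclideanSpace ℝ (Fin 3) => h ‖y‖) x‖ ≤ C / ‖x‖ := by
    rw [hh.fderiv, norm_smul, Real.norm_eq_abs]
    exact (mul_le_of_le_one_right (abs_nonneg _) hnb).trans hd2
  have hh1 : |h ‖x‖| ≤ 1 := by
    obtain ⟨ha, hb⟩ := hrange ‖x‖ ⟨hn.le, hxR.le⟩
    rwa [abs_of_nonneg ha]
  set d : ℝ := (1 / 3) * (1 : Matrix (Fin 3) (Fin 3) ℝ) i j with hdd
  have hdb : |d| ≤ 1 := by
    rw [hdd, Matrix.one_apply]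
    split_ifs <;> norm_num
  obtain ⟨hm1, hm2⟩ := deriv_mul_bound hi2 hj2 hi1 hi3 hj1 hj3
  have hmd : HasFDerivAt (fun y : EuclideanSpace ℝ (Fin 3) => y i / ‖y‖ * (y j / ‖y‖) - d)
      (fderiv ℝ (fun y : EuclideanSpace ℝ (Fin 3) => y i / ‖y‖ * (y j / ‖y‖)) x) x :=
    hm1.hasFDerivAt.sub_const d
  have hmb : |x i / ‖x‖ * (x j / ‖x‖) - d| ≤ 2 := by
    refine (abs_sub _ _).trans ?_
    rw [abs_mul]
    nlinarith [mul_le_mul hi1 hj1 (abs_nonneg _) zero_le_one]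
  obtain ⟨hp1, hp2⟩ := deriv_mul_bound hh.differentiableAt hmd.differentiableAt hh1 hhb hmb
    (hmd.fderiv ▸ hm2)
  have hs : Real.sqrt (3 / 2) ≤ 2 := by
    rw [Real.sqrt_le_left (by norm_num)]; norm_num
  have hs0 := Real.sqrt_nonneg (3 / 2)
  have hfun : (fun y => Q y i j) = fun y : EuclideanSpace ℝ (Fin 3) =>
      Real.sqrt (3 / 2) * (h ‖y‖ * (y i / ‖y‖ * (y j / ‖y‖) - d)) := by
    funext y
    rw [hQ]
    simp only [Matrix.smul_apply, Matrix.sub_apply, Matrix.of_apply, smul_eq_mul, hdd]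
    rw [div_mul_div_comm, pow_two]
  have hQx : Q x i j = Real.sqrt (3 / 2) * (h ‖x‖ * (x i / ‖x‖ * (x j / ‖x‖) - d)) :=
    congrFun hfun x
  rw [hfun, hQx]
  refine ⟨hp1.const_mul _, ?_, ?_⟩
  · rw [abs_mul, abs_mul, abs_of_nonneg hs0]
    have h1 := mul_le_mul hh1 hmb (abs_nonneg _) zero_le_one
    have h2 := mul_le_mul hs h1 (by positivity) (by norm_num)
    linarith
  · rw [fderiv_const_mul hp1, norm_smul, Real.norm_eq_abs, abs_of_nonneg hs0]
    refine (mul_le_mul hs hp2 (norm_nonneg _) (by norm_num)).trans (le_of_eq ?_)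
    field_simp
    ring

lemma integrableOn_inv_norm_sq (R K : ℝ) :
    IntegrableOn (fun x : EuclideanSpace ℝ (Fin 3) => (K / ‖x‖) ^ 2)
      (Metric.ball (0 : EuclideanSpace ℝ (Fin 3)) R) := by
  rw [integrableOn_fun_norm_addHaar (f := fun r => (K / r) ^ 2) (μ := volume)]
  have : IntegrableOn (fun _ : ℝ => K ^ 2) (Set.Ioo 0 R) := by
    simp
  refine this.congr_fun (fun r hr => ?_) measurableSet_Ioo
  have : r ≠ 0 := hr.1.ne'
  simp only [finrank_euclideanSpace, Fintype.card_fin, smul_eq_mul]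
  field_simp

/-! ### The cubic term of the second variation -/

/-- Coordinate form of `|p n|² ≤ (2/3) |p|²` for a unit vector `n = (x, y, z)` and a symmetric
traceless matrix `p` with entries `a, b, c, d, f, -a - d`; here `m = p n` and `q = n · p n`. It is
the Cauchy–Schwarz inequality for `p` and the traceless symmetric part of `n ⊗ m`. -/
lemma traceless_quadratic_le {a b c d f x y z m₀ m₁ m₂ q : ℝ} (hn : x ^ 2 + y ^ 2 + z ^ 2 = 1)
    (hm₀ : m₀ = a * x + b * y + c * z) (hm₁ : m₁ = b * x + d * y + f * z)
    (hm₂ : m₂ = c * x + f * y + (-a - d) * z) (hq : q = x * m₀ + y * m₁ + z * m₂) :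
    m₀ ^ 2 + m₁ ^ 2 + m₂ ^ 2 ≤
      2 / 3 * (a ^ 2 + d ^ 2 + (-a - d) ^ 2 + 2 * (b ^ 2 + c ^ 2 + f ^ 2)) := by
  -- `q ^ 2 ≤ |p n| ^ 2`, where `q = n · p n`.
  have h1 : q ^ 2 ≤ m₀ ^ 2 + m₁ ^ 2 + m₂ ^ 2 := by
    have h : 0 ≤ (m₀ - q * x) ^ 2 + (m₁ - q * y) ^ 2 + (m₂ - q * z) ^ 2 := by positivity
    have e : (m₀ - q * x) ^ 2 + (m₁ - q * y) ^ 2 + (m₂ - q * z) ^ 2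
        = m₀ ^ 2 + m₁ ^ 2 + m₂ ^ 2 - q ^ 2 := by
      linear_combination q ^ 2 * hn + 2 * q * hq
    linarith
  -- The squared norm of `p` minus 3/2 times the traceless symmetric part of `n ⊗ p n`.
  have h2 : 0 ≤ (a - 3 / 2 * (x * m₀) + q / 2) ^ 2 + (d - 3 / 2 * (y * m₁) + q / 2) ^ 2
      + (-a - d - 3 / 2 * (z * m₂) + q / 2) ^ 2
      + 2 * (b - 3 / 4 * (x * m₁ + y * m₀)) ^ 2 + 2 * (c - 3 / 4 * (x * m₂ + z * m₀)) ^ 2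
      + 2 * (f - 3 / 4 * (y * m₂ + z * m₁)) ^ 2 := by positivity
  have e2 : (a - 3 / 2 * (x * m₀) + q / 2) ^ 2 + (d - 3 / 2 * (y * m₁) + q / 2) ^ 2
      + (-a - d - 3 / 2 * (z * m₂) + q / 2) ^ 2
      + 2 * (b - 3 / 4 * (x * m₁ + y * m₀)) ^ 2 + 2 * (c - 3 / 4 * (x * m₂ + z * m₀)) ^ 2
      + 2 * (f - 3 / 4 * (y * m₂ + z * m₁)) ^ 2
      = (a ^ 2 + d ^ 2 + (-a - d) ^ 2 + 2 * (b ^ 2 + c ^ 2 + f ^ 2))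
        - 15 / 8 * (m₀ ^ 2 + m₁ ^ 2 + m₂ ^ 2) + 3 / 8 * q ^ 2 := by
    have hn' : x ^ 2 + y ^ 2 + z ^ 2 - 1 = 0 := by linarith
    linear_combination (9 / 8 * (m₀ ^ 2 + m₁ ^ 2 + m₂ ^ 2)) * hn' + 3 * m₀ * hm₀ + 3 * m₁ * hm₁
      + 3 * m₂ * hm₂ + (3 / 8 * q - 9 / 8 * (x * m₀ + y * m₁ + z * m₂)) * hq
  linarith

/-- The constant `2/3` is that of the largest squared eigenvalue of a traceless symmetric `3 × 3`
matrix relative to the squared Frobenius norm `tr (p²)`. -/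
lemma norm_mulVec_sq_le (p : Matrix (Fin 3) (Fin 3) ℝ) (hs : p.IsSymm) (htr : p.trace = 0)
    (n : Fin 3 → ℝ) (hn : ∑ i, n i ^ 2 = 1) :
    ∑ i, ((p *ᵥ n) i) ^ 2 ≤ 2 / 3 * (p * p).trace := by
  have e10 : p 1 0 = p 0 1 := hs.apply 0 1
  have e20 : p 2 0 = p 0 2 := hs.apply 0 2
  have e21 : p 2 1 = p 1 2 := hs.apply 1 2
  simp only [Matrix.trace, Matrix.diag, Fin.sum_univ_three, Matrix.mul_apply, Matrix.mulVec,
    dotProduct, e10, e20, e21] at *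
  generalize p 0 0 = a at *
  generalize p 0 1 = b at *
  generalize p 0 2 = c at *
  generalize p 1 1 = d at *
  generalize p 1 2 = f at *
  generalize p 2 2 = k at *
  generalize n 0 = x at *
  generalize n 1 = y at *
  generalize n 2 = z at *
  obtain rfl : k = -a - d := by linarith
  have := traceless_quadratic_le (a := a) (b := b) (c := c) (d := d) (f := f) hn rfl rfl rfl rfl
  linarith

/-! ### Expansion of the energy in powers of `ε` -/

section Traces
variable {α : Type*} [MeasurableSpace α] {μ : Measure α}

lemma memLp_top_matrix_mul {A B : α → Matrix (Fin 3) (Fin 3) ℝ}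
    (hA : ∀ i j, MemLp (fun x => A x i j) ⊤ μ) (hB : ∀ i j, MemLp (fun x => B x i j) ⊤ μ)
    (i j : Fin 3) : MemLp (fun x => (A x * B x) i j) ⊤ μ := by
  simp only [Matrix.mul_apply]
  exact memLp_finsetSum _ fun k _ => (hB k j).mul' (r := ⊤) (hA i k)

lemma memLp_top_trace {A : α → Matrix (Fin 3) (Fin 3) ℝ}
    (hA : ∀ i j, MemLp (fun x => A x i j) ⊤ μ) : MemLp (fun x => (A x).trace) ⊤ μ := by
  simp only [Matrix.trace, Matrix.diag]
  exact memLp_finsetSum _ fun k _ => hA k k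

lemma trace_sq_expand (q p : Matrix (Fin 3) (Fin 3) ℝ) (ε : ℝ) :
    ((q + ε • p) * (q + ε • p)).trace
      = (q * q).trace + 2 * ε * (q * p).trace + ε ^ 2 * (p * p).trace := by
  simp only [add_mul, mul_add, Matrix.smul_mul, Matrix.mul_smul, Matrix.trace_add,
    Matrix.trace_smul, smul_eq_mul, Matrix.trace_mul_comm p q]
  ring

lemma trace_cube_expand (q p : Matrix (Fin 3) (Fin 3) ℝ) (ε : ℝ) :
    ((q + ε • p) * (q + ε • p) * (q + ε • p)).trace
      = (q * q * q).trace + 3 * ε * (q * q * p).trace + 3 * ε ^ 2 * (q * p * p).trace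
        + ε ^ 3 * (p * p * p).trace := by
  have h1 : (q * p * q).trace = (q * q * p).trace := by
    rw [Matrix.trace_mul_comm (q * p) q, ← mul_assoc]
  have h2 : (p * q * q).trace = (q * q * p).trace := by
    rw [mul_assoc, Matrix.trace_mul_comm p (q * q)]
  have h3 : (p * p * q).trace = (q * p * p).trace := by
    rw [Matrix.trace_mul_comm (p * p) q, ← mul_assoc]
  have h4 : (p * q * p).trace = (q * p * p).trace := by
    rw [mul_assoc, Matrix.trace_mul_comm p (q * p)]
  simp only [add_mul, mul_add, Matrix.smul_mul, Matrix.mul_smul, Matrix.trace_add,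
    Matrix.trace_smul, smul_eq_mul, h1, h2, h3, h4]
  ring

lemma deriv_deriv_quartic (a₀ a₁ a₂ a₃ a₄ : ℝ) :
    deriv (deriv fun ε : ℝ => a₀ + ε * a₁ + ε ^ 2 * a₂ + ε ^ 3 * a₃ + ε ^ 4 * a₄) 0 = 2 * a₂ := by
  have h1 : deriv (fun ε : ℝ => a₀ + ε * a₁ + ε ^ 2 * a₂ + ε ^ 3 * a₃ + ε ^ 4 * a₄)
      = fun ε => a₁ + 2 * ε * a₂ + 3 * ε ^ 2 * a₃ + 4 * ε ^ 3 * a₄ := by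
    funext ε
    have := (((((hasDerivAt_id ε).mul_const a₁).const_add a₀).add
      ((hasDerivAt_pow 2 ε).mul_const a₂)).add ((hasDerivAt_pow 3 ε).mul_const a₃)).add
      ((hasDerivAt_pow 4 ε).mul_const a₄)
    refine (this.congr_deriv ?_).deriv
    norm_num
  rw [h1]
  have := (((((hasDerivAt_id (0 : ℝ)).const_mul 2).mul_const a₂).const_add a₁).add
      (((hasDerivAt_pow 2 (0 : ℝ)).const_mul 3).mul_const a₃)).add
      (((hasDerivAt_pow 3 (0 : ℝ)).const_mul 4).mul_const a₄)
  refine (this.congr_deriv ?_).deriv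
  norm_num

lemma deriv_deriv_integral_quartic {F₀ F₁ F₂ F₃ F₄ : α → ℝ} (h₀ : Integrable F₀ μ)
    (h₁ : Integrable F₁ μ) (h₂ : Integrable F₂ μ) (h₃ : Integrable F₃ μ) (h₄ : Integrable F₄ μ)
    {g : ℝ → ℝ} (hg : ∀ ε : ℝ, g ε =
      ∫ x, (F₀ x + ε * F₁ x + ε ^ 2 * F₂ x + ε ^ 3 * F₃ x + ε ^ 4 * F₄ x) ∂μ) :
    deriv (deriv g) 0 = 2 * ∫ x, F₂ x ∂μ := by
  rw [← deriv_deriv_quartic (∫ x, F₀ x ∂μ) (∫ x, F₁ x ∂μ) (∫ x, F₂ x ∂μ) (∫ x, F₃ x ∂μ)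
    (∫ x, F₄ x ∂μ)]
  congr 2
  funext ε
  have i₁ : Integrable (fun x => F₀ x + ε * F₁ x) μ := h₀.add (h₁.const_mul _)
  have i₂ : Integrable (fun x => F₀ x + ε * F₁ x + ε ^ 2 * F₂ x) μ := i₁.add (h₂.const_mul _)
  have i₃ : Integrable (fun x => F₀ x + ε * F₁ x + ε ^ 2 * F₂ x + ε ^ 3 * F₃ x) μ :=
    i₂.add (h₃.const_mul _)
  rw [hg, integral_add i₃ (h₄.const_mul _), integral_add i₂ (h₃.const_mul _),
    integral_add i₁ (h₂.const_mul _), integral_add h₀ (h₁.const_mul _), integral_const_mul,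
    integral_const_mul, integral_const_mul, integral_const_mul]

/-- The energy is a quartic polynomial in `ε` with integrable coefficients, so `g''(0)` is twice
the integral of the quadratic coefficient. The functions `dq`, `dp` stand for the partial
derivatives of the entries of `q`, `p`. -/
lemma second_variation_formula [IsFiniteMeasure μ] {q p : α → Matrix (Fin 3) (Fin 3) ℝ}
    {dq dp : Fin 3 → Fin 3 → Fin 3 → α → ℝ} (b c : ℝ)
    (hq : ∀ i j, MemLp (fun x => q x i j) ⊤ μ) (hp : ∀ i j, MemLp (fun x => p x i j) ⊤ μ)
    (hdq : ∀ i j k, MemLp (dq i j k) 2 μ) (hdp : ∀ i j k, MemLp (dp i j k) 2 μ)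
    {g : ℝ → ℝ}
    (hg : ∀ ε : ℝ, g ε = ∫ x,
      ((1 / 2) * ∑ i : Fin 3, ∑ j : Fin 3, ∑ k : Fin 3, (dq i j k x + ε * dp i j k x) ^ 2
        - (1 / 2) * ((q x + ε • p x) * (q x + ε • p x)).trace
        - b * ((q x + ε • p x) * (q x + ε • p x) * (q x + ε • p x)).trace
        + c * (((q x + ε • p x) * (q x + ε • p x)).trace) ^ 2) ∂μ) :
    Integrable (fun x => (p x * p x).trace) μ ∧
    Integrable (fun x => ∑ i : Fin 3, ∑ j : Fin 3, ∑ k : Fin 3, dp i j k x ^ 2) μ ∧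
    Integrable (fun x => (1 / 2) * (∑ i : Fin 3, ∑ j : Fin 3, ∑ k : Fin 3, dp i j k x ^ 2)
      - (1 / 2) * (p x * p x).trace - 3 * b * (q x * p x * p x).trace
      + c * (4 * ((q x * p x).trace * (q x * p x).trace)
        + 2 * ((q x * q x).trace * (p x * p x).trace))) μ ∧
    deriv (deriv g) 0 = 2 * ∫ x,
      ((1 / 2) * (∑ i : Fin 3, ∑ j : Fin 3, ∑ k : Fin 3, dp i j k x ^ 2)
      - (1 / 2) * (p x * p x).trace - 3 * b * (q x * p x * p x).trace
      + c * (4 * ((q x * p x).trace * (q x * p x).trace)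
        + 2 * ((q x * q x).trace * (p x * p x).trace))) ∂μ := by
  have tqq := memLp_top_trace (memLp_top_matrix_mul hq hq)
  have tqp := memLp_top_trace (memLp_top_matrix_mul hq hp)
  have tpp := memLp_top_trace (memLp_top_matrix_mul hp hp)
  have tqqq := memLp_top_trace (memLp_top_matrix_mul (memLp_top_matrix_mul hq hq) hq)
  have tqqp := memLp_top_trace (memLp_top_matrix_mul (memLp_top_matrix_mul hq hq) hp)
  have tqpp := memLp_top_trace (memLp_top_matrix_mul (memLp_top_matrix_mul hq hp) hp)
  have tppp := memLp_top_trace (memLp_top_matrix_mul (memLp_top_matrix_mul hp hp) hp)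
  have int2 : ∀ {u v : α → ℝ}, MemLp u ⊤ μ → MemLp v ⊤ μ → Integrable (fun x => u x * v x) μ :=
    fun hu hv => (hv.mul' (r := ⊤) hu).integrable le_top
  have gqq : Integrable (fun x => ∑ i : Fin 3, ∑ j : Fin 3, ∑ k : Fin 3, dq i j k x ^ 2) μ :=
    integrable_finsetSum _ fun i _ => integrable_finsetSum _ fun j _ =>
      integrable_finsetSum _ fun k _ => (hdq i j k).integrable_sq
  have gpp : Integrable (fun x => ∑ i : Fin 3, ∑ j : Fin 3, ∑ k : Fin 3, dp i j k x ^ 2) μ :=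
    integrable_finsetSum _ fun i _ => integrable_finsetSum _ fun j _ =>
      integrable_finsetSum _ fun k _ => (hdp i j k).integrable_sq
  have gqp : Integrable
      (fun x => ∑ i : Fin 3, ∑ j : Fin 3, ∑ k : Fin 3, dq i j k x * dp i j k x) μ :=
    integrable_finsetSum _ fun i _ => integrable_finsetSum _ fun j _ =>
      integrable_finsetSum _ fun k _ => (hdq i j k).integrable_mul (hdp i j k)
  have hgrad : ∀ (ε : ℝ) (x : α),
      ∑ i : Fin 3, ∑ j : Fin 3, ∑ k : Fin 3, (dq i j k x + ε * dp i j k x) ^ 2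
      = (∑ i : Fin 3, ∑ j : Fin 3, ∑ k : Fin 3, dq i j k x ^ 2)
        + 2 * ε * (∑ i : Fin 3, ∑ j : Fin 3, ∑ k : Fin 3, dq i j k x * dp i j k x)
        + ε ^ 2 * (∑ i : Fin 3, ∑ j : Fin 3, ∑ k : Fin 3, dp i j k x ^ 2) := by
    intro ε x
    simp only [Finset.mul_sum, ← Finset.sum_add_distrib]
    refine Finset.sum_congr rfl fun i _ => Finset.sum_congr rfl fun j _ =>
      Finset.sum_congr rfl fun k _ => ?_
    ring
  -- The coefficients of the powers of `ε` in the energy density.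
  have F0 : Integrable (fun x => (1 / 2) * (∑ i : Fin 3, ∑ j : Fin 3, ∑ k : Fin 3, dq i j k x ^ 2)
      - (1 / 2) * (q x * q x).trace - b * (q x * q x * q x).trace
      + c * ((q x * q x).trace * (q x * q x).trace)) μ :=
    (((gqq.const_mul _).sub ((tqq.integrable le_top).const_mul _)).sub
      ((tqqq.integrable le_top).const_mul _)).add ((int2 tqq tqq).const_mul _)
  have F1 : Integrable (fun x =>
      (∑ i : Fin 3, ∑ j : Fin 3, ∑ k : Fin 3, dq i j k x * dp i j k x)
      - (q x * p x).trace - 3 * b * (q x * q x * p x).trace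
      + 4 * c * ((q x * q x).trace * (q x * p x).trace)) μ :=
    ((gqp.sub (tqp.integrable le_top)).sub
      ((tqqp.integrable le_top).const_mul _)).add ((int2 tqq tqp).const_mul _)
  have F2 : Integrable (fun x => (1 / 2) * (∑ i : Fin 3, ∑ j : Fin 3, ∑ k : Fin 3, dp i j k x ^ 2)
      - (1 / 2) * (p x * p x).trace - 3 * b * (q x * p x * p x).trace
      + c * (4 * ((q x * p x).trace * (q x * p x).trace)
        + 2 * ((q x * q x).trace * (p x * p x).trace))) μ :=
    (((gpp.const_mul _).sub ((tpp.integrable le_top).const_mul _)).sub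
      ((tqpp.integrable le_top).const_mul _)).add
      ((((int2 tqp tqp).const_mul _).add ((int2 tqq tpp).const_mul _)).const_mul _)
  have F3 : Integrable (fun x => -(b * (p x * p x * p x).trace)
      + 4 * c * ((q x * p x).trace * (p x * p x).trace)) μ :=
    ((tppp.integrable le_top).const_mul _).neg.add ((int2 tqp tpp).const_mul _)
  have F4 : Integrable (fun x => c * ((p x * p x).trace * (p x * p x).trace)) μ :=
    (int2 tpp tpp).const_mul _
  refine ⟨tpp.integrable le_top, gpp, F2, ?_⟩
  refine deriv_deriv_integral_quartic F0 F1 F2 F3 F4 fun ε => ?_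
  rw [hg]
  congr 1
  funext x
  rw [hgrad, trace_sq_expand, trace_cube_expand]
  ring

end Traces

/-! ### Coercivity of the second variation -/

/-- With `n = x / |x|` one has `tr (Q p²) = √(3/2) h (|p n|² - tr (p²) / 3)`, so the bound on
`|p n|²` for traceless symmetric `p` gives the constant `3 = 3 · √6 · √(3/2) / 3`. -/
lemma cubic_term_bound {s η : ℝ} (hs : 0 ≤ s) (hη₀ : 0 ≤ η) (hη₁ : η ≤ 1)
    {x : EuclideanSpace ℝ (Fin 3)} (hx : x ≠ 0) (p : Matrix (Fin 3) (Fin 3) ℝ)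
    (hsym : p.IsSymm) (htr : p.trace = 0) {q : Matrix (Fin 3) (Fin 3) ℝ}
    (hq : q = Real.sqrt (3 / 2) • η •
      (Matrix.of (fun i j : Fin 3 => x i * x j / ‖x‖ ^ 2) -
        (1 / 3 : ℝ) • (1 : Matrix (Fin 3) (Fin 3) ℝ))) :
    3 * (Real.sqrt 6 * s) * (q * p * p).trace ≤ 3 * s * (p * p).trace := by
  have hn : 0 < ‖x‖ := norm_pos_iff.2 hx
  have hunit : ∑ i, (fun i => x i / ‖x‖) i ^ 2 = 1 := by
    have h1 := EuclideanSpace.real_norm_sq_eq x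
    simp only [div_pow, ← Finset.sum_div]
    rw [← h1]
    field_simp
  have h1 := norm_mulVec_sq_le p hsym htr (fun i => x i / ‖x‖) hunit
  have hof : (Matrix.of (fun i j : Fin 3 => x i * x j / ‖x‖ ^ 2) * p * p).trace
      = ∑ i, ((p *ᵥ (fun i => x i / ‖x‖)) i) ^ 2 := by
    have e10 : p 1 0 = p 0 1 := hsym.apply 0 1
    have e20 : p 2 0 = p 0 2 := hsym.apply 0 2
    have e21 : p 2 1 = p 1 2 := hsym.apply 1 2
    simp only [Matrix.trace, Matrix.diag, Fin.sum_univ_three, Matrix.mul_apply, Matrix.mulVec,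
      dotProduct, Matrix.of_apply, e10, e20, e21]
    field_simp
    ring
  have hpp : 0 ≤ (p * p).trace := by
    have := Finset.sum_nonneg (s := Finset.univ)
      fun i _ => sq_nonneg ((p *ᵥ (fun i => x i / ‖x‖)) i)
    linarith
  have htrq : (q * p * p).trace = Real.sqrt (3 / 2) * (η *
      (∑ i, ((p *ᵥ (fun i => x i / ‖x‖)) i) ^ 2 - 1 / 3 * (p * p).trace)) := by
    rw [← hof, hq]
    simp only [Matrix.smul_mul, Matrix.sub_mul, Matrix.trace_smul, Matrix.trace_sub, smul_eq_mul,
      Matrix.one_mul]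
  have hsq : Real.sqrt 6 * Real.sqrt (3 / 2) = 3 := by
    rw [← Real.sqrt_mul (by norm_num), show (6 : ℝ) * (3 / 2) = 3 ^ 2 by norm_num,
      Real.sqrt_sq (by norm_num)]
  have h2 : η * (∑ i, ((p *ᵥ (fun i => x i / ‖x‖)) i) ^ 2 - 1 / 3 * (p * p).trace)
      ≤ 1 / 3 * (p * p).trace := by
    nlinarith
  rw [htrq]
  calc 3 * (Real.sqrt 6 * s) * (Real.sqrt (3 / 2) * (η *
      (∑ i, ((p *ᵥ (fun i => x i / ‖x‖)) i) ^ 2 - 1 / 3 * (p * p).trace)))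
      = (Real.sqrt 6 * Real.sqrt (3 / 2)) * (3 * s) * (η *
      (∑ i, ((p *ᵥ (fun i => x i / ‖x‖)) i) ^ 2 - 1 / 3 * (p * p).trace)) := by ring
    _ ≤ (Real.sqrt 6 * Real.sqrt (3 / 2)) * (3 * s) * (1 / 3 * (p * p).trace) :=
        mul_le_mul_of_nonneg_left h2 (by positivity)
    _ = 3 * s * (p * p).trace := by rw [hsq]; ring

lemma trace_mul_self_of_isSymm (p : Matrix (Fin 3) (Fin 3) ℝ) (hsym : p.IsSymm) :
    (p * p).trace = ∑ i, ∑ j, p i j ^ 2 := by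
  simp only [Matrix.trace, Matrix.diag, Matrix.mul_apply]
  refine Finset.sum_congr rfl fun i _ => Finset.sum_congr rfl fun j _ => ?_
  rw [hsym.apply i j, pow_two]

/-- For a sufficiently small ball radius
(`R² < (1/4)·1/(1 + 4√6 h₊/t)`), the radial-hedgehog solution is linearly stable: the
second variation `g''(0)` of the Landau–de Gennes energy along any admissible symmetric
traceless perturbation `P` vanishing on the boundary (and not a.e. zero) is positive. -/
theorem stmt19 (t : ℝ) (ht : 1 < t) (hplus : ℝ)
    (hplus_def : hplus = (3 + Real.sqrt (9 + 8 * t)) / 4)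
    (R : ℝ) (hR : 0 < R)
    (hRsmall : R ^ 2 < (1 / 4) * (1 / (1 + 4 * Real.sqrt 6 * hplus / t)))
    (hstar : ℝ → ℝ)
    (hcont : ContinuousOn hstar (Set.Icc 0 R))
    (hC2 : ContDiffOn ℝ 2 hstar (Set.Ioc 0 R))
    (h0 : hstar 0 = 0)
    (hrange : ∀ r ∈ Set.Icc (0 : ℝ) R, 0 ≤ hstar r ∧ hstar r ≤ 1)
    (hode : ∀ r ∈ Set.Ioc (0 : ℝ) R,
      deriv (deriv hstar) r + (2 / r) * deriv hstar r - 6 * hstar r / r ^ 2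
        = -hstar r + (hstar r) ^ 3 + (3 * hplus / t) * ((hstar r) ^ 3 - (hstar r) ^ 2))
    (Qstar : EuclideanSpace ℝ (Fin 3) → Matrix (Fin 3) (Fin 3) ℝ)
    (hQstar : ∀ x, Qstar x = Real.sqrt (3 / 2) • hstar ‖x‖ •
      (Matrix.of (fun i j : Fin 3 => x i * x j / ‖x‖ ^ 2) -
        (1 / 3 : ℝ) • (1 : Matrix (Fin 3) (Fin 3) ℝ)))
    (P : EuclideanSpace ℝ (Fin 3) → Matrix (Fin 3) (Fin 3) ℝ)
    (hPC1 : ∀ i j : Fin 3, ContDiffOn ℝ 1 (fun x => P x i j)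
      (Metric.closedBall (0 : EuclideanSpace ℝ (Fin 3)) R))
    (hPsymm : ∀ x, (P x).IsSymm)
    (hPtrace : ∀ x, (P x).trace = 0)
    (hPbdry : ∀ x : EuclideanSpace ℝ (Fin 3), ‖x‖ = R → P x = 0)
    (hPne : ¬ (∀ᵐ x ∂(volume.restrict (Metric.closedBall (0 : EuclideanSpace ℝ (Fin 3)) R)),
      P x = 0))
    (g : ℝ → ℝ)
    (hg : ∀ ε : ℝ, g ε = ∫ x in Metric.closedBall (0 : EuclideanSpace ℝ (Fin 3)) R,
      ((1 / 2) * ∑ i : Fin 3, ∑ j : Fin 3, ∑ k : Fin 3,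
          (fderiv ℝ (fun y => (Qstar y + ε • P y) i j) x (EuclideanSpace.single k (1 : ℝ))) ^ 2
        - (1 / 2) * ((Qstar x + ε • P x) * (Qstar x + ε • P x)).trace
        - (Real.sqrt 6 * hplus / t) *
            ((Qstar x + ε • P x) * (Qstar x + ε • P x) * (Qstar x + ε • P x)).trace
        + (hplus ^ 2 / (2 * t)) *
            (((Qstar x + ε • P x) * (Qstar x + ε • P x)).trace) ^ 2)) :
    0 < deriv (deriv g) 0 := by
  have hp0 : 0 < hplus := by
    rw [hplus_def]
    have := Real.sqrt_nonneg (9 + 8 * t)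
    linarith
  have ht0 : 0 < t := by linarith
  have hs0 : 0 ≤ hplus / t := by positivity
  obtain ⟨C, -, hCd⟩ := radial_deriv_bound (c := 3 * hplus / t) (by positivity) hC2 hrange hode
  have hQb := hedgehog_entry_bounds hCd hrange hQstar
  set S : Set (EuclideanSpace ℝ (Fin 3)) := Metric.ball 0 R \ {0} with hS
  have hSm : MeasurableSet S := measurableSet_ball.diff (measurableSet_singleton 0)
  have hSo : IsOpen S := Metric.isOpen_ball.sdiff isClosed_singleton
  have hSB : S ⊆ Metric.ball 0 R := Set.sdiff_subset
  -- The boundary sphere and the defect at the origin are null sets.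
  have hμB : volume.restrict (Metric.ball (0 : EuclideanSpace ℝ (Fin 3)) R)
      = volume.restrict S :=
    Measure.restrict_congr_set (sdiff_null_ae_eq_self (measure_singleton 0)).symm
  have hμC : volume.restrict (Metric.closedBall (0 : EuclideanSpace ℝ (Fin 3)) R)
      = volume.restrict S := by
    rw [← hμB]
    refine Measure.restrict_congr_set ?_
    rw [← Metric.closedBall_sdiff_sphere]
    exact (sdiff_null_ae_eq_self (Measure.addHaar_sphere volume 0 R)).symm
  have hfin : IsFiniteMeasure (volume.restrict S) := by
    rw [← hμB]
    exact ⟨by simpa using measure_ball_lt_top (μ := volume) (x := (0 : EuclideanSpace ℝ (Fin 3)))⟩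
  have hae : ∀ {p : EuclideanSpace ℝ (Fin 3) → Prop}, (∀ x ∈ S, p x) →
      ∀ᵐ x ∂(volume.restrict S), p x := fun h =>
    (ae_restrict_iff' hSm).2 (Filter.Eventually.of_forall h)
  have hPd : ∀ i j, ∀ x ∈ S, DifferentiableAt ℝ (fun y => P y i j) x := fun i j x hx => by
    obtain ⟨D, -, hD, -, -⟩ := c1_ball_bounds hR (hPC1 i j)
    exact (hD x (hSB hx)).1
  have hqL : ∀ i j, MemLp (fun x => Qstar x i j) ⊤ (volume.restrict S) := fun i j =>
    memLp_top_of_bound (ContinuousOn.aestronglyMeasurable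
      (fun x hx => (hQb i j x hx).1.continuousAt.continuousWithinAt) hSm) 4
      (hae fun x hx => (hQb i j x hx).2.1)
  have hpL : ∀ i j, MemLp (fun x => P x i j) ⊤ (volume.restrict S) := fun i j => by
    obtain ⟨D, -, -, hD, -⟩ := c1_ball_bounds hR (hPC1 i j)
    exact memLp_top_of_bound (ContinuousOn.aestronglyMeasurable
      (fun x hx => (hPd i j x hx).continuousAt.continuousWithinAt) hSm) D
      (hae fun x hx => hD x (Metric.ball_subset_closedBall (hSB hx)))
  have hdle : ∀ (L : EuclideanSpace ℝ (Fin 3) →L[ℝ] ℝ) (k : Fin 3),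
      |L (EuclideanSpace.single k (1 : ℝ))| ≤ ‖L‖ := fun L k => by
    simpa using L.le_opNorm (EuclideanSpace.single k (1 : ℝ))
  have hdqL : ∀ i j k, MemLp (fun x => fderiv ℝ (fun y => Qstar y i j) x
      (EuclideanSpace.single k (1 : ℝ))) 2 (volume.restrict S) := fun i j k => by
    have hm : AEStronglyMeasurable (fun x => fderiv ℝ (fun y => Qstar y i j) x
        (EuclideanSpace.single k (1 : ℝ))) (volume.restrict S) :=
      (measurable_fderiv_apply_const ℝ _ _).aestronglyMeasurable
    rw [memLp_two_iff_integrable_sq hm]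
    have hinteg := integrableOn_inv_norm_sq R (2 * (4 + 2 * C))
    rw [IntegrableOn, hμB] at hinteg
    refine hinteg.mono' (hm.pow 2) (hae fun x hx => ?_)
    rw [norm_pow]
    exact pow_le_pow_left₀ (norm_nonneg _) ((hdle _ k).trans (hQb i j x hx).2.2) 2
  have hdpL : ∀ i j k, MemLp (fun x => fderiv ℝ (fun y => P y i j) x
      (EuclideanSpace.single k (1 : ℝ))) 2 (volume.restrict S) := fun i j k => by
    obtain ⟨D, -, hD, -, -⟩ := c1_ball_bounds hR (hPC1 i j)
    exact (memLp_top_of_bound (measurable_fderiv_apply_const ℝ _ _).aestronglyMeasurable D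
      (hae fun x hx => (hdle _ k).trans (hD x (hSB hx)).2)).mono_exponent le_top
  obtain ⟨ipp, igg, iF, hform⟩ := second_variation_formula (μ := volume.restrict S) (g := g)
    (Real.sqrt 6 * hplus / t) (hplus ^ 2 / (2 * t)) hqL hpL hdqL hdpL (fun ε => by
      rw [hg, hμC]
      refine integral_congr_ae (hae fun x hx => ?_)
      have hfd : ∀ i j k, fderiv ℝ (fun y => (Qstar y + ε • P y) i j) x
          (EuclideanSpace.single k (1 : ℝ)) =
          fderiv ℝ (fun y => Qstar y i j) x (EuclideanSpace.single k (1 : ℝ))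
          + ε * fderiv ℝ (fun y => P y i j) x (EuclideanSpace.single k (1 : ℝ)) := by
        intro i j k
        have h1 : HasFDerivAt (fun y => (Qstar y + ε • P y) i j)
            (fderiv ℝ (fun y => Qstar y i j) x + ε • fderiv ℝ (fun y => P y i j) x) x :=
          (hQb i j x hx).1.hasFDerivAt.add ((hPd i j x hx).hasFDerivAt.const_mul ε)
        rw [h1.fderiv]
        rfl
      simp only [hfd])
  rw [hform]
  set G : EuclideanSpace ℝ (Fin 3) → ℝ := fun x => ∑ i : Fin 3, ∑ j : Fin 3, ∑ k : Fin 3,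
    (fderiv ℝ (fun y => P y i j) x (EuclideanSpace.single k (1 : ℝ))) ^ 2 with hG
  set K : ℝ := 1 + 6 * (hplus / t) with hK
  -- Pointwise lower bound for the density of the second variation.
  have hlow : ∫ x in S, ((1 / 2) * G x - (1 / 2) * K * (P x * P x).trace) ≤ _ :=
    integral_mono_ae ((igg.const_mul _).sub (ipp.const_mul _)) iF (hae fun x hx => by
      have hx0 : x ≠ 0 := by simpa using hx.2
      have hxR : ‖x‖ < R := by simpa using hx.1
      obtain ⟨ha, hb⟩ := hrange ‖x‖ ⟨norm_nonneg x, hxR.le⟩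
      have h1 := cubic_term_bound hs0 ha hb hx0 (P x) (hPsymm x) (hPtrace x) (hQstar x)
      have hnn : ∀ M : Matrix (Fin 3) (Fin 3) ℝ, M.IsSymm → 0 ≤ (M * M).trace := fun M hM => by
        rw [trace_mul_self_of_isSymm M hM]; positivity
      have hQs : (Qstar x).IsSymm := by
        rw [hQstar]
        ext i j
        simp only [Matrix.transpose_apply, Matrix.smul_apply, Matrix.sub_apply, Matrix.of_apply,
          Matrix.one_apply, mul_comm (x j), eq_comm (a := j)]
      have h2 : 0 ≤ hplus ^ 2 / (2 * t) * (4 * ((Qstar x * P x).trace * (Qstar x * P x).trace)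
          + 2 * ((Qstar x * Qstar x).trace * (P x * P x).trace)) := by
        have := mul_nonneg (hnn _ hQs) (hnn _ (hPsymm x))
        have := mul_self_nonneg (Qstar x * P x).trace
        positivity
      rw [← mul_div_assoc] at h1
      simp only [hK, hG]
      linarith)
  -- The Poincaré inequality, summed over the entries of `P`.
  have hpoin : ∫ x in S, (P x * P x).trace ≤ 4 * R ^ 2 * ∫ x in S, G x := by
    have e1 : ∫ x in S, (P x * P x).trace = ∑ i, ∑ j, ∫ x in S, P x i j ^ 2 := by
      simp only [trace_mul_self_of_isSymm _ (hPsymm _)]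
      have hi : ∀ i j, Integrable (fun x => P x i j ^ 2) (volume.restrict S) := fun i j =>
        ((hpL i j).mono_exponent le_top).integrable_sq
      rw [integral_finsetSum _ fun i _ => integrable_finsetSum _ fun j _ => hi i j]
      exact Finset.sum_congr rfl fun i _ => integral_finsetSum _ fun j _ => hi i j
    have e2 : ∫ x in S, G x = ∑ i, ∑ j, ∑ k, ∫ x in S,
        (fderiv ℝ (fun y => P y i j) x (EuclideanSpace.single k (1 : ℝ))) ^ 2 := by
      have hi := fun i j k => (hdpL i j k).integrable_sq
      rw [hG, integral_finsetSum _ fun i _ => integrable_finsetSum _ fun j _ =>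
        integrable_finsetSum _ fun k _ => hi i j k]
      refine Finset.sum_congr rfl fun i _ => ?_
      rw [integral_finsetSum _ fun j _ => integrable_finsetSum _ fun k _ => hi i j k]
      exact Finset.sum_congr rfl fun j _ => integral_finsetSum _ fun k _ => hi i j k
    rw [e1, e2, Finset.mul_sum]
    refine Finset.sum_le_sum fun i _ => ?_
    rw [Finset.mul_sum]
    refine Finset.sum_le_sum fun j _ => ?_
    have h1 := poincare_ball hR (hPC1 i j) (fun x hx => by rw [hPbdry x hx]; rfl)
    rw [hμB] at h1
    refine h1.trans (mul_le_mul_of_nonneg_left ?_ (by positivity))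
    exact Finset.single_le_sum (f := fun k => ∫ x in S,
      (fderiv ℝ (fun y => P y i j) x (EuclideanSpace.single k (1 : ℝ))) ^ 2)
      (fun k _ => integral_nonneg fun x => sq_nonneg _) (Finset.mem_univ 0)
  have hpos : 0 < ∫ x in S, (P x * P x).trace := by
    have hnn : ∀ x, 0 ≤ (P x * P x).trace := fun x => by
      rw [trace_mul_self_of_isSymm _ (hPsymm x)]; positivity
    refine lt_of_le_of_ne (integral_nonneg hnn) fun h => hPne ?_
    rw [hμC]
    filter_upwards [(integral_eq_zero_iff_of_nonneg hnn ipp).1 h.symm] with x hx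
    have hx' : ∑ i, ∑ j, P x i j ^ 2 = 0 := by
      rw [← trace_mul_self_of_isSymm _ (hPsymm x)]; exact hx
    ext i j
    rw [Finset.sum_eq_zero_iff_of_nonneg (fun i _ => by positivity)] at hx'
    have h2 := hx' i (Finset.mem_univ i)
    rw [Finset.sum_eq_zero_iff_of_nonneg (fun i _ => by positivity)] at h2
    simpa using h2 j (Finset.mem_univ j)
  -- Since `4 √6 ≥ 6`, the hypothesis on `R` gives `4 R² K < 1`.
  have hRK : 4 * R ^ 2 * K < 1 := by
    have h6 : 2 ≤ Real.sqrt 6 := Real.le_sqrt_of_sq_le (by norm_num)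
    have hKK : K ≤ 1 + 4 * Real.sqrt 6 * hplus / t := by
      rw [mul_div_assoc, hK]
      nlinarith
    have hK0 : 0 < K := by positivity
    have hden := hK0.trans_le hKK
    have h1 : R ^ 2 * (1 + 4 * Real.sqrt 6 * hplus / t) < 1 / 4 := by
      rw [← mul_div_assoc, mul_one, lt_div_iff₀ hden] at hRsmall
      exact hRsmall
    nlinarith [mul_le_mul_of_nonneg_left hKK (sq_nonneg R)]
  rw [integral_sub (igg.const_mul _) (ipp.const_mul _), integral_const_mul,
    integral_const_mul] at hlow
  have hstrict : K * ∫ x in S, (P x * P x).trace < ∫ x in S, G x := by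
    have hR2 : 0 < 4 * R ^ 2 := by positivity
    refine lt_of_mul_lt_mul_left (lt_of_lt_of_le ?_ hpoin) hR2.le
    nlinarith
  linarith
end
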